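/- Let A ⊂ ℝ³ be a fixed bounded open set and let Ω_n ⊂ ℝ³ be Borel sets of finite perimeter with Ω_n ⊂ ℓ_n A, |Ω_n| → m > 0, and I[Ω_n] ≤ μ*|Ω_n| + C/ℓ_n for some sequence ℓ_n → ∞ and constant C. Then, along a subsequence, the decomposition theorem for minimizing sequences applies with K droplets of masses m_*^{(j)} and centers a_n^{(j)}, the rescaled centers converge, ℓ_n⁻¹ a_n^{(j)} → y^{(j)}, to K pairwise distinct points y^{(1)},…,y^{(K)} in the closure of A; and if K ≥ 2, then I[Ω_n] ≥ μ*|Ω_n| + ℓ_n⁻¹ Σ_{1≤j<k≤K} m_*^{(j)} m_*^{(k)}/|y^{(j)} − y^{(k)}| + o(1/ℓ_n). -/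

import Mathlib

open MeasureTheory Metric Set Filter Bornology
open scoped Topology ENNReal NNReal Pointwise

noncomputable section

/-- Three-dimensional Euclidean space. -/
abbrev E3 : Type := EuclideanSpace ℝ (Fin 3)

/-- The divergence of a vector field on `E3`, defined as the trace of its derivative. -/
def divg (φ : E3 → E3) (x : E3) : ℝ :=
  LinearMap.trace ℝ E3 (fderiv ℝ φ x : E3 →ₗ[ℝ] E3)

/-- The candidate values `∫_Ω div φ` over `C¹` compactly supported vector fields bounded by one. -/
def perCand (Ω : Set E3) : Set ℝ :=
  {a : ℝ | ∃ φ : E3 → E3, ContDiff ℝ 1 φ ∧ HasCompactSupport φ ∧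
      (∀ x, ‖φ x‖ ≤ 1) ∧ a = ∫ x in Ω, divg φ x}

/-- The perimeter of a set, in the sense of geometric measure theory. -/
def per (Ω : Set E3) : ℝ := sSup (perCand Ω)

/-- A set has finite perimeter if the family of integrals defining the perimeter is
bounded above. -/
def HasFinPer (Ω : Set E3) : Prop := BddAbove (perCand Ω)

/-- The Lebesgue volume of a set as a real number. -/
def vol (Ω : Set E3) : ℝ := (volume Ω).toReal

/-- The liquid drop energy `𝓔_Λ[ρ,Ω]`. -/
def ldEnergy (Λ : Set E3) (ρ : ℝ) (Ω : Set E3) : ℝ :=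
  per Ω + (1/2) * ∫ x, ∫ y,
    (Set.indicator Ω (fun _ => (1:ℝ)) x - ρ * Set.indicator Λ (fun _ => (1:ℝ)) x) *
      (Set.indicator Ω (fun _ => (1:ℝ)) y - ρ * Set.indicator Λ (fun _ => (1:ℝ)) y) / ‖x - y‖

/-- The neutral ground state energy `E_Λ(ρ)`. -/
def EE (Λ : Set E3) (ρ : ℝ) : ℝ :=
  sInf {t : ℝ | ∃ Ω : Set E3, MeasurableSet Ω ∧ Ω ⊆ Λ ∧ HasFinPer Ω ∧
    vol Ω = ρ * vol Λ ∧ t = ldEnergy Λ ρ Ω}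

/-- The liquid drop energy `I[Ω]` of an isolated droplet (no background). -/
def II (Ω : Set E3) : ℝ :=
  per Ω + (1/2) * ∫ x in Ω, ∫ y in Ω, 1 / ‖x - y‖

/-- `μ* = inf I[Ω]/|Ω|`. -/
def muStar : ℝ :=
  sInf {t : ℝ | ∃ Ω : Set E3, MeasurableSet Ω ∧ HasFinPer Ω ∧
    0 < volume Ω ∧ volume Ω < ⊤ ∧ t = II Ω / vol Ω}

/-- A minimizer for the isolated liquid drop problem. -/
def IsMinimizer (Ω : Set E3) : Prop :=
  MeasurableSet Ω ∧ HasFinPer Ω ∧ 0 < volume Ω ∧ volume Ω < ⊤ ∧ II Ω = muStar * vol Ω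

/-- The set of masses of minimizers. -/
def minimizerMasses : Set ℝ := {m : ℝ | ∃ Ω : Set E3, IsMinimizer Ω ∧ m = vol Ω}

/-- The largest mass of a minimizer. -/
def mStar : ℝ := sSup minimizerMasses

/-- The smallest mass of a minimizer. -/
def mStarStar : ℝ := sInf minimizerMasses

/-- `Λ` is an `(r,L)`-Lipschitz open set: near each boundary point it is, in a suitable
orthonormal coordinate system, the epigraph of an `L`-Lipschitz function. -/
def IsLipschitzDomain (r L : ℝ) (Λ : Set E3) : Prop :=
  ∀ x ∈ frontier Λ, ∃ (g : E3 ≃ᵢ E3) (f : ℝ × ℝ → ℝ),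
    LipschitzWith L.toNNReal f ∧
    Λ ∩ ball x r = {y ∈ ball x r | f (g y 0, g y 1) < g y 2}

/-- Fisher regularity of the boundary. -/
def FisherCond (C ℓ : ℝ) (Λ : Set E3) : Prop :=
  ∀ h : ℝ, 0 < h → h ≤ ℓ → (volume (frontier Λ + ball (0:E3) h)).toReal ≤ C * ℓ^2 * h

/-- An admissible sequence of domains for the thermodynamic limit. -/
def IsAdmissibleSeq (r L C : ℝ) (Λs : ℕ → Set E3) (ℓ : ℕ → ℝ) : Prop :=
  Tendsto ℓ atTop atTop ∧
  ∀ n : ℕ, IsOpen (Λs n) ∧ IsBounded (Λs n) ∧ IsLipschitzDomain r L (Λs n) ∧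
    ball 0 (ℓ n / C) ⊆ Λs n ∧ Λs n ⊆ ball 0 (ℓ n) ∧ FisherCond C (ℓ n) (Λs n)

/-- `e` is the thermodynamic limit function of the liquid drop model. -/
def IsThermoLimit (e : ℝ → ℝ) : Prop :=
  ∀ ρ : ℝ, 0 ≤ ρ → ρ ≤ 1 →
    ∀ (r L C : ℝ) (Λs : ℕ → Set E3) (ℓ : ℕ → ℝ), 0 < r → 0 < L → 0 < C →
      IsAdmissibleSeq r L C Λs ℓ →
      Tendsto (fun n => EE (Λs n) ρ / vol (Λs n)) atTop (𝓝 (e ρ))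

/-- The domain for the `N`-particle Jellium problem: `N^{1/3} Λ₁` with `Λ₁` the ball of
unit volume centered at the origin. -/
def jelDomain (N : ℕ) : Set E3 :=
  ball (0:E3) ((N : ℝ) ^ ((1:ℝ)/3) * (3 / (4 * Real.pi)) ^ ((1:ℝ)/3))

/-- The `N`-particle Jellium ground state energy. -/
def jelN (N : ℕ) : ℝ :=
  sInf {t : ℝ | ∃ x : Fin N → E3, (∀ j, x j ∈ jelDomain N) ∧
    t = (∑ j : Fin N, ∑ k : Fin N, if j < k then 1 / ‖x j - x k‖ else 0)
      - (∑ j : Fin N, ∫ y in jelDomain N, 1 / ‖x j - y‖)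
      + (1/2) * ∫ x' in jelDomain N, ∫ y in jelDomain N, 1 / ‖x' - y‖}

/-- `eJ` is the Jellium energy per particle in the thermodynamic limit. -/
def IsJelliumLimit (eJ : ℝ) : Prop :=
  Tendsto (fun N : ℕ => jelN N / (N : ℝ)) atTop (𝓝 eJ)

/-- The grand-canonical liquid drop energy `F_Λ(ρ)`. -/
def FF (Λ : Set E3) (ρ : ℝ) : ℝ :=
  sInf {t : ℝ | ∃ Ω : Set E3, MeasurableSet Ω ∧ Ω ⊆ Λ ∧ HasFinPer Ω ∧
    t = ldEnergy Λ ρ Ω - muStar * vol Ω}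

/-- A tetrahedron: the interior of the convex hull of four affinely independent points. -/
def IsTetra (Δ : Set E3) : Prop :=
  ∃ v : Fin 4 → E3, AffineIndependent ℝ v ∧ Δ = interior (convexHull ℝ (Set.range v))

/-- The open cube `(-L/2, L/2)³`. -/
def cubeL (Lside : ℝ) : Set E3 := {x : E3 | ∀ i, |x i| < Lside / 2}

/-- The grand-canonical Jellium energy of point particles of charge `m` in the domain `S`
with a uniform background of density one. -/
def pointJellium (m : ℝ) (S : Set E3) : ℝ :=
  sInf {t : ℝ | ∃ (n : ℕ) (x : Fin n → E3), (∀ j, x j ∈ S) ∧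
    t = (∑ j : Fin n, ∑ k : Fin n, if j < k then m^2 / ‖x j - x k‖ else 0)
      - m * (∑ j : Fin n, ∫ y in S, 1 / ‖x j - y‖)
      + (1/2) * ∫ x' in S, ∫ y in S, 1 / ‖x' - y‖}

/-- The conclusions of the decomposition theorem for minimizing sequences. -/
def IsDecomp (Ω : ℕ → Set E3) (m : ℝ) (K : ℕ) (Ωs : Fin K → Set E3)
    (a : ℕ → Fin K → E3) (R : ℝ) (φ : ℕ → ℕ) : Prop :=
  StrictMono φ ∧ 0 < R ∧
  (∀ j k : Fin K, j ≠ k → Tendsto (fun n => ‖a n j - a n k‖) atTop atTop) ∧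
  (∀ j, IsMinimizer (Ωs j)) ∧
  (∀ j, mStarStar ≤ vol (Ωs j) ∧ vol (Ωs j) ≤ mStar) ∧
  (∀ j, Tendsto
    (fun n => volume (symmDiff ({x : E3 | x + a n j ∈ Ω (φ n)} ∩ ball (0:E3) R) (Ωs j)))
    atTop (𝓝 0)) ∧
  Tendsto (fun n => volume (Ω (φ n) \ ⋃ j, ball (a n j) R)) atTop (𝓝 0) ∧
  Tendsto (fun n => per (Ω (φ n) \ ⋃ j, ball (a n j) R)) atTop (𝓝 0) ∧
  m = ∑ j, vol (Ωs j) ∧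
  (2 ≤ K → ∃ ε : ℕ → ℝ, Tendsto ε atTop (𝓝 0) ∧ ∀ n : ℕ,
    muStar * vol (Ω (φ n)) +
      (∑ j : Fin K, ∑ k : Fin K,
        if j < k then (vol (Ωs j) * vol (Ωs k) + ε n) / ‖a n j - a n k‖ else 0)
      ≤ II (Ω (φ n)))

instance : MeasurableSpace (Matrix (Fin 3) (Fin 3) ℝ) :=
  (inferInstance : MeasurableSpace (Fin 3 → Fin 3 → ℝ))

/-- The rotation group SO(3), as a set of matrices. -/
def SO3 : Set (Matrix (Fin 3) (Fin 3) ℝ) := {R | R * R.transpose = 1 ∧ R.det = 1}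

/-- The action of a matrix on Euclidean space. -/
def rot (R : Matrix (Fin 3) (Fin 3) ℝ) (x : E3) : E3 :=
  (EuclideanSpace.equiv (Fin 3) ℝ).symm (R.mulVec (EuclideanSpace.equiv (Fin 3) ℝ x))

/-- The image of a set under the rigid motion `x ↦ Rx + τ`. -/
def rigidImage (R : Matrix (Fin 3) (Fin 3) ℝ) (τ : E3) (S : Set E3) : Set E3 :=
  (fun x => rot R x + τ) '' S

/-- `μ` is the normalized Haar measure of SO(3): a probability measure concentrated on SO(3)
which is invariant under left multiplication by rotations. -/
def IsHaarSO3 (μ : Measure (Matrix (Fin 3) (Fin 3) ℝ)) : Prop :=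
  IsProbabilityMeasure μ ∧ μ SO3ᶜ = 0 ∧ ∀ S ∈ SO3, Measure.map (fun R => S * R) μ = μ

/-- The cube of the tiling of side length `ε` indexed by `z ∈ ℤ³`. -/
def cubeZ (ε : ℝ) (z : Fin 3 → ℤ) : Set E3 := {x : E3 | ∀ i, |x i - ε * (z i : ℝ)| < ε / 2}

/-- The distance between two sets. -/
def setDist (s t : Set E3) : ℝ := sInf {d : ℝ | ∃ p ∈ s, ∃ q ∈ t, d = dist p q}

/-- The outer cubic boundary layer of `Λ` at scale `ε`. -/
def outerLayer (Λ : Set E3) (ε : ℝ) : Set E3 :=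
  ⋃ z ∈ {z : Fin 3 → ℤ | setDist (cubeZ ε z) (frontier Λ) ≤ ε}, closure (cubeZ ε z \ Λ)

/-!
Call `I[Ω] - μ*|Ω| ≥ 0` the excess of `Ω`. Minimizers have zero excess, mass bounded below and
bounded support: cutting a minimizer along a level set costs little perimeter, whereas both pieces
must again have nonnegative excess. A sequence whose excess tends to zero cannot vanish, so after
translation it has an `L¹_loc` limit, which is again a minimizer; extracting such limits repeatedly
stops after finitely many steps because each one carries a fixed amount of mass. Cutting along
spheres around the centers, at radii where the cost is small, leaves pieces of nonnegative excess
and the mutual Coulomb energies, which is the repulsion bound.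

If `Ωₙ ⊆ ℓₙ A`, the rescaled centers stay within `R / ℓₙ` of `A` and have limits in its closure.
The repulsion bound against an excess of at most `C / ℓₙ` gives `m_j m_k ≤ C |y_j - y_k|`, hence
distinct limits, and multiplied by `ℓₙ` it passes to the limit.
-/

lemma setLIntegral_ofReal_deriv_le {W : ℝ → ℝ} (hW : Monotone W) {a b : ℝ} (hab : a ≤ b) :
    ∫⁻ t in Ioc a b, ENNReal.ofReal (deriv W t) ≤ ENNReal.ofReal (W b - W a) := by
  rw [← ofReal_integral_eq_lintegral_ofReal ((hW.monotoneOn _).intervalIntegrable_deriv).1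
    (.of_forall fun _ => hW.deriv_nonneg), ← intervalIntegral.integral_of_le hab]
  refine ENNReal.ofReal_le_ofReal ?_
  have := (hW.monotoneOn (uIcc a b)).intervalIntegral_deriv_mem_uIcc
  rw [uIcc_of_le (sub_nonneg.2 (hW hab))] at this
  exact this.2

lemma exists_forall_hasDerivAt_le_slope {ι : Type*} [Countable ι] {W : ι → ℝ → ℝ}
    (hW : ∀ i, Monotone (W i)) {a b : ℝ} (hab : a < b) {v : ι → ℝ} {V : ℝ}
    (hv : ∀ i, W i b - W i a ≤ v i) (hV : HasSum v V) :
    ∃ t ∈ Icc a b, ∀ i, ∃ w ≤ V / (b - a), HasDerivAt (W i) w t := by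
  have hnull : volume.restrict (Ioc a b)
      {t | ¬(t ∈ Ioc a b ∧ ∀ i, DifferentiableAt ℝ (W i) t)} = 0 :=
    ae_iff.1 <| (ae_restrict_mem measurableSet_Ioc).and
      (ae_restrict_of_ae (ae_all_iff.2 fun i => (hW i).ae_differentiableAt))
  have hne : volume.restrict (Ioc a b) ≠ 0 := by simp [Measure.restrict_eq_zero, hab]
  have hmeas i : Measurable fun t => ENNReal.ofReal (deriv (W i) t) :=
    (measurable_deriv _).ennreal_ofReal
  obtain ⟨t, ht, htV⟩ := exists_notMem_null_le_laverage hne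
    (Measurable.tsum (L := .unconditional ι) hmeas).aemeasurable hnull
  obtain ⟨htmem, htdiff⟩ := not_not.1 ht
  have hv0 i : 0 ≤ v i := (sub_nonneg.2 (hW i hab.le)).trans (hv i)
  have hint : ∫⁻ t in Ioc a b, ∑' i, ENNReal.ofReal (deriv (W i) t) ≤ ENNReal.ofReal V := by
    rw [lintegral_tsum fun i => (hmeas i).aemeasurable, ← hV.tsum_eq,
      ENNReal.ofReal_tsum_of_nonneg hv0 hV.summable]
    exact ENNReal.tsum_le_tsum fun i =>
      (setLIntegral_ofReal_deriv_le (hW i) hab.le).trans (ENNReal.ofReal_le_ofReal (hv i))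
  rw [setLAverage_eq, Real.volume_Ioc] at htV
  have htV' : ∑' i, ENNReal.ofReal (deriv (W i) t) ≤ ENNReal.ofReal (V / (b - a)) := by
    rw [ENNReal.ofReal_div_of_pos (sub_pos.2 hab)]
    exact htV.trans (ENNReal.div_le_div_right hint _)
  exact ⟨t, Ioc_subset_Icc_self htmem, fun i => ⟨deriv (W i) t,
    (ENNReal.ofReal_le_ofReal_iff (div_nonneg (hV.nonneg hv0) (sub_pos.2 hab).le)).1
      ((ENNReal.le_tsum i).trans htV'), (htdiff i).hasDerivAt⟩⟩
lemma deriv_smoothTransition_eq_zero {s : ℝ} (hs : s ∉ Ioo (0 : ℝ) 1) :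
    deriv Real.smoothTransition s = 0 := by
  rcases le_or_gt s 0 with h | h
  · refine IsLocalMin.deriv_eq_zero (.of_forall fun t => ?_)
    rw [Real.smoothTransition.zero_of_nonpos h]
    exact Real.smoothTransition.nonneg t
  · refine IsLocalMax.deriv_eq_zero (.of_forall fun t => ?_)
    rw [Real.smoothTransition.one_of_one_le (not_lt.1 fun h' => hs ⟨h, h'⟩)]
    exact Real.smoothTransition.le_one t

lemma exists_abs_deriv_smoothTransition_le :
    ∃ C : ℝ, ∀ s, |deriv Real.smoothTransition s| ≤ C :=
  ((Real.smoothTransition.contDiff (n := 1)).continuous_deriv le_rfl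
    ).bounded_above_of_compact_support <| .intro (isCompact_Icc (a := (0 : ℝ)) (b := 1))
      fun _ hs => deriv_smoothTransition_eq_zero fun h => hs (Ioo_subset_Icc_self h)

/-- A bound for the slope of `Real.smoothTransition`, which is the profile used to smooth
indicator functions. -/
def transitionSlope : ℝ := exists_abs_deriv_smoothTransition_le.choose

lemma abs_deriv_smoothTransition_le (s : ℝ) : |deriv Real.smoothTransition s| ≤ transitionSlope :=
  exists_abs_deriv_smoothTransition_le.choose_spec s

lemma transitionSlope_pos : 0 < transitionSlope := by
  have hdiff : Differentiable ℝ Real.smoothTransition :=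
    (Real.smoothTransition.contDiff (n := 1)).differentiable one_ne_zero
  have hmvt := Convex.norm_image_sub_le_of_norm_deriv_le (x := (0 : ℝ)) (y := 1)
    (fun s _ => hdiff s) (fun s _ => abs_deriv_smoothTransition_le s) convex_univ trivial trivial
  rw [Real.smoothTransition.one, Real.smoothTransition.zero, sub_zero, norm_one, mul_one] at hmvt
  exact one_pos.trans_le hmvt

lemma transitionSlope_nonneg : 0 ≤ transitionSlope := transitionSlope_pos.le

/-- The test fields in the definition of the perimeter. -/
structure IsTestField (φ : E3 → E3) : Prop where
  contDiff : ContDiff ℝ 1 φ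
  hasCompactSupport : HasCompactSupport φ
  norm_le_one : ∀ x, ‖φ x‖ ≤ 1

/-- Measurable sets of finite volume. -/
structure IsFiniteVolume (Ω : Set E3) : Prop where
  measurableSet : MeasurableSet Ω
  volume_lt_top : volume Ω < ⊤

/-- The competitors of the liquid drop problem: measurable sets of finite volume and finite
perimeter, possibly null. -/
structure IsDroplet (Ω : Set E3) : Prop extends IsFiniteVolume Ω where
  hasFinPer : HasFinPer Ω

section Perimeter

variable {Ω : Set E3} {φ ψ : E3 → E3} {x : E3}

lemma IsTestField.zero : IsTestField (fun _ => 0) :=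
  ⟨contDiff_const, HasCompactSupport.zero, by simp⟩

lemma IsTestField.differentiable (hφ : IsTestField φ) : Differentiable ℝ φ :=
  hφ.contDiff.differentiable one_ne_zero

lemma divg_zero (x : E3) : divg (fun _ => 0) x = 0 := by
  simp [divg]

lemma divg_add (hφ : DifferentiableAt ℝ φ x) (hψ : DifferentiableAt ℝ ψ x) :
    divg (fun x => φ x + ψ x) x = divg φ x + divg ψ x := by
  simp only [divg, fderiv_fun_add hφ hψ, ContinuousLinearMap.toLinearMap_add, map_add]

lemma divg_smul {η : E3 → ℝ} (hη : DifferentiableAt ℝ η x) (hφ : DifferentiableAt ℝ φ x) :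
    divg (fun x => η x • φ x) x = η x * divg φ x + fderiv ℝ η x (φ x) := by
  have hcoe : ((η x • fderiv ℝ φ x + (fderiv ℝ η x).smulRight (φ x) : E3 →L[ℝ] E3) :
      E3 →ₗ[ℝ] E3) = η x • (fderiv ℝ φ x : E3 →ₗ[ℝ] E3) +
        (fderiv ℝ η x : E3 →ₗ[ℝ] ℝ).smulRight (φ x) := rfl
  rw [divg, fderiv_fun_smul hη hφ, hcoe, map_add, map_smul, LinearMap.trace_smulRight]
  rfl

lemma IsTestField.continuous_divg (hφ : IsTestField φ) : Continuous (divg φ) :=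
  (LinearMap.continuous_of_finiteDimensional
    ((LinearMap.trace ℝ E3).comp (ContinuousLinearMap.coeLM ℝ))).comp
    (hφ.contDiff.continuous_fderiv one_ne_zero)

lemma IsTestField.hasCompactSupport_divg (hφ : IsTestField φ) : HasCompactSupport (divg φ) :=
  (hφ.hasCompactSupport.fderiv ℝ).comp_left
    (g := fun A : E3 →L[ℝ] E3 => LinearMap.trace ℝ E3 (A : E3 →ₗ[ℝ] E3)) (by simp)

lemma IsTestField.integrable_divg (hφ : IsTestField φ) : Integrable (divg φ) :=
  hφ.continuous_divg.integrable_of_hasCompactSupport hφ.hasCompactSupport_divg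

lemma setIntegral_divg_le_per (hΩ : HasFinPer Ω) (hφ : IsTestField φ) :
    ∫ x in Ω, divg φ x ≤ per Ω :=
  le_csSup hΩ ⟨φ, hφ.contDiff, hφ.hasCompactSupport, hφ.norm_le_one, rfl⟩

lemma zero_mem_perCand : 0 ∈ perCand Ω :=
  ⟨_, IsTestField.zero.contDiff, IsTestField.zero.hasCompactSupport,
    IsTestField.zero.norm_le_one, by simp [divg_zero]⟩

lemma hasFinPer_and_per_le {b : ℝ} (h : ∀ φ, IsTestField φ → ∫ x in Ω, divg φ x ≤ b) :
    HasFinPer Ω ∧ per Ω ≤ b := by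
  have hb : b ∈ upperBounds (perCand Ω) := by
    rintro a ⟨φ, h1, h2, h3, rfl⟩
    exact h φ ⟨h1, h2, h3⟩
  exact ⟨⟨b, hb⟩, csSup_le ⟨0, zero_mem_perCand⟩ hb⟩

lemma per_nonneg : 0 ≤ per Ω := by
  by_cases h : HasFinPer Ω
  · exact le_csSup h zero_mem_perCand
  · exact (Real.sSup_of_not_bddAbove h).ge

end Perimeter

section Volume

variable {A B Ω : Set E3}

lemma vol_nonneg : 0 ≤ vol Ω := ENNReal.toReal_nonneg

lemma vol_mono (h : A ⊆ B) (hB : volume B < ⊤) : vol A ≤ vol B :=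
  measureReal_mono h hB.ne

lemma IsFiniteVolume.inter (hA : IsFiniteVolume A) (hB : MeasurableSet B) :
    IsFiniteVolume (A ∩ B) :=
  ⟨hA.measurableSet.inter hB, (measure_mono inter_subset_left).trans_lt hA.volume_lt_top⟩

lemma IsFiniteVolume.diff (hA : IsFiniteVolume A) (hB : MeasurableSet B) :
    IsFiniteVolume (A \ B) :=
  hA.inter hB.compl

lemma IsFiniteVolume.integrable_indicator_one (hA : IsFiniteVolume A) :
    Integrable (A.indicator (1 : E3 → ℝ)) :=
  (integrable_indicator_iff hA.measurableSet).2 (integrableOn_const hA.volume_lt_top.ne)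

lemma vol_slab {u : E3 → ℝ} (hu : Measurable u) (hΩ : IsFiniteVolume Ω) {s t : ℝ} (h : s ≤ t) :
    vol (Ω ∩ {x | u x ∈ Ico s t}) = vol (Ω ∩ {x | u x < t}) - vol (Ω ∩ {x | u x < s}) := by
  have hset : Ω ∩ {x | u x ∈ Ico s t} = (Ω ∩ {x | u x < t}) \ (Ω ∩ {x | u x < s}) := by
    ext x
    simp only [mem_inter_iff, mem_ofPred_eq, mem_Ico, Set.mem_sdiff, not_and, not_lt]
    tauto
  rw [hset]
  exact measureReal_sdiff (fun x hx => ⟨hx.1, lt_of_lt_of_le hx.2 h⟩)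
    (hΩ.measurableSet.inter (measurableSet_lt hu measurable_const))
    (hΩ.inter (measurableSet_lt hu measurable_const)).volume_lt_top.ne

end Volume

section SmoothCut

variable {Ω : Set E3} {η : E3 → ℝ} {φ ψ : E3 → E3}

lemma IsTestField.convexComb (hη : ContDiff ℝ 1 η) (hη01 : ∀ x, η x ∈ Icc (0 : ℝ) 1)
    (hφ : IsTestField φ) (hψ : IsTestField ψ) :
    IsTestField fun x => η x • φ x + (1 - η x) • ψ x where
  contDiff := (hη.smul hφ.contDiff).add ((contDiff_const.sub hη).smul hψ.contDiff)
  hasCompactSupport := (hφ.hasCompactSupport.smul_left (f := η)).add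
    (hψ.hasCompactSupport.smul_left (f := fun x => 1 - η x))
  norm_le_one x := by
    simpa using (convex_closedBall (0 : E3) 1) (by simpa using hφ.norm_le_one x)
      (by simpa using hψ.norm_le_one x) (hη01 x).1 (sub_nonneg.2 (hη01 x).2)
      (add_sub_cancel _ _)

lemma divg_convexComb (hη : Differentiable ℝ η) (hφ : Differentiable ℝ φ)
    (hψ : Differentiable ℝ ψ) (x : E3) :
    divg (fun x => η x • φ x + (1 - η x) • ψ x) x
      = η x * divg φ x + (1 - η x) * divg ψ x + fderiv ℝ η x (φ x - ψ x) := by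
  have hη' : Differentiable ℝ fun x => 1 - η x := hη.const_sub 1
  rw [divg_add ((hη x).fun_smul (hφ x)) ((hη' x).fun_smul (hψ x)), divg_smul (hη x) (hφ x),
    divg_smul (hη' x) (hψ x), fderiv_const_sub, map_sub]
  simp only [neg_apply]
  ring

lemma setIntegral_smoothCut_le (hΩ : HasFinPer Ω) (hη : ContDiff ℝ 1 η)
    (hη01 : ∀ x, η x ∈ Icc (0 : ℝ) 1) (hint : IntegrableOn (fun x => ‖fderiv ℝ η x‖) Ω)
    (hφ : IsTestField φ) (hψ : IsTestField ψ) :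
    ∫ x in Ω, (η x * divg φ x + (1 - η x) * divg ψ x)
      ≤ per Ω + 2 * ∫ x in Ω, ‖fderiv ℝ η x‖ := by
  have hF := IsTestField.convexComb hη hη01 hφ hψ
  have hle x : η x * divg φ x + (1 - η x) * divg ψ x
      ≤ divg (fun x => η x • φ x + (1 - η x) • ψ x) x + 2 * ‖fderiv ℝ η x‖ := by
    have hφψ : ‖φ x - ψ x‖ ≤ 2 := by
      linarith [norm_sub_le (φ x) (ψ x), hφ.norm_le_one x, hψ.norm_le_one x]
    have hop : |fderiv ℝ η x (φ x - ψ x)| ≤ ‖fderiv ℝ η x‖ * 2 :=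
      (fderiv ℝ η x).le_opNorm_of_le hφψ
    rw [divg_convexComb (hη.differentiable one_ne_zero) hφ.differentiable hψ.differentiable]
    linarith [neg_le_of_abs_le hop]
  have hcut : Integrable fun x => η x * divg φ x + (1 - η x) * divg ψ x :=
    ((hη.continuous.mul hφ.continuous_divg).add
      ((continuous_const.sub hη.continuous).mul hψ.continuous_divg)).integrable_of_hasCompactSupport
      (hφ.hasCompactSupport_divg.mul_left.add hψ.hasCompactSupport_divg.mul_left)
  calc ∫ x in Ω, (η x * divg φ x + (1 - η x) * divg ψ x)
      ≤ ∫ x in Ω, (divg (fun x => η x • φ x + (1 - η x) • ψ x) x + 2 * ‖fderiv ℝ η x‖) :=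
        integral_mono hcut.integrableOn (hF.integrable_divg.integrableOn.add (hint.const_mul 2)) hle
    _ = (∫ x in Ω, divg (fun x => η x • φ x + (1 - η x) • ψ x) x)
          + 2 * ∫ x in Ω, ‖fderiv ℝ η x‖ := by
        rw [integral_add hF.integrable_divg.integrableOn (hint.const_mul 2), integral_const_mul]
    _ ≤ per Ω + 2 * ∫ x in Ω, ‖fderiv ℝ η x‖ := by
        gcongr
        exact setIntegral_divg_le_per hΩ hF

lemma setIntegral_inter_add_setIntegral_diff {f g : E3 → ℝ} (hf : Integrable f)
    (hg : Integrable g) (Ω : Set E3) {H : Set E3} (hH : MeasurableSet H) :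
    (∫ x in Ω ∩ H, f x) + ∫ x in Ω \ H, g x
      = ∫ x in Ω, (H.indicator 1 x * f x + (1 - H.indicator 1 x) * g x) := by
  have hsplit : (fun x => H.indicator 1 x * f x + (1 - H.indicator 1 x) * g x)
      = fun x => H.indicator f x + Hᶜ.indicator g x := by
    ext x
    by_cases hx : x ∈ H <;> simp [hx]
  rw [hsplit, integral_add (hf.indicator hH).integrableOn (hg.indicator hH.compl).integrableOn,
    setIntegral_indicator hH, setIntegral_indicator hH.compl, sdiff_eq]

lemma tendsto_setIntegral_smoothCut {η : ℕ → E3 → ℝ} (hη : ∀ i, Continuous (η i))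
    (hη01 : ∀ i x, η i x ∈ Icc (0 : ℝ) 1) {H : Set E3}
    (hlim : ∀ x, Tendsto (fun i => η i x) atTop (𝓝 (H.indicator 1 x)))
    {f g : E3 → ℝ} (hf : Integrable f) (hg : Integrable g) :
    Tendsto (fun i => ∫ x in Ω, (η i x * f x + (1 - η i x) * g x)) atTop
      (𝓝 (∫ x in Ω, (H.indicator 1 x * f x + (1 - H.indicator 1 x) * g x))) := by
  refine tendsto_integral_of_dominated_convergence (fun x => |f x| + |g x|) (fun i => ?_)
    (hf.abs.add hg.abs).integrableOn (fun i => .of_forall fun x => ?_)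
    (.of_forall fun x => ((hlim x).mul_const _).add ((tendsto_const_nhds.sub (hlim x)).mul_const _))
  · exact ((hη i).aestronglyMeasurable.mul hf.1.restrict).add
      ((continuous_const.sub (hη i)).aestronglyMeasurable.mul hg.1.restrict)
  · obtain ⟨h0, h1⟩ := hη01 i x
    rw [Real.norm_eq_abs]
    refine (abs_add_le _ _).trans (add_le_add ?_ ?_) <;> rw [abs_mul]
    · exact mul_le_of_le_one_left (abs_nonneg _) (by rwa [abs_of_nonneg h0])
    · exact mul_le_of_le_one_left (abs_nonneg _) (by rw [abs_of_nonneg] <;> linarith)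

lemma IsDroplet.of_hasFinPer_inter_diff {H : Set E3} (hΩ : IsDroplet Ω) (hH : MeasurableSet H)
    {b : ℝ} (hb : ∀ φ ψ, IsTestField φ → IsTestField ψ →
      (∫ x in Ω ∩ H, divg φ x) + ∫ x in Ω \ H, divg ψ x ≤ b) :
    IsDroplet (Ω ∩ H) ∧ IsDroplet (Ω \ H) ∧ per (Ω ∩ H) + per (Ω \ H) ≤ b := by
  have hinter φ (hφ : IsTestField φ) := (hasFinPer_and_per_le (Ω := Ω \ H)
    (b := b - ∫ x in Ω ∩ H, divg φ x) fun ψ hψ => by linarith [hb φ ψ hφ hψ])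
  obtain ⟨hfin, hle⟩ := hasFinPer_and_per_le (Ω := Ω ∩ H) (b := b - per (Ω \ H))
    fun φ hφ => by linarith [(hinter φ hφ).2]
  exact ⟨⟨hΩ.inter hH, hfin⟩, ⟨hΩ.diff hH, (hinter _ .zero).1⟩, by linarith⟩

lemma IsDroplet.cut_of_tendsto {H : Set E3} (hΩ : IsDroplet Ω) (hH : MeasurableSet H)
    {η : ℕ → E3 → ℝ} (hη : ∀ i, ContDiff ℝ 1 (η i)) (hη01 : ∀ i x, η i x ∈ Icc (0 : ℝ) 1)
    (hint : ∀ i, IntegrableOn (fun x => ‖fderiv ℝ (η i) x‖) Ω)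
    (hlim : ∀ x, Tendsto (fun i => η i x) atTop (𝓝 (H.indicator 1 x)))
    {c : ℕ → ℝ} (hc : ∀ i, ∫ x in Ω, ‖fderiv ℝ (η i) x‖ ≤ c i) {c' : ℝ}
    (hc' : Tendsto c atTop (𝓝 c')) :
    IsDroplet (Ω ∩ H) ∧ IsDroplet (Ω \ H) ∧ per (Ω ∩ H) + per (Ω \ H) ≤ per Ω + 2 * c' := by
  refine hΩ.of_hasFinPer_inter_diff hH fun φ ψ hφ hψ => ?_
  rw [setIntegral_inter_add_setIntegral_diff hφ.integrable_divg hψ.integrable_divg Ω hH]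
  refine le_of_tendsto_of_tendsto' (tendsto_setIntegral_smoothCut (fun i => (hη i).continuous) hη01
    hlim hφ.integrable_divg hψ.integrable_divg) ((hc'.const_mul 2).const_add (per Ω)) fun i => ?_
  have := setIntegral_smoothCut_le hΩ.hasFinPer (hη i) (hη01 i) (hint i) hφ hψ
  linarith [hc i]

end SmoothCut

section Sublevel

/-- A smooth approximation, as `δ → 0`, of the indicator function of `{x | u x < t}`. It is
constant outside the slab `{x | u x ∈ Ico (t - δ) t}`. -/
def smoothSublevel (u : E3 → ℝ) (t δ : ℝ) (x : E3) : ℝ :=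
  1 - Real.smoothTransition ((u x - (t - δ)) / δ)

variable {Ω : Set E3} {u : E3 → ℝ} {t δ : ℝ}

lemma contDiff_smoothSublevel (hu : ContDiff ℝ 1 u) (t δ : ℝ) :
    ContDiff ℝ 1 (smoothSublevel u t δ) :=
  contDiff_const.sub <| Real.smoothTransition.contDiff.comp <|
    (hu.sub contDiff_const).div_const δ

lemma smoothSublevel_mem_Icc (u : E3 → ℝ) (t δ : ℝ) (x : E3) :
    smoothSublevel u t δ x ∈ Icc (0 : ℝ) 1 :=
  ⟨sub_nonneg.2 (Real.smoothTransition.le_one _),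
    sub_le_self _ (Real.smoothTransition.nonneg _)⟩

lemma norm_fderiv_smoothSublevel_le (hu : ContDiff ℝ 1 u) (hLip : LipschitzWith 1 u)
    (hδ : 0 < δ) (x : E3) :
    ‖fderiv ℝ (smoothSublevel u t δ) x‖
      ≤ {x | u x ∈ Ico (t - δ) t}.indicator (fun _ => transitionSlope / δ) x := by
  set s := (u x - (t - δ)) / δ
  have hsT : HasDerivAt Real.smoothTransition (deriv Real.smoothTransition s) s :=
    ((Real.smoothTransition.contDiff (n := 1)).differentiable one_ne_zero s).hasDerivAt
  have hinner : HasFDerivAt (fun x => (u x - (t - δ)) / δ) (δ⁻¹ • fderiv ℝ u x) x := by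
    simpa only [div_eq_inv_mul] using
      (((hu.differentiable one_ne_zero x).hasFDerivAt.sub_const (t - δ)).const_mul δ⁻¹)
  have hnorm : ‖fderiv ℝ (smoothSublevel u t δ) x‖
      = |deriv Real.smoothTransition s| * (δ⁻¹ * ‖fderiv ℝ u x‖) := by
    have hcomp := hsT.comp_hasFDerivAt x hinner
    have hderiv : HasFDerivAt (smoothSublevel u t δ)
        (-(deriv Real.smoothTransition s • δ⁻¹ • fderiv ℝ u x)) x := hcomp.const_sub 1
    rw [hderiv.fderiv, norm_neg, norm_smul, norm_smul, Real.norm_eq_abs,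
      Real.norm_of_nonneg (inv_nonneg.2 hδ.le)]
  rw [hnorm]
  by_cases hx : u x ∈ Ico (t - δ) t
  · rw [indicator_of_mem (by exact hx), div_eq_mul_inv]
    refine mul_le_mul (abs_deriv_smoothTransition_le s) ?_ (by positivity) transitionSlope_nonneg
    exact mul_le_of_le_one_right (inv_nonneg.2 hδ.le) (norm_fderiv_le_of_lipschitz ℝ hLip)
  · have hs : s ∉ Ioo (0 : ℝ) 1 := fun h => hx
      ⟨by linarith [(div_pos_iff_of_pos_right hδ).1 h.1], by linarith [(div_lt_one hδ).1 h.2]⟩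
    rw [deriv_smoothTransition_eq_zero hs, abs_zero, zero_mul, indicator_of_notMem (by exact hx)]

lemma tendsto_smoothSublevel {δ : ℕ → ℝ} (hδ : ∀ i, 0 < δ i) (hδ0 : Tendsto δ atTop (𝓝 0))
    (x : E3) :
    Tendsto (fun i => smoothSublevel u t (δ i) x) atTop (𝓝 ({x | u x < t}.indicator 1 x)) := by
  refine tendsto_const_nhds.congr' ?_
  rcases lt_or_ge (u x) t with hx | hx
  · filter_upwards [hδ0.eventually_lt_const (sub_pos.2 hx)] with i hi
    rw [indicator_of_mem (s := {x | u x < t}) hx, smoothSublevel,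
      Real.smoothTransition.zero_of_nonpos, sub_zero, Pi.one_apply]
    exact div_nonpos_of_nonpos_of_nonneg (by linarith) (hδ i).le
  · filter_upwards with i
    rw [indicator_of_notMem (s := {x | u x < t}) hx.not_gt, smoothSublevel,
      Real.smoothTransition.one_of_one_le, sub_self]
    rw [one_le_div (hδ i)]
    linarith

/-- Cutting any droplet contained in `Ω` along `H` creates at most the perimeter `q`. Subsets of
`Ω` are included so that several cuts can be performed in succession. -/
def HasCutCost (Ω H : Set E3) (q : ℝ) : Prop :=
  ∀ Ω' ⊆ Ω, IsDroplet Ω' → IsDroplet (Ω' ∩ H) ∧ IsDroplet (Ω' \ H) ∧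
    per (Ω' ∩ H) + per (Ω' \ H) ≤ per Ω' + q

lemma setIntegral_norm_fderiv_smoothSublevel_le (hu : ContDiff ℝ 1 u) (hLip : LipschitzWith 1 u)
    (hδ : 0 < δ) (hΩ : IsFiniteVolume Ω) :
    IntegrableOn (fun x => ‖fderiv ℝ (smoothSublevel u t δ) x‖) Ω ∧
      ∫ x in Ω, ‖fderiv ℝ (smoothSublevel u t δ) x‖
        ≤ transitionSlope * (δ⁻¹ * vol (Ω ∩ {x | u x ∈ Ico (t - δ) t})) := by
  have hS : MeasurableSet {x | u x ∈ Ico (t - δ) t} :=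
    hu.continuous.measurable measurableSet_Ico
  have hdom : IntegrableOn
      ({x | u x ∈ Ico (t - δ) t}.indicator fun _ => transitionSlope / δ) Ω :=
    (integrableOn_const hΩ.volume_lt_top.ne).indicator hS
  have hle := norm_fderiv_smoothSublevel_le (t := t) hu hLip hδ
  have hint : IntegrableOn (fun x => ‖fderiv ℝ (smoothSublevel u t δ) x‖) Ω :=
    hdom.mono'
      ((contDiff_smoothSublevel hu t δ).continuous_fderiv one_ne_zero).norm.aestronglyMeasurable
      (.of_forall fun x => by simpa only [norm_norm] using hle x)
  refine ⟨hint, (integral_mono hint hdom hle).trans_eq ?_⟩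
  rw [setIntegral_indicator hS, setIntegral_const, smul_eq_mul, measureReal_def, ← vol]
  ring

lemma hasCutCost_sublevel (hu : ContDiff ℝ 1 u) (hLip : LipschitzWith 1 u)
    (hΩ : IsFiniteVolume Ω) {W : ℝ → ℝ} {w : ℝ} (hW : HasDerivAt W w t)
    (hvol : ∀ s < t, vol (Ω ∩ {x | u x ∈ Ico s t}) ≤ W t - W s) :
    HasCutCost Ω {x | u x < t} (2 * (transitionSlope * w)) := by
  intro Ω' hsub hΩ'
  set δ : ℕ → ℝ := fun i => 1 / ((i : ℝ) + 1)
  have hδ i : 0 < δ i := Nat.one_div_pos_of_nat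
  have hδ0 : Tendsto δ atTop (𝓝 0) := tendsto_one_div_add_atTop_nhds_zero_nat
  have hslope : Tendsto (fun i => (δ i)⁻¹ * (W t - W (t - δ i))) atTop (𝓝 w) := by
    have hneg : Tendsto (fun i => -δ i) atTop (𝓝[≠] 0) :=
      tendsto_nhdsWithin_iff.2 ⟨by simpa using hδ0.neg,
        .of_forall fun i => neg_ne_zero.2 (hδ i).ne'⟩
    refine (hW.tendsto_slope_zero.comp hneg).congr fun i => ?_
    simp only [Function.comp_apply, smul_eq_mul, ← sub_eq_add_neg, inv_neg]
    ring
  refine hΩ'.cut_of_tendsto (measurableSet_lt hu.continuous.measurable measurable_const)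
    (fun i => contDiff_smoothSublevel hu t (δ i)) (fun i => smoothSublevel_mem_Icc u t (δ i))
    (fun i => (setIntegral_norm_fderiv_smoothSublevel_le hu hLip (hδ i) hΩ'.1).1)
    (fun x => tendsto_smoothSublevel hδ hδ0 x) (fun i => ?_) (hslope.const_mul transitionSlope)
  refine (setIntegral_norm_fderiv_smoothSublevel_le hu hLip (hδ i) hΩ'.1).2.trans ?_
  have := transitionSlope_nonneg
  have := inv_nonneg.2 (hδ i).le
  gcongr
  exact (vol_mono (inter_subset_inter_left _ hsub) (hΩ.inter
    (hu.continuous.measurable measurableSet_Ico)).volume_lt_top).trans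
    (hvol _ (sub_lt_self t (hδ i)))

lemma exists_forall_hasCutCost {ι : Type*} [Countable ι] {u : ι → E3 → ℝ} {Ω : ι → Set E3}
    (hu : ∀ i, ContDiff ℝ 1 (u i)) (hLip : ∀ i, LipschitzWith 1 (u i))
    (hΩ : ∀ i, IsFiniteVolume (Ω i)) {a b : ℝ} (hab : a < b) {c v : ι → ℝ} {V : ℝ}
    (hc : ∀ i, 0 < c i) (hv : ∀ i, c i * vol (Ω i ∩ {x | u i x ∈ Ico a b}) ≤ v i)
    (hV : HasSum v V) :
    ∃ t ∈ Icc a b, ∀ i, HasCutCost (Ω i) {x | u i x < t}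
      (2 * transitionSlope * V / (b - a) / c i) := by
  have hslab {s t : ℝ} (i : ι) (hst : s ≤ t) :=
    vol_slab (hu i).continuous.measurable (hΩ i) hst
  obtain ⟨t, ht, hslope⟩ := exists_forall_hasDerivAt_le_slope
    (W := fun i s => c i * vol (Ω i ∩ {x | u i x < s}))
    (fun i s t hst => mul_le_mul_of_nonneg_left (vol_mono
      (inter_subset_inter_right _ fun x hx => lt_of_lt_of_le hx hst) ((hΩ i).inter
        (measurableSet_lt (hu i).continuous.measurable measurable_const)).volume_lt_top) (hc i).le)
    hab (fun i => by rw [← mul_sub, ← hslab i hab.le]; exact hv i) hV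
  refine ⟨t, ht, fun i Ω' hsub hΩ' => ?_⟩
  obtain ⟨w, hw, hderiv⟩ := hslope i
  obtain ⟨h1, h2, h3⟩ := hasCutCost_sublevel (hu i) (hLip i) (hΩ i) (hderiv.const_mul (c i)⁻¹)
    (fun s hs => by
      rw [inv_mul_cancel_left₀ (hc i).ne', inv_mul_cancel_left₀ (hc i).ne', hslab i hs.le]) Ω' hsub
    hΩ'
  have hκ := transitionSlope_nonneg
  refine ⟨h1, h2, h3.trans <| add_le_add_right ?_ _⟩
  calc 2 * (transitionSlope * ((c i)⁻¹ * w)) = 2 * transitionSlope * w / c i := by ring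
    _ ≤ 2 * transitionSlope * (V / (b - a)) / c i := by
      gcongr
      exact (hc i).le
    _ = _ := by ring

lemma exists_hasCutCost (hu : ContDiff ℝ 1 u) (hLip : LipschitzWith 1 u)
    (hΩ : IsFiniteVolume Ω) {a b : ℝ} (hab : a < b) :
    ∃ t ∈ Icc a b, HasCutCost Ω {x | u x < t}
      (2 * transitionSlope * vol (Ω ∩ {x | u x ∈ Ico a b}) / (b - a)) := by
  obtain ⟨t, ht, hcut⟩ := exists_forall_hasCutCost (ι := Unit) (fun _ => hu) (fun _ => hLip)
    (fun _ => hΩ) hab (fun _ => one_pos) (fun _ => (one_mul _).le) (hasSum_unique _)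
  exact ⟨t, ht, by simpa only [div_one] using hcut ()⟩

end Sublevel

/-- The set `Ω` as seen from the point `a`, that is the translate `Ω - a`. -/
def recenter (a : E3) (Ω : Set E3) : Set E3 := {x | x + a ∈ Ω}

section Recenter

variable {Ω : Set E3} {a : E3}

lemma measurableSet_recenter (hΩ : MeasurableSet Ω) (a : E3) : MeasurableSet (recenter a Ω) :=
  measurable_add_const a hΩ

@[simp]
lemma volume_recenter (a : E3) (Ω : Set E3) : volume (recenter a Ω) = volume Ω :=
  measure_preimage_add_right volume a Ω

protected lemma IsFiniteVolume.recenter (hΩ : IsFiniteVolume Ω) (a : E3) :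
    IsFiniteVolume (recenter a Ω) :=
  ⟨measurableSet_recenter hΩ.measurableSet a, (volume_recenter a Ω).trans_lt hΩ.volume_lt_top⟩

lemma setIntegral_recenter (a : E3) (Ω : Set E3) (f : E3 → ℝ) :
    ∫ x in recenter a Ω, f (x + a) = ∫ x in Ω, f x :=
  (measurePreserving_add_right volume a).setIntegral_preimage_emb
    (measurableEmbedding_addRight a) f Ω

end Recenter

section Translation

variable {Ω : Set E3} {ψ : E3 → ℝ}

lemma setIntegral_fderiv_apply_le (hΩ : HasFinPer Ω) (hψ : ContDiff ℝ 1 ψ)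
    (hc : HasCompactSupport ψ) (hψ1 : ∀ x, |ψ x| ≤ 1) (h : E3) :
    ∫ x in Ω, fderiv ℝ ψ x h ≤ ‖h‖ * per Ω := by
  rcases eq_or_ne h 0 with rfl | hne
  · simp
  have hφ : IsTestField fun x => ψ x • ‖h‖⁻¹ • h :=
    ⟨hψ.smul contDiff_const, hc.smul_right, fun x => by
      rw [norm_smul, norm_smul, norm_inv, norm_norm, inv_mul_cancel₀ (norm_ne_zero_iff.2 hne),
        mul_one]
      exact hψ1 x⟩
  have hdiv x : divg (fun x => ψ x • ‖h‖⁻¹ • h) x = ‖h‖⁻¹ * fderiv ℝ ψ x h := by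
    rw [divg_smul (hψ.differentiable one_ne_zero x) (differentiableAt_const _), map_smul]
    simp [divg]
  have hle := setIntegral_divg_le_per hΩ hφ
  simp_rw [hdiv] at hle
  rwa [integral_const_mul, inv_mul_le_iff₀ (norm_pos_iff.2 hne)] at hle

lemma hasDerivAt_setIntegral_sub_smul (hΩ : volume Ω < ⊤) (hψ : ContDiff ℝ 1 ψ)
    (hc : HasCompactSupport ψ) (h : E3) (s : ℝ) :
    HasDerivAt (fun s : ℝ => ∫ x in Ω, ψ (x - s • h))
      (∫ x in Ω, -(fderiv ℝ ψ (x - s • h) h)) s := by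
  have : IsFiniteMeasure (volume.restrict Ω) := ⟨by simpa using hΩ⟩
  have hfd : Continuous (fderiv ℝ ψ) := hψ.continuous_fderiv one_ne_zero
  obtain ⟨C, hC⟩ := hfd.bounded_above_of_compact_support (hc.fderiv ℝ)
  obtain ⟨B, hB⟩ := hψ.continuous.bounded_above_of_compact_support hc
  have hsub (s : ℝ) : Continuous fun x => x - s • h := continuous_id.sub continuous_const
  have hψs (s : ℝ) : AEStronglyMeasurable (fun x => ψ (x - s • h)) (volume.restrict Ω) :=
    (hψ.continuous.comp (hsub s)).aestronglyMeasurable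
  refine (hasDerivAt_integral_of_dominated_loc_of_deriv_le (s := univ)
    (F := fun s x => ψ (x - s • h)) (F' := fun s x => -(fderiv ℝ ψ (x - s • h) h))
    (bound := fun _ => C * ‖h‖) univ_mem (.of_forall hψs)
    (.of_bound (hψs s) B (.of_forall fun x => hB _))
    ((hfd.comp (hsub s)).clm_apply continuous_const).neg.aestronglyMeasurable
    (.of_forall fun x s _ => ?_) (integrable_const _) (.of_forall fun x s _ => ?_)).2
  · rw [norm_neg]
    exact (fderiv ℝ ψ (x - s • h)).le_of_opNorm_le (hC _) h
  · have hline : HasDerivAt (fun s : ℝ => x - s • h) (-h) s := by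
      simpa using ((hasDerivAt_id s).smul_const h).const_sub x
    simpa only [map_neg, Function.comp_def] using
      ((hψ.differentiable one_ne_zero _).hasFDerivAt.comp_hasDerivAt s hline)

lemma IsDroplet.setIntegral_sub_setIntegral_le (hΩ : IsDroplet Ω) (hψ : ContDiff ℝ 1 ψ)
    (hc : HasCompactSupport ψ) (hψ1 : ∀ x, |ψ x| ≤ 1) (h : E3) :
    (∫ x in Ω, ψ x) - ∫ x in Ω, ψ (x - h) ≤ ‖h‖ * per Ω := by
  have hderiv s := (hasDerivAt_setIntegral_sub_smul hΩ.volume_lt_top hψ hc h s).neg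
  have hslope (s : ℝ) : deriv (-fun s : ℝ => ∫ x in Ω, ψ (x - s • h)) s ≤ ‖h‖ * per Ω := by
    have hcomp : ContDiff ℝ 1 fun x => ψ (x - s • h) := hψ.comp (contDiff_id.sub contDiff_const)
    have hle := setIntegral_fderiv_apply_le hΩ.hasFinPer hcomp
      (hc.comp_homeomorph (Homeomorph.subRight (s • h))) (fun x => hψ1 _) h
    rw [(hderiv s).deriv, integral_neg, neg_neg]
    simpa only [fderiv_comp_sub] using hle
  have hmv := image_sub_le_mul_sub_of_deriv_le (fun s => (hderiv s).differentiableAt) hslope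
    zero_le_one
  simp only [Pi.neg_apply, one_smul, zero_smul, sub_zero, mul_one] at hmv
  linarith

lemma exists_contDiff_bump {K U : Set E3} (hK : IsCompact K) (hU : IsOpen U) (h : K ⊆ U) :
    ∃ ψ : E3 → ℝ, ContDiff ℝ 1 ψ ∧ HasCompactSupport ψ ∧ (∀ x, ψ x ∈ Icc (0 : ℝ) 1) ∧
      (∀ x ∈ K, ψ x = 1) ∧ ∀ x ∉ U, ψ x = 0 := by
  obtain ⟨r, hr⟩ := hK.isBounded.subset_ball (0 : E3)
  obtain ⟨ψ, hψ, hrange, hsupp, hone⟩ := exists_contMDiff_support_eq_eq_one_iff (n := ⊤)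
    (modelWithCornersSelf ℝ E3) (hU.inter (isOpen_ball (x := (0 : E3)) (ε := r))) hK.isClosed
    (subset_inter h hr)
  refine ⟨ψ, hψ.contDiff.of_le (by norm_cast), ?_, fun x => hrange ⟨x, rfl⟩,
    fun x => (hone x).1, fun x hx => ?_⟩
  · refine .of_support_subset_isCompact (isCompact_closedBall (0 : E3) r) ?_
    rw [hsupp]
    exact inter_subset_right.trans ball_subset_closedBall
  · rw [← Function.notMem_support, hsupp]
    exact fun hx' => hx hx'.1

lemma IsDroplet.vol_sub_vol_le (hΩ : IsDroplet Ω) {h : E3} {K U : Set E3} (hK : IsCompact K)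
    (hU : IsOpen U) (hUfin : volume U < ⊤) (hKU : K ⊆ U) (hKΩ : K ⊆ Ω \ recenter h Ω) :
    vol K - vol (U \ K) ≤ ‖h‖ * per Ω := by
  obtain ⟨ψ, hψ, hc, hrange, hone, hzero⟩ := exists_contDiff_bump hK hU hKU
  have hint : Integrable ψ := hψ.continuous.integrable_of_hasCompactSupport hc
  have hmeas := measurableSet_recenter hΩ.measurableSet h
  have hKfin : IsFiniteVolume K := ⟨hK.measurableSet, hK.measure_lt_top⟩
  have hUK : IsFiniteVolume (U \ K) :=
    IsFiniteVolume.diff ⟨hU.measurableSet, hUfin⟩ hK.measurableSet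
  have hle x : K.indicator 1 x - (U \ K).indicator 1 x
      ≤ Ω.indicator ψ x - (recenter h Ω).indicator ψ x := by
    by_cases hxK : x ∈ K
    · simp [hxK, hone x hxK, (hKΩ hxK).1, (hKΩ hxK).2]
    by_cases hxU : x ∈ U
    · obtain ⟨h0, h1⟩ := hrange x
      rw [indicator_of_notMem hxK, indicator_of_mem (show x ∈ U \ K from ⟨hxU, hxK⟩), Pi.one_apply]
      by_cases hx : x ∈ Ω <;> by_cases hx' : x ∈ recenter h Ω <;> simp [hx, hx'] <;> linarith
    · simp [hxK, hxU, indicator, hzero x hxU]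
  calc vol K - vol (U \ K) = ∫ x, (K.indicator 1 x - (U \ K).indicator 1 x) := by
        rw [integral_sub hKfin.integrable_indicator_one hUK.integrable_indicator_one,
          integral_indicator_one hKfin.measurableSet, integral_indicator_one hUK.measurableSet]
        rfl
    _ ≤ ∫ x, (Ω.indicator ψ x - (recenter h Ω).indicator ψ x) :=
        integral_mono (hKfin.integrable_indicator_one.sub hUK.integrable_indicator_one)
          ((hint.indicator hΩ.measurableSet).sub (hint.indicator hmeas)) hle
    _ = (∫ x in Ω, ψ x) - ∫ x in Ω, ψ (x - h) := by
        rw [integral_sub (hint.indicator hΩ.measurableSet) (hint.indicator hmeas),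
          integral_indicator hΩ.measurableSet, integral_indicator hmeas,
          ← setIntegral_recenter h Ω fun x => ψ (x - h)]
        simp only [add_sub_cancel_right]
    _ ≤ ‖h‖ * per Ω := hΩ.setIntegral_sub_setIntegral_le hψ hc
        (fun x => abs_le.2 ⟨by linarith [(hrange x).1], (hrange x).2⟩) h

lemma IsDroplet.volume_diff_recenter_le (hΩ : IsDroplet Ω) (h : E3) :
    volume (Ω \ recenter h Ω) ≤ ENNReal.ofReal (‖h‖ * per Ω) := by
  have hS := hΩ.diff (measurableSet_recenter hΩ.measurableSet h)
  refine (ENNReal.le_ofReal_iff_toReal_le hS.volume_lt_top.ne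
    (mul_nonneg (norm_nonneg h) per_nonneg)).2 (le_of_forall_pos_le_add fun ε hε => ?_)
  have hε' : ENNReal.ofReal (ε / 2) ≠ 0 := (ENNReal.ofReal_pos.2 (half_pos hε)).ne'
  obtain ⟨K, hKS, hK, hSK⟩ := hS.measurableSet.exists_isCompact_lt_add hS.volume_lt_top.ne hε'
  obtain ⟨U, hKU, hU, hUK⟩ := hK.exists_isOpen_lt_add (μ := volume) hε'
  have hUfin : volume U < ⊤ := hUK.trans_le le_top
  have hKfin : volume K < ⊤ := hK.measure_lt_top
  have hreal {A : Set E3} (hA : volume A < volume K + ENNReal.ofReal (ε / 2)) :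
      vol A ≤ vol K + ε / 2 := by
    have := ENNReal.toReal_mono (by finiteness) hA.le
    rwa [ENNReal.toReal_add hKfin.ne ENNReal.ofReal_ne_top,
      ENNReal.toReal_ofReal (half_pos hε).le] at this
  have hdiff : vol (U \ K) = vol U - vol K := measureReal_sdiff hKU hK.measurableSet hUfin.ne
  have hle := hΩ.vol_sub_vol_le hK hU hUfin hKU hKS
  have hS' := hreal hSK
  unfold vol at *
  linarith [hreal hUK]

lemma recenter_diff_self (h : E3) (Ω : Set E3) :
    recenter h Ω \ Ω = recenter h (Ω \ recenter (-h) Ω) := by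
  ext x
  simp [recenter]

lemma IsDroplet.volume_recenter_diff_le (hΩ : IsDroplet Ω) (h : E3) :
    volume (recenter h Ω \ Ω) ≤ ENNReal.ofReal (‖h‖ * per Ω) := by
  rw [recenter_diff_self, volume_recenter, ← norm_neg]
  exact hΩ.volume_diff_recenter_le (-h)

lemma volume_ball_inter (x : E3) (r : ℝ) (B : Set E3) :
    volume (ball x r ∩ B) = volume (ball 0 r ∩ recenter x B) := by
  rw [← volume_recenter x]
  congr 1
  ext y
  simp [recenter]

lemma lintegral_volume_ball_inter (A : Set E3) {B : Set E3} (hB : MeasurableSet B) (r : ℝ) :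
    ∫⁻ x in A, volume (ball x r ∩ B) = ∫⁻ h in ball 0 r, volume (A ∩ recenter h B) := by
  have hmeas : Measurable (Function.uncurry fun x h : E3 => B.indicator (1 : E3 → ℝ≥0∞) (x + h)) :=
    (measurable_one.indicator hB).comp measurable_add
  have hslice (S : Set E3) (x : E3) :
      ∫⁻ h in S, B.indicator 1 (h + x) = volume (S ∩ recenter x B) := by
    rw [inter_comm, ← Measure.restrict_apply (measurableSet_recenter hB x),
      ← lintegral_indicator_one (measurableSet_recenter hB x)]
    rfl
  simp only [volume_ball_inter _ r B, ← hslice]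
  rw [← lintegral_lintegral_swap]
  · simp_rw [add_comm]
  · simpa only [add_comm] using hmeas.aemeasurable

lemma setLIntegral_volume_ball_inter_le {A B : Set E3} (hB : MeasurableSet B) {p : ℝ}
    (hp : 0 ≤ p) (hAB : ∀ h, volume (A ∩ recenter h B) ≤ ENNReal.ofReal (‖h‖ * p)) (r : ℝ) :
    ∫⁻ x in A, volume (ball x r ∩ B) ≤ volume (ball (0 : E3) r) * ENNReal.ofReal (r * p) := by
  rw [lintegral_volume_ball_inter A hB, mul_comm, ← setLIntegral_const]
  refine setLIntegral_mono' measurableSet_ball fun h hh => (hAB h).trans ?_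
  gcongr
  exact (mem_ball_zero_iff.1 hh).le

lemma IsDroplet.setLIntegral_volume_ball_diff_le (hΩ : IsDroplet Ω) (r : ℝ) :
    ∫⁻ x in Ω, volume (ball x r \ Ω)
      ≤ volume (ball (0 : E3) r) * ENNReal.ofReal (r * per Ω) :=
  setLIntegral_volume_ball_inter_le hΩ.measurableSet.compl per_nonneg
    hΩ.volume_diff_recenter_le r

lemma IsDroplet.setLIntegral_compl_volume_ball_inter_le (hΩ : IsDroplet Ω) (r : ℝ) :
    ∫⁻ x in Ωᶜ, volume (ball x r ∩ Ω)
      ≤ volume (ball (0 : E3) r) * ENNReal.ofReal (r * per Ω) :=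
  setLIntegral_volume_ball_inter_le hΩ.measurableSet per_nonneg
    (fun h => by
      rw [inter_comm]
      exact hΩ.volume_recenter_diff_le h) r

lemma IsDroplet.vol_diff_le_of_volume_ball_inter_le (hΩ : IsDroplet Ω) {S : Set E3}
    (hS : MeasurableSet S) {r : ℝ} (hr : 0 < r)
    (hS' : ∀ x ∈ Ω \ S, volume (ball x r ∩ Ω) ≤ volume (ball (0 : E3) r) / 2) :
    vol (Ω \ S) ≤ 2 * r * per Ω := by
  set B := volume (ball (0 : E3) r) with hB
  have hB0 : B ≠ 0 := (measure_ball_pos volume 0 hr).ne'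
  have hBtop : B ≠ ⊤ := measure_ball_lt_top.ne
  have hhalf x (hx : x ∈ Ω \ S) : B / 2 ≤ volume (ball x r \ Ω) := by
    refine (ENNReal.add_le_add_iff_left (ENNReal.div_ne_top hBtop two_ne_zero)).1 ?_
    calc B / 2 + B / 2 = volume (ball x r ∩ Ω) + volume (ball x r \ Ω) := by
          rw [ENNReal.add_halves, measure_inter_add_sdiff _ hΩ.measurableSet, hB,
            Measure.addHaar_ball_center volume x]
      _ ≤ B / 2 + volume (ball x r \ Ω) := by gcongr; exact hS' x hx
  have hle : B / 2 * volume (Ω \ S) ≤ B * ENNReal.ofReal (r * per Ω) :=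
    calc B / 2 * volume (Ω \ S) ≤ ∫⁻ x in Ω \ S, volume (ball x r \ Ω) := by
          rw [← setLIntegral_const]
          exact setLIntegral_mono' (hΩ.measurableSet.diff hS) hhalf
      _ ≤ ∫⁻ x in Ω, volume (ball x r \ Ω) := lintegral_mono_set sdiff_subset
      _ ≤ B * ENNReal.ofReal (r * per Ω) := hΩ.setLIntegral_volume_ball_diff_le r
  have hreal := ENNReal.toReal_mono (by finiteness) hle
  rw [ENNReal.toReal_mul, ENNReal.toReal_mul, ENNReal.toReal_div, ENNReal.toReal_ofNat,
    ENNReal.toReal_ofReal (mul_nonneg hr.le per_nonneg)] at hreal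
  refine le_of_mul_le_mul_left ?_ (ENNReal.toReal_pos hB0 hBtop)
  change _ * (volume (Ω \ S)).toReal ≤ _
  linarith

end Translation

/-- Convergence of sets in `L¹_loc`. -/
def LocVolTendsto (X : ℕ → Set E3) (S : Set E3) : Prop :=
  ∀ ρ : ℝ, Tendsto (fun n => volume (symmDiff (X n) S ∩ ball 0 ρ)) atTop (𝓝 0)

section Compactness

variable {Ω X : ℕ → Set E3}

lemma exists_subseq_tendsto_volume_ball_inter (hΩ : ∀ n, IsFiniteVolume (Ω n)) {M : ℝ}
    (hM : ∀ n, vol (Ω n) ≤ M) :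
    ∃ φ : ℕ → ℕ, StrictMono φ ∧ ∀ x r, ∃ L,
      Tendsto (fun n => volume (ball x r ∩ Ω (φ n))) atTop (𝓝 L) := by
  have : Fact ((2 : ℝ≥0∞) ≠ ⊤) := ⟨by norm_num⟩
  have hfin n : volume (Ω n) ≠ ⊤ := (hΩ n).volume_lt_top.ne
  let f n : Lp ℝ 2 (volume : Measure E3) := indicatorConstLp 2 (hΩ n).measurableSet (hfin n) 1
  have hf n : StrongDual.toWeakDual (innerSL ℝ (f n))
      ∈ WeakDual.toStrongDual ⁻¹' closedBall 0 (√M) := by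
    have hnorm : ‖f n‖ ^ 2 ≤ M := by
      rw [← real_inner_self_eq_norm_sq,
        L2.real_inner_indicatorConstLp_one_indicatorConstLp_one _ _ (hfin n) (hfin n),
        inter_self]
      exact hM n
    rw [mem_preimage, mem_closedBall_zero_iff]
    exact (innerSL_apply_norm (𝕜 := ℝ) (f n)).trans_le (Real.le_sqrt_of_sq_le hnorm)
  obtain ⟨G, -, φ, hφ, hG⟩ := WeakDual.isSeqCompact_closedBall ℝ _ 0 (√M) hf
  refine ⟨φ, hφ, fun x r => ?_⟩
  have hball : volume (ball x r) ≠ ⊤ := measure_ball_lt_top.ne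
  let b : Lp ℝ 2 (volume : Measure E3) := indicatorConstLp 2 measurableSet_ball hball 1
  have hlim : Tendsto (fun n => inner ℝ (f (φ n)) b) atTop (𝓝 (G b)) :=
    ((WeakDual.eval_continuous b).tendsto G).comp hG
  refine ⟨ENNReal.ofReal (G b), (ENNReal.tendsto_ofReal hlim).congr fun n => ?_⟩
  rw [L2.real_inner_indicatorConstLp_one_indicatorConstLp_one _ _ (hfin (φ n)) hball, inter_comm]
  exact ENNReal.ofReal_toReal (measure_ne_top_of_subset inter_subset_left hball)

lemma measurable_volume_ball_inter {A : Set E3} (hA : MeasurableSet A) (r : ℝ) :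
    Measurable fun x => volume (ball x r ∩ A) := by
  have hgraph : MeasurableSet {p : E3 × E3 | p.2 ∈ ball p.1 r ∩ A} :=
    (measurableSet_lt (measurable_snd.dist measurable_fst) measurable_const).inter
      (measurable_snd hA)
  exact measurable_measure_prodMk_left hgraph

lemma volume_ball_mul_volume_diff_inter_le {A B : Set E3} (hA : IsDroplet A) (hB : IsDroplet B)
    {g : E3 → ℝ≥0∞} {r : ℝ} (hAB : ∀ x, volume (ball x r ∩ A) ≤ volume (ball x r ∩ B) + g x)
    (R : ℝ) :
    volume (ball (0 : E3) r) * volume ((A \ B) ∩ ball 0 R)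
      ≤ volume (ball (0 : E3) r) * ENNReal.ofReal (r * per A) +
        volume (ball (0 : E3) r) * ENNReal.ofReal (r * per B) + ∫⁻ x in ball 0 R, g x := by
  have hpt x : volume (ball (0 : E3) r)
      ≤ volume (ball x r \ A) + volume (ball x r ∩ B) + g x := by
    rw [← Measure.addHaar_ball_center volume x r, ← measure_inter_add_sdiff _ hA.measurableSet,
      add_assoc, add_comm]
    gcongr
    exact hAB x
  have hmA := measurable_volume_ball_inter hA.measurableSet.compl r
  have hmB := measurable_volume_ball_inter hB.measurableSet r
  calc volume (ball (0 : E3) r) * volume ((A \ B) ∩ ball 0 R)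
      = ∫⁻ _ in (A \ B) ∩ ball 0 R, volume (ball (0 : E3) r) := (setLIntegral_const _ _).symm
    _ ≤ ∫⁻ x in (A \ B) ∩ ball 0 R, (volume (ball x r \ A) + volume (ball x r ∩ B) + g x) :=
        lintegral_mono hpt
    _ = (∫⁻ x in (A \ B) ∩ ball 0 R, volume (ball x r \ A)) +
        (∫⁻ x in (A \ B) ∩ ball 0 R, volume (ball x r ∩ B)) +
          ∫⁻ x in (A \ B) ∩ ball 0 R, g x :=
         (lintegral_add_left (hmA.add hmB) _).trans
          (congrArg (· + _) (lintegral_add_left hmA _))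
    _ ≤ _ := by
        gcongr
        · exact (lintegral_mono_set fun x hx => hx.1.1).trans
            (hA.setLIntegral_volume_ball_diff_le r)
        · exact (lintegral_mono_set fun x hx => hx.1.2).trans
            (hB.setLIntegral_compl_volume_ball_inter_le r)
        · exact inter_subset_right

lemma tendsto_setLIntegral_zero_of_le_const {α : Type*} [MeasurableSpace α] {μ : Measure α}
    {s : Set α} (hs : μ s ≠ ⊤) {g : ℕ → α → ℝ≥0∞} (hg : ∀ n, Measurable (g n)) {c : ℝ≥0∞}
    (hc : c ≠ ⊤) (hgc : ∀ n x, g n x ≤ c) (hlim : ∀ x, Tendsto (fun n => g n x) atTop (𝓝 0)) :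
    Tendsto (fun n => ∫⁻ x in s, g n x ∂μ) atTop (𝓝 0) := by
  have := tendsto_lintegral_of_dominated_convergence (μ := μ.restrict s) (fun _ => c) hg
    (fun n => .of_forall (hgc n)) (by rw [setLIntegral_const]; finiteness)
    (.of_forall hlim)
  simpa only [lintegral_zero] using this

lemma exists_forall_setLIntegral_volume_ball_inter_sub_le (hΩ : ∀ n, MeasurableSet (Ω n))
    {r : ℝ} (hw : ∀ x, ∃ L, Tendsto (fun n => volume (ball x r ∩ Ω n)) atTop (𝓝 L))
    (R : ℝ) {δ : ℝ≥0∞} (hδ : 0 < δ) :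
    ∃ N, ∀ n ≥ N, ∀ k ≥ N,
      ∫⁻ x in ball 0 R, (volume (ball x r ∩ Ω n) - volume (ball x r ∩ Ω k)) ≤ δ + δ := by
  have hb : volume (ball (0 : E3) r) ≠ ⊤ := measure_ball_lt_top.ne
  choose L hL using hw
  have hm n := measurable_volume_ball_inter (hΩ n) r
  have hLm : Measurable L := measurable_of_tendsto_metrizable hm (tendsto_pi_nhds.2 hL)
  have hle n x : volume (ball x r ∩ Ω n) ≤ volume (ball (0 : E3) r) :=
    (measure_mono inter_subset_left).trans_eq (Measure.addHaar_ball_center volume x r)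
  have hLle x : L x ≤ volume (ball (0 : E3) r) := le_of_tendsto' (hL x) fun n => hle n x
  have hLtop x : L x ≠ ⊤ := ((hLle x).trans_lt hb.lt_top).ne
  have hR : volume (ball (0 : E3) R) ≠ ⊤ := measure_ball_lt_top.ne
  have hup : Tendsto (fun n => ∫⁻ x in ball 0 R, (volume (ball x r ∩ Ω n) - L x)) atTop (𝓝 0) :=
    tendsto_setLIntegral_zero_of_le_const hR (fun n => (hm n).sub hLm) hb
      (fun n x => tsub_le_self.trans (hle n x)) fun x => by
        simpa using ENNReal.Tendsto.sub (hL x) tendsto_const_nhds (.inr (hLtop x))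
  have hdown : Tendsto (fun n => ∫⁻ x in ball 0 R, (L x - volume (ball x r ∩ Ω n))) atTop (𝓝 0) :=
    tendsto_setLIntegral_zero_of_le_const hR (fun n => hLm.sub (hm n)) hb
      (fun n x => tsub_le_self.trans (hLle x)) fun x => by
        simpa using ENNReal.Tendsto.sub tendsto_const_nhds (hL x) (.inl (hLtop x))
  obtain ⟨N, hN⟩ := eventually_atTop.1
    ((hup.eventually_lt_const hδ).and (hdown.eventually_lt_const hδ))
  refine ⟨N, fun n hn k hk => ?_⟩
  calc ∫⁻ x in ball 0 R, (volume (ball x r ∩ Ω n) - volume (ball x r ∩ Ω k))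
      ≤ ∫⁻ x in ball 0 R, ((volume (ball x r ∩ Ω n) - L x) + (L x - volume (ball x r ∩ Ω k))) :=
        lintegral_mono fun x => tsub_le_tsub_add_tsub
    _ = (∫⁻ x in ball 0 R, (volume (ball x r ∩ Ω n) - L x)) +
        ∫⁻ x in ball 0 R, (L x - volume (ball x r ∩ Ω k)) :=
        lintegral_add_left ((hm n).sub hLm) _
    _ ≤ δ + δ := add_le_add (hN n hn).1.le (hN k hk).2.le

lemma exists_forall_volume_diff_inter_ball_le (hΩ : ∀ n, IsDroplet (Ω n)) {P : ℝ}
    (hP : ∀ n, per (Ω n) ≤ P)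
    (hw : ∀ x r, ∃ L, Tendsto (fun n => volume (ball x r ∩ Ω n)) atTop (𝓝 L))
    (R : ℝ) {ε : ℝ} (hε : 0 < ε) :
    ∃ N, ∀ n ≥ N, ∀ k ≥ N, volume ((Ω n \ Ω k) ∩ ball 0 R) ≤ ENNReal.ofReal ε := by
  have hP0 : 0 ≤ P := per_nonneg.trans (hP 0)
  obtain ⟨r, hr, hrP⟩ : ∃ r > 0, r * P ≤ ε / 4 := by
    refine ⟨ε / (4 * (P + 1)), by positivity, ?_⟩
    rw [div_mul_eq_mul_div, div_le_div_iff₀ (by positivity) (by positivity)]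
    nlinarith
  set b := volume (ball (0 : E3) r)
  have hb0 : b ≠ 0 := (measure_ball_pos _ _ hr).ne'
  have hb : b ≠ ⊤ := measure_ball_lt_top.ne
  obtain ⟨N, hN⟩ := exists_forall_setLIntegral_volume_ball_inter_sub_le
    (fun n => (hΩ n).measurableSet) (fun x => hw x r) R
    (ENNReal.mul_pos hb0 (ENNReal.ofReal_pos.2 (by positivity : 0 < ε / 4)).ne')
  refine ⟨N, fun n hn k hk => (ENNReal.mul_le_mul_iff_right hb0 hb).1 ?_⟩
  have hper j : r * per (Ω j) ≤ ε / 4 := (mul_le_mul_of_nonneg_left (hP j) hr.le).trans hrP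
  calc b * volume ((Ω n \ Ω k) ∩ ball 0 R)
      ≤ b * ENNReal.ofReal (r * per (Ω n)) + b * ENNReal.ofReal (r * per (Ω k)) +
        ∫⁻ x in ball 0 R, (volume (ball x r ∩ Ω n) - volume (ball x r ∩ Ω k)) :=
        volume_ball_mul_volume_diff_inter_le (hΩ n) (hΩ k) (fun x => le_add_tsub) R
    _ ≤ b * ENNReal.ofReal (ε / 4) + b * ENNReal.ofReal (ε / 4) +
        (b * ENNReal.ofReal (ε / 4) + b * ENNReal.ofReal (ε / 4)) := by
        gcongr
        exacts [hper n, hper k, hN n hn k hk]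
    _ = b * ENNReal.ofReal ε := by
        rw [← mul_add, ← mul_add, ← ENNReal.ofReal_add (by positivity) (by positivity),
          ← ENNReal.ofReal_add (by positivity) (by positivity)]
        ring_nf

lemma exists_locVolTendsto_of_summable (hX : ∀ n, MeasurableSet (X n))
    (hsum : ∑' i : ℕ, volume (symmDiff (X i) (X (i + 1)) ∩ ball 0 i) ≠ ⊤) :
    ∃ S, MeasurableSet S ∧ LocVolTendsto X S := by
  have hS : MeasurableSet (liminf X atTop) := .measurableSet_liminf hX
  refine ⟨liminf X atTop, hS, fun ρ => ?_⟩
  rw [← measure_empty (μ := volume (α := E3))]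
  refine tendsto_measure_of_ae_tendsto_indicator atTop .empty
    (fun n => ((hX n).symmDiff hS).inter measurableSet_ball) measurableSet_ball
    (measure_ball_lt_top (x := 0) (r := ρ)).ne (.of_forall fun n => inter_subset_right) ?_
  filter_upwards [ae_eventually_notMem hsum] with x hx
  obtain ⟨N, hN⟩ := eventually_atTop.1
    (hx.and ((tendsto_natCast_atTop_atTop (R := ℝ)).eventually_gt_atTop (dist x 0)))
  have hconst : ∀ n ≥ N, x ∈ X n ↔ x ∈ X N := Nat.le_induction Iff.rfl fun n hn ih => by
    have hn' : x ∉ symmDiff (X n) (X (n + 1)) := fun h => (hN n hn).1 ⟨h, (hN n hn).2⟩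
    rw [← ih]
    simp only [Set.mem_symmDiff] at hn'
    tauto
  have hlim : x ∈ liminf X atTop ↔ x ∈ X N := by
    rw [mem_liminf_iff_eventually_mem]
    refine ⟨fun h => ?_, fun h => eventually_atTop.2 ⟨N, fun n hn => (hconst n hn).2 h⟩⟩
    obtain ⟨n, hn, hxn⟩ := ((eventually_ge_atTop N).and h).exists
    exact (hconst n hn).1 hxn
  filter_upwards [eventually_ge_atTop N] with n hn
  simp [Set.mem_symmDiff, hlim, hconst n hn]

lemma exists_subseq_locVolTendsto (hΩ : ∀ n, IsDroplet (Ω n)) {P M : ℝ}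
    (hP : ∀ n, per (Ω n) ≤ P) (hM : ∀ n, vol (Ω n) ≤ M) :
    ∃ (S : Set E3) (φ : ℕ → ℕ), StrictMono φ ∧ MeasurableSet S ∧
      LocVolTendsto (fun n => Ω (φ n)) S := by
  obtain ⟨φ, hφ, hw⟩ := exists_subseq_tendsto_volume_ball_inter (fun n => (hΩ n).1) hM
  have hcauchy (i : ℕ) : ∀ᶠ N in atTop, ∀ n ≥ N, ∀ k ≥ N,
      volume ((Ω (φ n) \ Ω (φ k)) ∩ ball 0 i) ≤ ENNReal.ofReal ((1 / 2) ^ i) := by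
    obtain ⟨N, hN⟩ := exists_forall_volume_diff_inter_ball_le (fun n => hΩ (φ n))
      (fun n => hP (φ n)) hw i (ε := (1 / 2) ^ i) (by positivity)
    filter_upwards [eventually_ge_atTop N] with N' hN' n hn k hk
    exact hN n (hN'.trans hn) k (hN'.trans hk)
  obtain ⟨χ, hχ, hχφ⟩ := extraction_forall_of_eventually hcauchy
  have hstep (i : ℕ) : volume (symmDiff (Ω (φ (χ i))) (Ω (φ (χ (i + 1)))) ∩ ball 0 i)
      ≤ ENNReal.ofReal (2 * (1 / 2) ^ i) := by
    have hle := hχ.monotone (Nat.le_succ i)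
    rw [Set.symmDiff_def, union_inter_distrib_right, two_mul,
      ENNReal.ofReal_add (by positivity) (by positivity)]
    exact (measure_union_le _ _).trans
      (add_le_add (hχφ i _ le_rfl _ hle) (hχφ i _ hle _ le_rfl))
  have hsum := (summable_geometric_two.mul_left 2).tsum_ofReal_ne_top
  obtain ⟨S, hS, hlim⟩ := exists_locVolTendsto_of_summable
    (fun i => (hΩ (φ (χ i))).measurableSet) (ne_top_of_le_ne_top hsum (ENNReal.tsum_le_tsum hstep))
  exact ⟨S, φ ∘ χ, hφ.comp hχ, hS, hlim⟩

end Compactness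

section Coulomb

/-- The Coulomb kernel `1 / |x - y|`, with values in `[0, ∞]`; it is `0` on the diagonal. -/
def coulombKernel (x y : E3) : ℝ≥0∞ := ENNReal.ofReal (1 / ‖x - y‖)

/-- The Coulomb interaction of two sets, as an extended nonnegative number. -/
def lcoulomb (A B : Set E3) : ℝ≥0∞ := ∫⁻ x in A, ∫⁻ y in B, coulombKernel x y

/-- The Coulomb interaction of two sets, as a real number. It is only meaningful when `lcoulomb`
is finite, for instance for sets of finite volume. -/
def coulomb (A B : Set E3) : ℝ := (lcoulomb A B).toReal

/-- The Coulomb potential of the unit ball at its center. -/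
def unitBallPotential : ℝ≥0∞ := ∫⁻ y in ball (0 : E3) 1, coulombKernel 0 y

lemma measurable_uncurry_coulombKernel : Measurable (Function.uncurry coulombKernel) := by
  unfold coulombKernel Function.uncurry
  fun_prop

lemma measurable_coulombKernel (x : E3) : Measurable (coulombKernel x) :=
  measurable_uncurry_coulombKernel.of_uncurry_left

lemma measurable_setLIntegral_coulombKernel (B : Set E3) :
    Measurable fun x => ∫⁻ y in B, coulombKernel x y :=
  measurable_uncurry_coulombKernel.lintegral_prod_right'

lemma coulombKernel_comm (x y : E3) : coulombKernel x y = coulombKernel y x := by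
  rw [coulombKernel, norm_sub_rev, coulombKernel]

lemma coulombKernel_add_right (x y a : E3) :
    coulombKernel (x + a) (y + a) = coulombKernel x y := by
  rw [coulombKernel, add_sub_add_right_eq_sub, coulombKernel]

lemma le_coulombKernel {x y : E3} (hne : x ≠ y) {d : ℝ} (h : ‖x - y‖ ≤ d) :
    ENNReal.ofReal (1 / d) ≤ coulombKernel x y :=
  ENNReal.ofReal_le_ofReal (one_div_le_one_div_of_le (norm_pos_iff.2 (sub_ne_zero.2 hne)) h)

lemma unitBallPotential_lt_top : unitBallPotential < ⊤ := by
  have hrad : IntegrableOn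
      (fun y : ℝ => y ^ (Module.finrank ℝ E3 - 1) • (Iio (1 : ℝ)).indicator (fun s => 1 / s) y)
      (Ioi 0) := by
    have hid : IntegrableOn (fun y : ℝ => y) (Ioo 0 1) :=
      continuous_id.integrableOn_Icc.mono_set Ioo_subset_Icc_self
    rw [← Ioi_inter_Iio, inter_comm, IntegrableOn, ← Measure.restrict_restrict measurableSet_Iio,
      ← IntegrableOn, ← integrable_indicator_iff measurableSet_Iio] at hid
    refine hid.congr ((ae_restrict_iff' measurableSet_Ioi).2 (.of_forall fun y hy => ?_))
    have hy0 : y ≠ 0 := ne_of_gt hy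
    by_cases h : y ∈ Iio (1 : ℝ)
    · simp only [indicator_of_mem h, finrank_euclideanSpace_fin, smul_eq_mul]
      field_simp
    · simp only [indicator_of_notMem h, smul_zero]
  have hball := ((integrable_fun_norm_addHaar (volume : Measure E3)).2 hrad).lintegral_lt_top
  refine lt_of_eq_of_lt ?_ hball
  rw [unitBallPotential, ← lintegral_indicator measurableSet_ball]
  congr with x
  by_cases hx : x ∈ ball (0 : E3) 1
  · have hx' : ‖x‖ ∈ Iio (1 : ℝ) := by simpa using hx
    rw [indicator_of_mem hx, indicator_of_mem hx', coulombKernel, zero_sub, norm_neg]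
  · have hx' : ‖x‖ ∉ Iio (1 : ℝ) := by simpa using hx
    rw [indicator_of_notMem hx, indicator_of_notMem hx', ENNReal.ofReal_zero]

lemma setLIntegral_recenter (a : E3) (Ω : Set E3) (f : E3 → ℝ≥0∞) :
    ∫⁻ x in recenter a Ω, f (x + a) = ∫⁻ x in Ω, f x :=
  (measurePreserving_add_right volume a).setLIntegral_comp_preimage_emb
    (measurableEmbedding_addRight a) f Ω

lemma setLIntegral_ball_coulombKernel (x : E3) :
    ∫⁻ y in ball x 1, coulombKernel x y = unitBallPotential := by
  have hball : recenter x (ball x 1) = ball 0 1 := by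
    ext y
    simp [recenter]
  rw [← setLIntegral_recenter x, hball, unitBallPotential]
  refine lintegral_congr fun y => ?_
  simpa only [zero_add] using coulombKernel_add_right 0 y x

lemma setLIntegral_coulombKernel_le (x : E3) (B : Set E3) :
    ∫⁻ y in B, coulombKernel x y ≤ unitBallPotential + volume B := by
  have hfar : ∀ y ∈ B \ ball x 1, coulombKernel x y ≤ 1 := fun y hy => by
    have hxy : 1 ≤ ‖x - y‖ := by simpa [dist_comm, dist_eq_norm] using hy.2
    exact ENNReal.ofReal_le_one.2 ((div_le_one (by linarith)).2 hxy)
  calc ∫⁻ y in B, coulombKernel x y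
      = (∫⁻ y in B ∩ ball x 1, coulombKernel x y) + ∫⁻ y in B \ ball x 1, coulombKernel x y :=
        (lintegral_inter_add_sdiff _ B measurableSet_ball).symm
    _ ≤ (∫⁻ y in ball x 1, coulombKernel x y) + ∫⁻ _ in B \ ball x 1, 1 :=
        add_le_add (lintegral_mono_set inter_subset_right)
          (setLIntegral_mono measurable_const hfar)
    _ ≤ unitBallPotential + volume B := by
        rw [setLIntegral_ball_coulombKernel, setLIntegral_one]
        gcongr
        exact sdiff_subset

variable {A A' B B' Ω : Set E3}

lemma lcoulomb_le (A B : Set E3) :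
    lcoulomb A B ≤ volume A * (unitBallPotential + volume B) :=
  (lintegral_mono fun x => setLIntegral_coulombKernel_le x B).trans_eq
    (by rw [setLIntegral_const, mul_comm])

lemma lcoulomb_lt_top (hA : volume A < ⊤) (hB : volume B < ⊤) : lcoulomb A B < ⊤ :=
  (lcoulomb_le A B).trans_lt
    (ENNReal.mul_lt_top hA (ENNReal.add_lt_top.2 ⟨unitBallPotential_lt_top, hB⟩))

lemma lcoulomb_comm (A B : Set E3) : lcoulomb A B = lcoulomb B A := by
  unfold lcoulomb
  rw [lintegral_lintegral_swap measurable_uncurry_coulombKernel.aemeasurable]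
  simp_rw [coulombKernel_comm]

lemma lcoulomb_mono (hA : A ⊆ A') (hB : B ⊆ B') : lcoulomb A B ≤ lcoulomb A' B' :=
  (lintegral_mono_set hA).trans (lintegral_mono fun _ => lintegral_mono_set hB)

lemma lcoulomb_union_left (hA' : MeasurableSet A') (hd : Disjoint A A') (B : Set E3) :
    lcoulomb (A ∪ A') B = lcoulomb A B + lcoulomb A' B :=
  lintegral_union hA' hd

lemma lcoulomb_recenter (a : E3) (A B : Set E3) :
    lcoulomb (recenter a A) (recenter a B) = lcoulomb A B := by
  unfold lcoulomb
  rw [← setLIntegral_recenter a A]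
  simp_rw [← setLIntegral_recenter a B, coulombKernel_add_right]

lemma coulomb_nonneg : 0 ≤ coulomb A B := ENNReal.toReal_nonneg

lemma coulomb_comm (A B : Set E3) : coulomb A B = coulomb B A :=
  congrArg ENNReal.toReal (lcoulomb_comm A B)

lemma coulomb_mono (hA' : volume A' < ⊤) (hB' : volume B' < ⊤) (hA : A ⊆ A') (hB : B ⊆ B') :
    coulomb A B ≤ coulomb A' B' :=
  ENNReal.toReal_mono (lcoulomb_lt_top hA' hB').ne (lcoulomb_mono hA hB)

lemma coulomb_recenter (a : E3) (A B : Set E3) :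
    coulomb (recenter a A) (recenter a B) = coulomb A B :=
  congrArg ENNReal.toReal (lcoulomb_recenter a A B)

lemma coulomb_union_left (hA : IsFiniteVolume A) (hA' : IsFiniteVolume A')
    (hB : volume B < ⊤) (hd : Disjoint A A') :
    coulomb (A ∪ A') B = coulomb A B + coulomb A' B := by
  rw [coulomb, lcoulomb_union_left hA'.measurableSet hd,
    ENNReal.toReal_add (lcoulomb_lt_top hA.volume_lt_top hB).ne
      (lcoulomb_lt_top hA'.volume_lt_top hB).ne, coulomb, coulomb]

lemma coulomb_union_self (hA : IsFiniteVolume A) (hA' : IsFiniteVolume A')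
    (hd : Disjoint A A') :
    coulomb (A ∪ A') (A ∪ A') = coulomb A A + coulomb A' A' + 2 * coulomb A A' := by
  have hU : volume (A ∪ A') < ⊤ := measure_union_lt_top hA.volume_lt_top hA'.volume_lt_top
  rw [coulomb_union_left hA hA' hU hd, coulomb_comm A, coulomb_comm A',
    coulomb_union_left hA hA' hA.volume_lt_top hd, coulomb_union_left hA hA' hA'.volume_lt_top hd,
    coulomb_comm A' A]
  ring

lemma coulomb_le (hA : volume A < ⊤) (hB : volume B < ⊤) :
    coulomb A B ≤ vol A * (unitBallPotential.toReal + vol B) := by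
  unfold coulomb vol
  rw [← ENNReal.toReal_add unitBallPotential_lt_top.ne hB.ne, ← ENNReal.toReal_mul]
  exact ENNReal.toReal_mono (ENNReal.mul_lt_top hA
    (ENNReal.add_lt_top.2 ⟨unitBallPotential_lt_top, hB⟩)).ne (lcoulomb_le A B)

lemma vol_mul_vol_div_le_coulomb (hA : volume A < ⊤) (hB : volume B < ⊤) {d : ℝ}
    (hd : 0 ≤ d) (h : ∀ x ∈ A, ∀ y ∈ B, ‖x - y‖ ≤ d) : vol A * vol B / d ≤ coulomb A B := by
  have hpot x (hx : x ∈ A) : ENNReal.ofReal (1 / d) * volume B ≤ ∫⁻ y in B, coulombKernel x y := by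
    rw [← setLIntegral_const]
    refine setLIntegral_mono_ae (measurable_coulombKernel x).aemeasurable ?_
    filter_upwards [Measure.ae_ne volume x] with y hy hyB
    exact le_coulombKernel hy.symm (h x hx y hyB)
  have hle : ENNReal.ofReal (1 / d) * volume B * volume A ≤ lcoulomb A B := by
    rw [← setLIntegral_const]
    exact setLIntegral_mono (measurable_setLIntegral_coulombKernel B) hpot
  have hreal := ENNReal.toReal_mono (lcoulomb_lt_top hA hB).ne hle
  rw [ENNReal.toReal_mul, ENNReal.toReal_mul, ENNReal.toReal_ofReal (by positivity)] at hreal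
  exact (by unfold vol; ring : vol A * vol B / d = _).trans_le hreal

lemma II_eq_per_add_coulomb (h : volume Ω < ⊤) : II Ω = per Ω + 1 / 2 * coulomb Ω Ω := by
  have hpot x : ∫ y in Ω, 1 / ‖x - y‖ = (∫⁻ y in Ω, coulombKernel x y).toReal :=
    integral_eq_lintegral_of_nonneg_ae (.of_forall fun y => by positivity)
      (Measurable.aestronglyMeasurable (by fun_prop))
  simp only [II, hpot]
  rw [integral_toReal (measurable_setLIntegral_coulombKernel Ω).aemeasurable
    (.of_forall fun x => (setLIntegral_coulombKernel_le x Ω).trans_lt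
      (ENNReal.add_lt_top.2 ⟨unitBallPotential_lt_top, h⟩))]
  rfl

end Coulomb

section Excess

variable {A B Ω : Set E3}

lemma per_le_II (h : volume Ω < ⊤) : per Ω ≤ II Ω := by
  rw [II_eq_per_add_coulomb h]
  linarith [coulomb_nonneg (A := Ω) (B := Ω)]

lemma II_nonneg (h : volume Ω < ⊤) : 0 ≤ II Ω := per_nonneg.trans (per_le_II h)

lemma muStar_nonneg : 0 ≤ muStar :=
  Real.sInf_nonneg fun _ ⟨_, _, _, _, h, ht⟩ => ht ▸ div_nonneg (II_nonneg h) vol_nonneg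

lemma IsDroplet.muStar_mul_vol_le (hΩ : IsDroplet Ω) : muStar * vol Ω ≤ II Ω := by
  rcases eq_or_ne (volume Ω) 0 with h0 | h0
  · simpa [vol, h0] using II_nonneg hΩ.volume_lt_top
  · have hle : muStar ≤ II Ω / vol Ω :=
      csInf_le ⟨0, fun _ ⟨_, _, _, _, h, ht⟩ => ht ▸ div_nonneg (II_nonneg h) vol_nonneg⟩
        ⟨Ω, hΩ.measurableSet, hΩ.hasFinPer, h0.bot_lt, hΩ.volume_lt_top, rfl⟩
    exact (le_div_iff₀ (ENNReal.toReal_pos h0 hΩ.volume_lt_top.ne)).1 hle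

/-- The energy of a set in excess of the lower bound `μ* |Ω|`. Minimizers are the sets of positive
volume with zero excess. -/
def excess (Ω : Set E3) : ℝ := II Ω - muStar * vol Ω

lemma IsDroplet.excess_nonneg (hΩ : IsDroplet Ω) : 0 ≤ excess Ω :=
  sub_nonneg.2 hΩ.muStar_mul_vol_le

lemma excess_eq (h : volume Ω < ⊤) :
    excess Ω = per Ω + 1 / 2 * coulomb Ω Ω - muStar * vol Ω := by
  rw [excess, II_eq_per_add_coulomb h]

lemma vol_inter_add_vol_diff (hA : volume A < ⊤) (hB : MeasurableSet B) :
    vol (A ∩ B) + vol (A \ B) = vol A :=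
  measureReal_inter_add_sdiff hB hA.ne

lemma IsDroplet.excess_cut {H : Set E3} {q : ℝ} (hΩ : IsDroplet Ω) (hH : MeasurableSet H)
    (hcut : HasCutCost Ω H q) :
    IsDroplet (Ω ∩ H) ∧ IsDroplet (Ω \ H) ∧
      excess (Ω ∩ H) + excess (Ω \ H) + coulomb (Ω ∩ H) (Ω \ H) ≤ excess Ω + q := by
  obtain ⟨hin, hout, hper⟩ := hcut Ω Subset.rfl hΩ
  refine ⟨hin, hout, ?_⟩
  have hself := coulomb_union_self hin.1 hout.1 disjoint_sdiff_inter.symm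
  rw [inter_union_sdiff] at hself
  have hvol := vol_inter_add_vol_diff hΩ.volume_lt_top hH
  rw [excess_eq hΩ.volume_lt_top, excess_eq hin.volume_lt_top, excess_eq hout.volume_lt_top,
    hself, ← hvol]
  linarith

lemma recenter_neg_recenter (a : E3) (Ω : Set E3) : recenter (-a) (recenter a Ω) = Ω := by
  ext x
  simp [recenter]

lemma vol_recenter (a : E3) (Ω : Set E3) : vol (recenter a Ω) = vol Ω :=
  congrArg ENNReal.toReal (volume_recenter a Ω)

lemma IsTestField.comp_sub {φ : E3 → E3} (hφ : IsTestField φ) (a : E3) :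
    IsTestField fun x => φ (x - a) :=
  ⟨hφ.contDiff.comp (contDiff_id.sub contDiff_const),
    hφ.hasCompactSupport.comp_homeomorph (Homeomorph.subRight a), fun _ => hφ.norm_le_one _⟩

lemma hasFinPer_recenter_and_per_le (hΩ : HasFinPer Ω) (a : E3) :
    HasFinPer (recenter a Ω) ∧ per (recenter a Ω) ≤ per Ω := by
  refine hasFinPer_and_per_le fun φ hφ => ?_
  have hle := setIntegral_divg_le_per hΩ (hφ.comp_sub a)
  rw [← setIntegral_recenter a] at hle
  simpa only [divg, fderiv_comp_sub, add_sub_cancel_right] using hle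

lemma per_recenter (hΩ : HasFinPer Ω) (a : E3) : per (recenter a Ω) = per Ω := by
  obtain ⟨hfin, hle⟩ := hasFinPer_recenter_and_per_le hΩ a
  refine hle.antisymm ?_
  simpa only [recenter_neg_recenter] using (hasFinPer_recenter_and_per_le hfin (-a)).2

protected lemma IsDroplet.recenter (hΩ : IsDroplet Ω) (a : E3) : IsDroplet (recenter a Ω) :=
  ⟨hΩ.1.recenter a, (hasFinPer_recenter_and_per_le hΩ.hasFinPer a).1⟩

lemma IsDroplet.excess_recenter (hΩ : IsDroplet Ω) (a : E3) :
    excess (recenter a Ω) = excess Ω := by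
  rw [excess_eq (hΩ.recenter a).volume_lt_top, excess_eq hΩ.volume_lt_top,
    per_recenter hΩ.hasFinPer, coulomb_recenter, vol_recenter]

end Excess

section BallCut

/-- A smooth version of the distance to `a`, whose sublevel sets are balls around `a`. -/
def smoothDist (a x : E3) : ℝ := √(1 + ‖x - a‖ ^ 2)

variable {Ω : Set E3}

lemma norm_sub_le_smoothDist (a x : E3) : ‖x - a‖ ≤ smoothDist a x :=
  Real.le_sqrt_of_sq_le (by linarith)

lemma smoothDist_le (a x : E3) : smoothDist a x ≤ 1 + ‖x - a‖ :=
  Real.sqrt_le_iff.2 ⟨by positivity, by linarith [norm_nonneg (x - a)]⟩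

lemma contDiff_smoothDist (a : E3) : ContDiff ℝ 1 (smoothDist a) :=
  (contDiff_const.add ((contDiff_id.sub contDiff_const).norm_sq ℝ)).sqrt fun _ => by positivity

lemma lipschitzWith_smoothDist (a : E3) : LipschitzWith 1 (smoothDist a) := by
  have heq x : smoothDist a x = ‖WithLp.toLp 2 ((1 : ℝ), x - a)‖ := by
    simp [WithLp.prod_norm_eq_of_L2, smoothDist]
  refine LipschitzWith.of_dist_le_mul fun x y => ?_
  rw [heq, heq]
  refine (dist_norm_norm_le _ _).trans_eq ?_
  simp [← WithLp.toLp_sub, dist_eq_norm]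

lemma setOf_smoothDist_lt (a : E3) {t : ℝ} (ht : 1 ≤ t) :
    {x | smoothDist a x < t} = ball a √(t ^ 2 - 1) := by
  ext x
  rw [mem_ofPred_eq, smoothDist, Real.sqrt_lt' (by linarith), mem_ball, dist_eq_norm,
    Real.lt_sqrt (norm_nonneg _), lt_sub_iff_add_lt']

lemma exists_forall_hasCutCost_ball {ι : Type*} [Countable ι] {Ω : ι → Set E3}
    (hΩ : ∀ i, IsFiniteVolume (Ω i)) (a : ι → E3) {r₀ r₁ : ℝ} (h₀ : 0 ≤ r₀) (h₁ : r₀ + 1 < r₁)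
    {c v : ι → ℝ} {V : ℝ} (hc : ∀ i, 0 < c i)
    (hv : ∀ i, c i * vol (Ω i ∩ (ball (a i) r₁ \ ball (a i) r₀)) ≤ v i) (hV : HasSum v V) :
    ∃ r ∈ Icc r₀ r₁, ∀ i, HasCutCost (Ω i) (ball (a i) r)
      (2 * transitionSlope * V / (r₁ - (r₀ + 1)) / c i) := by
  have hslab i : c i * vol (Ω i ∩ {x | smoothDist (a i) x ∈ Ico (r₀ + 1) r₁}) ≤ v i := by
    refine (mul_le_mul_of_nonneg_left (vol_mono (inter_subset_inter_right _ fun x hx => ?_)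
      ((hΩ i).inter (measurableSet_ball.diff measurableSet_ball)).volume_lt_top)
      (hc i).le).trans (hv i)
    rw [Set.mem_sdiff, mem_ball, mem_ball, dist_eq_norm]
    exact ⟨(norm_sub_le_smoothDist _ x).trans_lt hx.2, by linarith [smoothDist_le (a i) x, hx.1]⟩
  obtain ⟨t, ⟨ht₀, ht₁⟩, hcut⟩ := exists_forall_hasCutCost (fun i => contDiff_smoothDist (a i))
    (fun i => lipschitzWith_smoothDist (a i)) hΩ h₁ hc hslab hV
  simp only [setOf_smoothDist_lt _ (by linarith : 1 ≤ t)] at hcut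
  exact ⟨√(t ^ 2 - 1), ⟨Real.le_sqrt_of_sq_le (by nlinarith),
    Real.sqrt_le_iff.2 ⟨by linarith, by nlinarith⟩⟩, hcut⟩

lemma exists_hasCutCost_ball (hΩ : IsFiniteVolume Ω) (a : E3) {r₀ r₁ : ℝ} (h₀ : 0 ≤ r₀)
    (h₁ : r₀ + 1 < r₁) :
    ∃ r ∈ Icc r₀ r₁, HasCutCost Ω (ball a r)
      (2 * transitionSlope * vol (Ω ∩ (ball a r₁ \ ball a r₀)) / (r₁ - (r₀ + 1))) := by
  obtain ⟨r, hr, hcut⟩ := exists_forall_hasCutCost_ball (ι := Unit) (fun _ => hΩ) (fun _ => a) h₀ h₁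
    (fun _ => one_pos) (fun _ => (one_mul _).le) (hasSum_unique _)
  exact ⟨r, hr, by simpa only [div_one] using hcut ()⟩

end BallCut

section SmallVolume

/-- The volume of a ball of radius `r`. -/
def ballVol (r : ℝ) : ℝ := vol (ball (0 : E3) r)

variable {Ω : Set E3} {r : ℝ}

lemma ballVol_pos (hr : 0 < r) : 0 < ballVol r :=
  ENNReal.toReal_pos (measure_ball_pos volume 0 hr).ne' measure_ball_lt_top.ne

lemma ballVol_half (r : ℝ) : ballVol (r / 2) = ballVol r / 8 := by
  rw [ballVol, vol, div_eq_inv_mul,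
    Measure.addHaar_ball_mul volume (0 : E3) (inv_nonneg.2 zero_le_two), ENNReal.toReal_mul,
    finrank_euclideanSpace, Fintype.card_fin, ENNReal.toReal_ofReal (by norm_num), ballVol, vol]
  ring

lemma volume_le_half_ball_of_vol_le (hΩ : volume Ω < ⊤) (h : vol Ω ≤ ballVol r / 2) :
    volume Ω ≤ volume (ball (0 : E3) r) / 2 := by
  have hball : volume (ball (0 : E3) r) / 2 ≠ ⊤ :=
    ENNReal.div_ne_top measure_ball_lt_top.ne two_ne_zero
  rwa [← ENNReal.toReal_le_toReal hΩ.ne hball, ENNReal.toReal_div, ENNReal.toReal_ofNat]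

lemma IsDroplet.vol_le_per_of_vol_le (hΩ : IsDroplet Ω) (hr : 0 < r)
    (hv : vol Ω ≤ ballVol r / 2) : vol Ω ≤ 2 * r * per Ω := by
  simpa only [sdiff_empty] using hΩ.vol_diff_le_of_volume_ball_inter_le .empty hr fun x _ =>
    (measure_mono inter_subset_right).trans (volume_le_half_ball_of_vol_le hΩ.volume_lt_top hv)

lemma IsDroplet.vol_le_excess_of_vol_le (hΩ : IsDroplet Ω) (hr : 0 < r)
    (hμ : 4 * r * muStar ≤ 1) (hv : vol Ω ≤ ballVol r / 2) : vol Ω ≤ 4 * r * excess Ω := by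
  have hper := hΩ.vol_le_per_of_vol_le hr hv
  have hcoul : 0 ≤ r * coulomb Ω Ω := mul_nonneg hr.le coulomb_nonneg
  have hμv := mul_le_mul_of_nonneg_right hμ (vol_nonneg (Ω := Ω))
  rw [excess_eq hΩ.volume_lt_top]
  linarith

/-- A radius `r` for which `4 r μ* ≤ 1`, so that the perimeter of a set occupying less than half
of a ball of radius `r` dominates the term `μ* |Ω|` of the excess. -/
def criticalRadius : ℝ := 1 / (4 * (muStar + 1))

lemma criticalRadius_pos : 0 < criticalRadius := by
  have := muStar_nonneg
  unfold criticalRadius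
  positivity

lemma four_mul_criticalRadius_mul_muStar_le : 4 * criticalRadius * muStar ≤ 1 := by
  have := muStar_nonneg
  rw [criticalRadius, mul_one_div, div_mul_eq_mul_div, div_le_one (by positivity)]
  linarith

end SmallVolume

section Minimizer

variable {Ω : Set E3}

lemma IsMinimizer.isDroplet (h : IsMinimizer Ω) : IsDroplet Ω := ⟨⟨h.1, h.2.2.2.1⟩, h.2.1⟩

lemma IsMinimizer.excess_eq_zero (h : IsMinimizer Ω) : excess Ω = 0 :=
  sub_eq_zero.2 h.2.2.2.2

lemma IsMinimizer.vol_pos (h : IsMinimizer Ω) : 0 < vol Ω :=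
  ENNReal.toReal_pos h.2.2.1.ne' h.isDroplet.volume_lt_top.ne

lemma IsDroplet.isMinimizer (hΩ : IsDroplet Ω) (hv : 0 < volume Ω) (he : excess Ω ≤ 0) :
    IsMinimizer Ω :=
  ⟨hΩ.measurableSet, hΩ.hasFinPer, hv, hΩ.volume_lt_top,
    (sub_nonpos.1 he).antisymm hΩ.muStar_mul_vol_le⟩

lemma IsMinimizer.ballVol_le_vol (h : IsMinimizer Ω) : ballVol criticalRadius / 2 ≤ vol Ω := by
  by_contra! hlt
  have hle := h.isDroplet.vol_le_excess_of_vol_le criticalRadius_pos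
    four_mul_criticalRadius_mul_muStar_le hlt.le
  rw [h.excess_eq_zero, mul_zero] at hle
  exact hle.not_gt h.vol_pos

lemma IsFiniteVolume.tendsto_vol_diff_ball (hΩ : IsFiniteVolume Ω) :
    Tendsto (fun n : ℕ => vol (Ω \ ball 0 (n : ℝ))) atTop (𝓝 0) := by
  have hempty : ⋂ n : ℕ, Ω \ ball (0 : E3) (n : ℝ) = ∅ := by
    rw [← sdiff_iUnion, iUnion_ball_nat, sdiff_univ]
  have hlim := tendsto_measure_iInter_atTop (μ := (volume : Measure E3))
    (s := fun n : ℕ => Ω \ ball 0 (n : ℝ))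
    (fun n => (hΩ.diff measurableSet_ball).measurableSet.nullMeasurableSet)
    (fun m n hmn => sdiff_subset_sdiff_right (ball_subset_ball (Nat.cast_le.2 hmn)))
    ⟨0, (hΩ.diff measurableSet_ball).volume_lt_top.ne⟩
  rw [hempty, measure_empty] at hlim
  exact (ENNReal.tendsto_toReal ENNReal.zero_ne_top).comp hlim

variable {u : E3 → ℝ} {T r : ℝ}

-- Cutting at a good level of the slab of width `64 κ r` produces an outer part whose excess is at
-- most `|Ω \ {u < T}| / (32 r)`; the small-volume inequality then gains a factor `1 / 8`.
lemma IsDroplet.vol_diff_sublevel_le (hΩ : IsDroplet Ω) (he : excess Ω = 0)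
    (hu : ContDiff ℝ 1 u) (hLip : LipschitzWith 1 u) (hr : 0 < r) (hμ : 4 * r * muStar ≤ 1)
    (hT : vol (Ω \ {x | u x < T}) ≤ ballVol r / 2) :
    vol (Ω \ {x | u x < T + 64 * transitionSlope * r}) ≤ ballVol (r / 2) / 2 := by
  have hκ := transitionSlope_pos
  set T' := T + 64 * transitionSlope * r with hT'
  obtain ⟨t, ⟨hTt, htT'⟩, hcut⟩ := exists_hasCutCost hu hLip hΩ.1 (a := T) (b := T')
    (lt_add_of_pos_right _ (by positivity))
  have hmeas (s : ℝ) : MeasurableSet {x | u x < s} :=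
    measurableSet_lt hu.continuous.measurable measurable_const
  have hmono {s s' : ℝ} (hss : s ≤ s') : vol (Ω \ {x | u x < s'}) ≤ vol (Ω \ {x | u x < s}) :=
    vol_mono (sdiff_subset_sdiff_right fun x hx => lt_of_lt_of_le hx hss)
      (hΩ.1.diff (hmeas s)).volume_lt_top
  obtain ⟨hin, hout, hexc⟩ := hΩ.excess_cut (hmeas t) hcut
  have hslab : vol (Ω ∩ {x | u x ∈ Ico T T'}) ≤ vol (Ω \ {x | u x < T}) :=
    vol_mono (fun x hx => ⟨hx.1, not_lt.2 hx.2.1⟩) (hΩ.1.diff (hmeas T)).volume_lt_top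
  have hcost : 2 * transitionSlope * vol (Ω ∩ {x | u x ∈ Ico T T'}) / (T' - T)
      ≤ vol (Ω \ {x | u x < T}) / (32 * r) := by
    rw [hT', add_sub_cancel_left, div_le_div_iff₀ (by positivity) (by positivity)]
    linarith [mul_le_mul_of_nonneg_left hslab (show 0 ≤ 64 * transitionSlope * r by positivity)]
  have hexcess : 4 * r * excess (Ω \ {x | u x < t}) ≤ vol (Ω \ {x | u x < T}) / 8 :=
    calc 4 * r * excess (Ω \ {x | u x < t})
        ≤ 4 * r * (vol (Ω \ {x | u x < T}) / (32 * r)) := by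
          have := hin.excess_nonneg
          have := coulomb_nonneg (A := Ω ∩ {x | u x < t}) (B := Ω \ {x | u x < t})
          gcongr
          linarith
      _ = vol (Ω \ {x | u x < T}) / 8 := by field_simp; ring
  have hsmall := hout.vol_le_excess_of_vol_le hr hμ ((hmono hTt).trans hT)
  rw [ballVol_half]
  linarith [hmono htT']

lemma ballVol_div_two_pow (r : ℝ) (k : ℕ) : ballVol (r / 2 ^ k) = ballVol r * (1 / 8) ^ k := by
  induction k with
  | zero => simp
  | succ k ih => rw [pow_succ, ← div_div, ballVol_half, ih]; ring

lemma IsDroplet.vol_diff_sublevel_iterate_le (hΩ : IsDroplet Ω) (he : excess Ω = 0)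
    (hu : ContDiff ℝ 1 u) (hLip : LipschitzWith 1 u) (hr : 0 < r) (hμ : 4 * r * muStar ≤ 1)
    (hT : vol (Ω \ {x | u x < T}) ≤ ballVol r / 2) (k : ℕ) :
    vol (Ω \ {x | u x < T + 128 * transitionSlope * r * (1 - 1 / 2 ^ k)})
      ≤ ballVol (r / 2 ^ k) / 2 := by
  induction k with
  | zero => simpa using hT
  | succ k ih =>
    have hμk : 4 * (r / 2 ^ k) * muStar ≤ 1 := by
      have := muStar_nonneg
      have hle : r / 2 ^ k ≤ r := div_le_self hr.le (one_le_pow₀ one_le_two)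
      exact le_trans (by gcongr) hμ
    have hstep := hΩ.vol_diff_sublevel_le he hu hLip (by positivity) hμk ih
    rw [div_div, ← pow_succ] at hstep
    convert hstep using 6
    field_simp
    ring

lemma IsDroplet.volume_diff_sublevel_eq_zero (hΩ : IsDroplet Ω) (he : excess Ω = 0)
    (hu : ContDiff ℝ 1 u) (hLip : LipschitzWith 1 u) (hr : 0 < r) (hμ : 4 * r * muStar ≤ 1)
    (hT : vol (Ω \ {x | u x < T}) ≤ ballVol r / 2) :
    volume (Ω \ {x | u x < T + 128 * transitionSlope * r}) = 0 := by
  have hfin (s : ℝ) : volume (Ω \ {x | u x < s}) < ⊤ :=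
    (hΩ.1.diff (measurableSet_lt hu.continuous.measurable measurable_const)).volume_lt_top
  have hlim : Tendsto (fun k : ℕ => ballVol (r / 2 ^ k) / 2) atTop (𝓝 0) := by
    simp only [ballVol_div_two_pow]
    simpa using ((tendsto_pow_atTop_nhds_zero_of_lt_one (r := (1 / 8 : ℝ)) (by norm_num)
      (by norm_num)).const_mul (ballVol r)).div_const 2
  have hle : vol (Ω \ {x | u x < T + 128 * transitionSlope * r}) ≤ 0 := by
    refine ge_of_tendsto' hlim fun k => le_trans ?_
      (hΩ.vol_diff_sublevel_iterate_le he hu hLip hr hμ hT k)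
    have hκ := transitionSlope_nonneg
    have hlevel : T + 128 * transitionSlope * r * (1 - 1 / 2 ^ k)
        ≤ T + 128 * transitionSlope * r := by
      have hk : 0 ≤ 128 * transitionSlope * r * (1 / 2 ^ k) := by positivity
      linarith
    exact vol_mono (sdiff_subset_sdiff_right fun x hx => lt_of_lt_of_le hx hlevel) (hfin _)
  exact ((ENNReal.toReal_eq_zero_iff _).1 (hle.antisymm vol_nonneg)).resolve_right (hfin _).ne

lemma IsMinimizer.exists_volume_diff_ball_eq_zero (h : IsMinimizer Ω) :
    ∃ R > 0, volume (Ω \ ball 0 R) = 0 := by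
  obtain ⟨n, hn⟩ := (h.isDroplet.1.tendsto_vol_diff_ball.eventually_le_const
    (half_pos (ballVol_pos criticalRadius_pos))).exists
  have hT : vol (Ω \ {x | smoothDist 0 x < n + 1}) ≤ ballVol criticalRadius / 2 := by
    refine (vol_mono (sdiff_subset_sdiff_right fun x hx => ?_)
      (h.isDroplet.1.diff measurableSet_ball).volume_lt_top).trans hn
    rw [mem_ball, dist_eq_norm] at hx
    exact (smoothDist_le 0 x).trans_lt (by linarith)
  have hκ := transitionSlope_pos
  have hr := criticalRadius_pos
  refine ⟨n + 1 + 128 * transitionSlope * criticalRadius, by positivity,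
    measure_mono_null (sdiff_subset_sdiff_right fun x hx => ?_)
    (h.isDroplet.volume_diff_sublevel_eq_zero h.excess_eq_zero (contDiff_smoothDist 0)
      (lipschitzWith_smoothDist 0) hr four_mul_criticalRadius_mul_muStar_le hT)⟩
  rw [mem_ball, dist_eq_norm]
  exact (norm_sub_le_smoothDist 0 x).trans_lt hx

end Minimizer

section Slicing

lemma lintegral_measure_setOf_lt_and_le {X : Type*} [MeasurableSpace X] (ν : Measure X) [SFinite ν]
    {f g : X → ℝ} (hf : Measurable f) (hg : Measurable g) :
    ∫⁻ t, ν {p | f p < t ∧ t ≤ g p} = ∫⁻ p, ENNReal.ofReal (g p - f p) ∂ν := by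
  have hE : MeasurableSet {q : ℝ × X | f q.2 < q.1 ∧ q.1 ≤ g q.2} :=
    (measurableSet_lt (hf.comp measurable_snd) measurable_fst).inter
      (measurableSet_le measurable_fst (hg.comp measurable_snd))
  calc ∫⁻ t, ν {p | f p < t ∧ t ≤ g p}
      = ((volume : Measure ℝ).prod ν) {q | f q.2 < q.1 ∧ q.1 ≤ g q.2} :=
        (Measure.prod_apply hE).symm
    _ = ∫⁻ p, volume (Ioc (f p) (g p)) ∂ν := Measure.prod_apply_symm hE
    _ = ∫⁻ p, ENNReal.ofReal (g p - f p) ∂ν := by simp only [Real.volume_Ioc]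

lemma lintegral_measure_setOf_mem_Ico {X : Type*} [MeasurableSpace X] (ν : Measure X) [SFinite ν]
    {f : X → ℝ} (hf : Measurable f) : ∫⁻ t, ν {p | f p ∈ Ico t (t + 1)} = ν univ := by
  have hset t : {p | f p ∈ Ico t (t + 1)} = {p | f p - 1 < t ∧ t ≤ f p} := by
    ext p
    rw [mem_ofPred_eq, mem_Ico, and_comm, mem_ofPred_eq, sub_lt_iff_lt_add]
  simp only [hset, lintegral_measure_setOf_lt_and_le ν (hf.sub_const 1) hf, sub_sub_cancel,
    ENNReal.ofReal_one, lintegral_one]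

/-- The measure on pairs of points with the Coulomb kernel as its density. -/
def coulombMeasure : Measure (E3 × E3) :=
  (volume.prod volume).withDensity (Function.uncurry coulombKernel)

instance : SFinite coulombMeasure := by
  unfold coulombMeasure
  infer_instance

lemma coulombMeasure_prod {A B : Set E3} (hA : MeasurableSet A) (hB : MeasurableSet B) :
    coulombMeasure (A ×ˢ B) = lcoulomb A B := by
  rw [coulombMeasure, withDensity_apply _ (hA.prod hB), ← Measure.prod_restrict,
    lintegral_prod _ measurable_uncurry_coulombKernel.aemeasurable]
  rfl

end Slicing

section MassBound

variable {Ω : Set E3} {u : E3 → ℝ}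

lemma IsMinimizer.lcoulomb_sublevel_superlevel_le (h : IsMinimizer Ω) (hu : ContDiff ℝ 1 u)
    (hLip : LipschitzWith 1 u) (t : ℝ) :
    lcoulomb (Ω ∩ {x | u x < t}) (Ω ∩ {x | t + 1 ≤ u x})
      ≤ ENNReal.ofReal (2 * transitionSlope) * volume (Ω ∩ {x | u x ∈ Ico t (t + 1)}) := by
  obtain ⟨s, ⟨hts, hst⟩, hcut⟩ := exists_hasCutCost hu hLip h.isDroplet.1 (lt_add_one t)
  rw [add_sub_cancel_left, div_one] at hcut
  obtain ⟨hin, hout, hexc⟩ := h.isDroplet.excess_cut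
    (measurableSet_lt hu.continuous.measurable measurable_const) hcut
  calc lcoulomb (Ω ∩ {x | u x < t}) (Ω ∩ {x | t + 1 ≤ u x})
      ≤ lcoulomb (Ω ∩ {x | u x < s}) (Ω \ {x | u x < s}) :=
        lcoulomb_mono (fun x hx => ⟨hx.1, lt_of_lt_of_le hx.2 hts⟩)
          fun x hx => ⟨hx.1, not_lt.2 (hst.trans hx.2)⟩
    _ = ENNReal.ofReal (coulomb (Ω ∩ {x | u x < s}) (Ω \ {x | u x < s})) :=
        (ENNReal.ofReal_toReal (lcoulomb_lt_top hin.volume_lt_top hout.volume_lt_top).ne).symm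
    _ ≤ ENNReal.ofReal (2 * transitionSlope * vol (Ω ∩ {x | u x ∈ Ico t (t + 1)})) := by
        refine ENNReal.ofReal_le_ofReal ?_
        linarith [h.excess_eq_zero, hin.excess_nonneg, hout.excess_nonneg]
    _ = ENNReal.ofReal (2 * transitionSlope) * volume (Ω ∩ {x | u x ∈ Ico t (t + 1)}) := by
        have hfin : IsFiniteVolume (Ω ∩ {x | u x ∈ Ico t (t + 1)}) :=
          h.isDroplet.1.inter (hu.continuous.measurable measurableSet_Ico)
        rw [ENNReal.ofReal_mul (mul_nonneg zero_le_two transitionSlope_nonneg), vol,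
          ENNReal.ofReal_toReal hfin.volume_lt_top.ne]

lemma IsMinimizer.lintegral_ofReal_sub_le (h : IsMinimizer Ω) (hu : ContDiff ℝ 1 u)
    (hLip : LipschitzWith 1 u) :
    ∫⁻ p in Ω ×ˢ Ω, ENNReal.ofReal (u p.2 - u p.1 - 1) ∂coulombMeasure
      ≤ ENNReal.ofReal (2 * transitionSlope) * volume Ω := by
  have hum : Measurable u := hu.continuous.measurable
  have hΩ := h.isDroplet.measurableSet
  have hslice t : coulombMeasure.restrict (Ω ×ˢ Ω) {p | u p.1 < t ∧ t ≤ u p.2 - 1}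
      = lcoulomb (Ω ∩ {x | u x < t}) (Ω ∩ {x | t + 1 ≤ u x}) := by
    rw [← coulombMeasure_prod (hΩ.inter (measurableSet_lt hum measurable_const))
      (hΩ.inter (measurableSet_le measurable_const hum)), Measure.restrict_apply' (hΩ.prod hΩ),
      ← prod_inter_prod, inter_comm]
    simp only [← le_sub_iff_add_le]
    rfl
  calc ∫⁻ p in Ω ×ˢ Ω, ENNReal.ofReal (u p.2 - u p.1 - 1) ∂coulombMeasure
      = ∫⁻ t, lcoulomb (Ω ∩ {x | u x < t}) (Ω ∩ {x | t + 1 ≤ u x}) := by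
        simp only [← hslice, sub_right_comm _ _ (1 : ℝ)]
        exact (lintegral_measure_setOf_lt_and_le (coulombMeasure.restrict (Ω ×ˢ Ω))
          (hum.comp measurable_fst) ((hum.comp measurable_snd).sub_const 1)).symm
    _ ≤ ∫⁻ t, ENNReal.ofReal (2 * transitionSlope) * volume.restrict Ω {x | u x ∈ Ico t (t + 1)} :=
        lintegral_mono fun t => (h.lcoulomb_sublevel_superlevel_le hu hLip t).trans_eq <| by
          rw [Measure.restrict_apply' hΩ, inter_comm]
    _ = ENNReal.ofReal (2 * transitionSlope) * volume Ω := by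
        rw [lintegral_const_mul' _ _ ENNReal.ofReal_ne_top,
          lintegral_measure_setOf_mem_Ico _ hum, Measure.restrict_apply_univ]

lemma IsMinimizer.lintegral_ofReal_abs_sub_le (h : IsMinimizer Ω) (hu : ContDiff ℝ 1 u)
    (hLip : LipschitzWith 1 u) :
    ∫⁻ p in Ω ×ˢ Ω, ENNReal.ofReal (|u p.2 - u p.1| - 1) ∂coulombMeasure
      ≤ ENNReal.ofReal (4 * transitionSlope) * volume Ω := by
  have hum : Measurable u := hu.continuous.measurable
  have habs (s : ℝ) :
      ENNReal.ofReal (|s| - 1) ≤ ENNReal.ofReal (s - 1) + ENNReal.ofReal (-s - 1) := by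
    rcases abs_choice s with hs | hs <;> rw [hs]
    exacts [le_self_add, le_add_self]
  have hneg := h.lintegral_ofReal_sub_le hu.neg (lipschitzWith_neg_iff.2 hLip)
  calc ∫⁻ p in Ω ×ˢ Ω, ENNReal.ofReal (|u p.2 - u p.1| - 1) ∂coulombMeasure
      ≤ ∫⁻ p in Ω ×ˢ Ω, (ENNReal.ofReal (u p.2 - u p.1 - 1)
          + ENNReal.ofReal (-(u p.2 - u p.1) - 1)) ∂coulombMeasure :=
        lintegral_mono fun p => habs _
    _ ≤ ENNReal.ofReal (2 * transitionSlope) * volume Ω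
          + ENNReal.ofReal (2 * transitionSlope) * volume Ω := by
        rw [lintegral_add_left (by fun_prop)]
        gcongr
        · exact h.lintegral_ofReal_sub_le hu hLip
        · simpa only [Pi.neg_apply, neg_sub, sub_neg_eq_add, neg_add_eq_sub] using hneg
    _ = ENNReal.ofReal (4 * transitionSlope) * volume Ω := by
        have := transitionSlope_nonneg
        rw [← add_mul, ← ENNReal.ofReal_add (by positivity) (by positivity)]
        ring_nf

lemma norm_le_sum_abs (x : E3) : ‖x‖ ≤ ∑ i, |x i| := by
  rw [EuclideanSpace.norm_eq, Real.sqrt_le_left (Finset.sum_nonneg fun i _ => abs_nonneg _)]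
  exact Finset.sum_sq_le_sq_sum_of_nonneg fun i _ => norm_nonneg _

lemma one_le_indicator_add_sum_mul_coulombKernel (p : E3 × E3) :
    1 ≤ {p : E3 × E3 | p.2 ∈ ball p.1 6}.indicator 1 p
      + 2 * ∑ i, coulombKernel p.1 p.2 * ENNReal.ofReal (|p.2 i - p.1 i| - 1) := by
  by_cases hp : p.2 ∈ ball p.1 6
  · rw [indicator_of_mem (by exact hp)]
    exact le_self_add
  rw [mem_ball, dist_eq_norm, not_lt, norm_sub_rev] at hp
  have hsum : ∑ _ : Fin 3, (1 : ℝ) = 3 := by simp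
  have hhalf : 1 / 2 ≤ 1 / ‖p.1 - p.2‖ * ∑ i, (|p.2 i - p.1 i| - 1) := by
    have hnorm := norm_le_sum_abs (p.2 - p.1)
    rw [norm_sub_rev] at hnorm
    simp only [PiLp.sub_apply] at hnorm
    rw [one_div_mul_eq_div, le_div_iff₀ (by linarith), Finset.sum_sub_distrib]
    linarith [hsum]
  calc (1 : ℝ≥0∞) = 2 * ENNReal.ofReal (1 / 2) := by
        rw [← ENNReal.ofReal_ofNat 2, ← ENNReal.ofReal_mul zero_le_two]
        norm_num
    _ ≤ 2 * (coulombKernel p.1 p.2 * ∑ i, ENNReal.ofReal (|p.2 i - p.1 i| - 1)) := by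
        gcongr
        refine (ENNReal.ofReal_le_ofReal hhalf).trans ?_
        rw [ENNReal.ofReal_mul (by positivity)]
        refine mul_le_mul_right ?_ _
        exact Finset.le_sum_of_subadditive _ ENNReal.ofReal_zero.le
          (fun _ _ => ENNReal.ofReal_add_le) _ _
    _ ≤ _ := by
        rw [Finset.mul_sum]
        exact le_add_self

lemma measurableSet_setOf_mem_ball (r : ℝ) : MeasurableSet {p : E3 × E3 | p.2 ∈ ball p.1 r} :=
  measurableSet_lt (measurable_snd.dist measurable_fst) measurable_const

lemma lintegral_indicator_setOf_mem_ball_le (r : ℝ) :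
    ∫⁻ p in Ω ×ˢ Ω, {p : E3 × E3 | p.2 ∈ ball p.1 r}.indicator 1 p ∂volume.prod volume
      ≤ volume (ball (0 : E3) r) * volume Ω := by
  rw [lintegral_indicator_one (measurableSet_setOf_mem_ball r), ← Measure.prod_restrict,
    Measure.prod_apply (measurableSet_setOf_mem_ball r), ← setLIntegral_const]
  refine lintegral_mono fun x => ?_
  rw [← Measure.addHaar_ball_center volume x]
  exact Measure.restrict_apply_le _ _

lemma IsMinimizer.lintegral_coulombKernel_mul_ofReal_abs_coord_le (h : IsMinimizer Ω)
    (i : Fin 3) :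
    ∫⁻ p in Ω ×ˢ Ω, coulombKernel p.1 p.2 * ENNReal.ofReal (|p.2 i - p.1 i| - 1)
        ∂volume.prod volume
      ≤ ENNReal.ofReal (4 * transitionSlope) * volume Ω := by
  have hΩ := h.isDroplet.measurableSet
  have hLip : LipschitzWith 1 fun x : E3 => x i :=
    LipschitzWith.of_dist_le_mul fun x y => by
      rw [NNReal.coe_one, one_mul, dist_eq_norm, dist_eq_norm]
      exact PiLp.norm_apply_le (x - y) i
  refine le_trans ?_ (h.lintegral_ofReal_abs_sub_le
    (EuclideanSpace.proj (𝕜 := ℝ) i).contDiff hLip)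
  rw [coulombMeasure, restrict_withDensity (hΩ.prod hΩ),
    lintegral_withDensity_eq_lintegral_mul _ measurable_uncurry_coulombKernel (by fun_prop)]
  rfl

lemma IsMinimizer.vol_le (h : IsMinimizer Ω) : vol Ω ≤ ballVol 6 + 24 * transitionSlope := by
  have hκ := transitionSlope_nonneg
  have hker : Measurable fun p : E3 × E3 => coulombKernel p.1 p.2 :=
    measurable_uncurry_coulombKernel
  have hsq : volume Ω * volume Ω
      ≤ (volume (ball (0 : E3) 6) + ENNReal.ofReal (24 * transitionSlope)) * volume Ω :=
    calc volume Ω * volume Ω = ∫⁻ _ in Ω ×ˢ Ω, 1 ∂(volume : Measure E3).prod volume := by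
          rw [setLIntegral_one, Measure.prod_prod]
      _ ≤ ∫⁻ p in Ω ×ˢ Ω, ({p : E3 × E3 | p.2 ∈ ball p.1 6}.indicator 1 p
            + 2 * ∑ i, coulombKernel p.1 p.2 * ENNReal.ofReal (|p.2 i - p.1 i| - 1))
              ∂volume.prod volume :=
          lintegral_mono one_le_indicator_add_sum_mul_coulombKernel
      _ ≤ volume (ball (0 : E3) 6) * volume Ω
            + 2 * ∑ _ : Fin 3, ENNReal.ofReal (4 * transitionSlope) * volume Ω := by
          rw [lintegral_add_left (measurable_one.indicator (measurableSet_setOf_mem_ball 6)),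
            lintegral_const_mul' _ _ ENNReal.ofNat_ne_top, lintegral_finsetSum _ fun i _ => by
              fun_prop]
          gcongr with i
          · exact lintegral_indicator_setOf_mem_ball_le 6
          · exact h.lintegral_coulombKernel_mul_ofReal_abs_coord_le i
      _ = (volume (ball (0 : E3) 6) + ENNReal.ofReal (24 * transitionSlope)) * volume Ω := by
          rw [show 24 * transitionSlope = 6 * (4 * transitionSlope) by ring,
            ENNReal.ofReal_mul (p := 6) (by norm_num), ENNReal.ofReal_ofNat, Finset.sum_const,
            Finset.card_univ, Fintype.card_fin, nsmul_eq_mul]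
          push_cast
          ring
  have hle := ENNReal.toReal_mono (by finiteness)
    ((ENNReal.mul_le_mul_iff_left h.2.2.1.ne' h.isDroplet.volume_lt_top.ne).1 hsq)
  rwa [ENNReal.toReal_add (by finiteness) (by finiteness),
    ENNReal.toReal_ofReal (by positivity)] at hle

lemma IsMinimizer.vol_mem_Icc (h : IsMinimizer Ω) : vol Ω ∈ Icc mStarStar mStar := by
  refine ⟨csInf_le ⟨0, ?_⟩ ⟨Ω, h, rfl⟩, le_csSup ⟨ballVol 6 + 24 * transitionSlope, ?_⟩ ⟨Ω, h, rfl⟩⟩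
  · rintro _ ⟨S, -, rfl⟩
    exact vol_nonneg
  · rintro _ ⟨S, hS, rfl⟩
    exact hS.vol_le

end MassBound

section Limits

variable {A B S : Set E3} {X Y : ℕ → Set E3}

lemma coulomb_self_le (hA : IsFiniteVolume A) (hB : IsFiniteVolume B) :
    coulomb B B
      ≤ coulomb A A + 2 * (vol (B \ A) * (unitBallPotential.toReal + vol B)) := by
  have hinter := hB.inter hA.measurableSet
  have hdiff := hB.diff hA.measurableSet
  have hd : Disjoint (B ∩ A) (B \ A) := disjoint_sdiff_inter.symm
  have hself := coulomb_union_self hinter hdiff hd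
  have hcross := coulomb_union_left hinter hdiff hdiff.volume_lt_top hd
  rw [inter_union_sdiff] at hself hcross
  have hmono : coulomb (B ∩ A) (B ∩ A) ≤ coulomb A A :=
    coulomb_mono hA.volume_lt_top hA.volume_lt_top inter_subset_right inter_subset_right
  have hle := coulomb_le hdiff.volume_lt_top hB.volume_lt_top
  rw [coulomb_comm] at hle
  linarith [coulomb_nonneg (A := B \ A) (B := B \ A)]

lemma tendsto_setIntegral_of_tendsto_volume_symmDiff (hY : ∀ n, MeasurableSet (Y n))
    (hS : MeasurableSet S) (hlim : Tendsto (fun n => volume (symmDiff (Y n) S)) atTop (𝓝 0))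
    {f : E3 → ℝ} (hf : Integrable f) :
    Tendsto (fun n => ∫ x in Y n, f x) atTop (𝓝 (∫ x in S, f x)) := by
  have hnull {D : ℕ → Set E3} (hD : ∀ n, D n ⊆ symmDiff (Y n) S) :
      Tendsto (fun n => ∫ x in D n, f x) atTop (𝓝 0) :=
    hf.tendsto_setIntegral_nhds_zero <| tendsto_of_tendsto_of_tendsto_of_le_of_le
      tendsto_const_nhds hlim (fun _ => zero_le) fun n => measure_mono (hD n)
  have hsum := ((hnull fun _ => subset_union_left).sub
    (hnull (D := fun n => S \ Y n) fun _ => subset_union_right)).add_const (∫ x in S, f x)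
  rw [sub_zero, zero_add] at hsum
  refine hsum.congr fun n => ?_
  have hYS := integral_inter_add_sdiff hS (hf.integrableOn (s := Y n))
  have hSY := integral_inter_add_sdiff (hY n) (hf.integrableOn (s := S))
  rw [inter_comm] at hSY
  linarith

lemma IsDroplet.of_tendsto (hY : ∀ n, IsDroplet (Y n)) (hS : IsFiniteVolume S)
    (hlim : Tendsto (fun n => volume (symmDiff (Y n) S)) atTop (𝓝 0)) {e : ℕ → ℝ} {c : ℝ}
    (he : ∀ n, excess (Y n) ≤ e n) (hec : Tendsto e atTop (𝓝 c)) :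
    IsDroplet S ∧ excess S ≤ c := by
  set u : ℝ := unitBallPotential.toReal + vol S
  have hδ : Tendsto (fun n => vol (symmDiff (Y n) S)) atTop (𝓝 0) :=
    (ENNReal.tendsto_toReal ENNReal.zero_ne_top).comp hlim
  have hdiv φ (hφ : IsTestField φ) :
      ∫ x in S, divg φ x ≤ c + muStar * vol S - 1 / 2 * coulomb S S := by
    have hbound : Tendsto (fun n => e n + muStar * (vol S + vol (symmDiff (Y n) S))
        - 1 / 2 * coulomb S S + vol (symmDiff (Y n) S) * u) atTop
        (𝓝 (c + muStar * (vol S + 0) - 1 / 2 * coulomb S S + 0 * u)) :=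
      ((hec.add ((hδ.const_add _).const_mul _)).sub_const _).add (hδ.mul_const _)
    rw [add_zero, zero_mul, add_zero] at hbound
    refine le_of_tendsto_of_tendsto' (tendsto_setIntegral_of_tendsto_volume_symmDiff
      (fun n => (hY n).measurableSet) hS.measurableSet hlim hφ.integrable_divg) hbound fun n => ?_
    have hfin : volume (symmDiff (Y n) S) < ⊤ :=
      measure_union_lt_top ((hY n).diff hS.measurableSet).volume_lt_top
        (hS.diff (hY n).measurableSet).volume_lt_top
    have hYS : muStar * vol (Y n) ≤ muStar * (vol S + vol (symmDiff (Y n) S)) := by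
      refine mul_le_mul_of_nonneg_left ?_ muStar_nonneg
      rw [← vol_inter_add_vol_diff (hY n).volume_lt_top hS.measurableSet]
      exact add_le_add (vol_mono inter_subset_right hS.volume_lt_top)
        (vol_mono subset_union_left hfin)
    have hSY : vol (S \ Y n) * u ≤ vol (symmDiff (Y n) S) * u :=
      mul_le_mul_of_nonneg_right (vol_mono subset_union_right hfin)
        (add_nonneg ENNReal.toReal_nonneg vol_nonneg)
    linarith [setIntegral_divg_le_per (hY n).hasFinPer hφ, coulomb_self_le (hY n).1 hS, he n,
      excess_eq (hY n).volume_lt_top]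
  obtain ⟨hfin, hper⟩ := hasFinPer_and_per_le hdiv
  exact ⟨⟨hS, hfin⟩, by linarith [excess_eq hS.volume_lt_top]⟩

lemma LocVolTendsto.volume_lt_top (hl : LocVolTendsto X S) {M : ℝ≥0∞} (hM : M ≠ ⊤)
    (hX : ∀ n, volume (X n) ≤ M) : volume S < ⊤ := by
  have hball (k : ℕ) : volume (S ∩ ball 0 k) ≤ M := by
    have hlim := (hl k).const_add M
    rw [add_zero] at hlim
    refine ge_of_tendsto' hlim fun n => ?_
    calc volume (S ∩ ball 0 k)
        ≤ volume (X n ∪ symmDiff (X n) S ∩ ball 0 k) := measure_mono fun x hx => by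
          by_cases h : x ∈ X n
          exacts [.inl h, .inr ⟨.inr ⟨hx.1, h⟩, hx.2⟩]
      _ ≤ volume (X n) + volume (symmDiff (X n) S ∩ ball 0 k) := measure_union_le _ _
      _ ≤ M + volume (symmDiff (X n) S ∩ ball 0 k) := by grw [hX n]
  have hmono : Monotone fun k : ℕ => S ∩ ball (0 : E3) k := fun _ _ h =>
    inter_subset_inter_right _ (ball_subset_ball (by exact_mod_cast h))
  rw [← inter_univ S, ← iUnion_ball_nat (0 : E3), inter_iUnion, hmono.measure_iUnion]
  exact (iSup_le hball).trans_lt hM.lt_top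

lemma IsDroplet.exists_inter_ball (hΩ : IsDroplet B) {k : ℕ} (hk : 0 < k) :
    ∃ r ∈ Icc (k : ℝ) (2 * k + 1), IsDroplet (B ∩ ball 0 r) ∧
      excess (B ∩ ball 0 r) ≤ excess B + 2 * transitionSlope * vol B / k := by
  have hκ := transitionSlope_nonneg
  have hk' : (1 : ℝ) ≤ k := by exact_mod_cast hk
  obtain ⟨r, hr, hcut⟩ := exists_hasCutCost_ball hΩ.1 0 (r₀ := k) (r₁ := 2 * k + 1)
    (by positivity) (by linarith)
  obtain ⟨hin, hout, hexc⟩ := hΩ.excess_cut measurableSet_ball hcut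
  have hcost : 2 * transitionSlope * vol (B ∩ (ball 0 (2 * k + 1) \ ball 0 k))
      / (2 * k + 1 - (k + 1)) ≤ 2 * transitionSlope * vol B / k := by
    rw [show (2 * k + 1 - (k + 1) : ℝ) = k by ring]
    gcongr
    exact vol_mono inter_subset_left hΩ.volume_lt_top
  refine ⟨r, hr, hin, ?_⟩
  linarith [hout.excess_nonneg,
    coulomb_nonneg (A := B ∩ ball 0 r) (B := B \ ball 0 r)]

lemma symmDiff_inter_ball_subset {r₀ r r₁ : ℝ} (h₀ : r₀ ≤ r) (h₁ : r ≤ r₁) :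
    symmDiff (A ∩ ball 0 r) S ⊆ symmDiff A S ∩ ball 0 r₁ ∪ S \ ball 0 r₀ := by
  rintro x (⟨⟨hx, hxr⟩, hxS⟩ | ⟨hxS, hx⟩)
  · exact .inl ⟨.inl ⟨hx, hxS⟩, ball_subset_ball h₁ hxr⟩
  · by_cases hxr : x ∈ ball 0 r₀
    · have hxr' := ball_subset_ball h₀ hxr
      exact .inl ⟨.inr ⟨hxS, fun h => hx ⟨h, hxr'⟩⟩, ball_subset_ball h₁ hxr'⟩
    · exact .inr ⟨hxS, hxr⟩

-- The truncation radius depends on the index, so that the truncated sets converge in `L¹` and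
-- not just locally.
lemma LocVolTendsto.exists_tendsto_inter_ball (hX : ∀ n, IsDroplet (X n)) {M : ℝ}
    (hM : ∀ n, vol (X n) ≤ M) (hexc : Tendsto (fun n => excess (X n)) atTop (𝓝 0))
    (hS : IsFiniteVolume S) (hl : LocVolTendsto X S) :
    ∃ (Y : ℕ → Set E3) (e : ℕ → ℝ), (∀ k, IsDroplet (Y k)) ∧ (∀ k, excess (Y k) ≤ e k) ∧
      Tendsto e atTop (𝓝 0) ∧ Tendsto (fun k => volume (symmDiff (Y k) S)) atTop (𝓝 0) := by
  have hsel (k : ℕ) : ∃ n, excess (X n) ≤ 1 / ((k : ℝ) + 1) ∧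
      volume (symmDiff (X n) S ∩ ball 0 (2 * (k + 1 : ℕ) + 1)) ≤ ENNReal.ofReal (1 / (k + 1)) :=
    ((hexc.eventually_le_const Nat.one_div_pos_of_nat).and ((hl _).eventually_le_const
      (ENNReal.ofReal_pos.2 Nat.one_div_pos_of_nat))).exists
  choose n hn hnS using hsel
  choose r hr hY hYexc using fun k => (hX (n k)).exists_inter_ball k.succ_pos
  refine ⟨fun k => X (n k) ∩ ball 0 (r k), fun k => (1 + 2 * transitionSlope * M) * (1 / (k + 1)),
    hY, fun k => (hYexc k).trans ?_, ?_, ?_⟩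
  · have hκ := transitionSlope_nonneg
    have : 2 * transitionSlope * vol (X (n k)) / (k + 1 : ℕ)
        ≤ 2 * transitionSlope * M / (k + 1 : ℕ) := by
      gcongr
      exact hM _
    push_cast at this
    simp only [Nat.succ_eq_add_one, Nat.cast_add_one, mul_one_div, add_div]
    exact add_le_add (hn k) this
  · simpa using tendsto_one_div_add_atTop_nhds_zero_nat.const_mul (1 + 2 * transitionSlope * M)
  · have htail : Tendsto (fun k : ℕ => volume (S \ ball 0 k)) atTop (𝓝 0) := by
      have := ENNReal.tendsto_ofReal hS.tendsto_vol_diff_ball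
      rw [ENNReal.ofReal_zero] at this
      exact this.congr fun k => ENNReal.ofReal_toReal (hS.diff measurableSet_ball).volume_lt_top.ne
    have hsum := (ENNReal.tendsto_ofReal
      (tendsto_one_div_add_atTop_nhds_zero_nat (𝕜 := ℝ))).add htail
    rw [ENNReal.ofReal_zero, add_zero] at hsum
    refine tendsto_of_tendsto_of_tendsto_of_le_of_le tendsto_const_nhds hsum
      (fun _ => zero_le) fun k => ?_
    obtain ⟨hkr, hrk⟩ := hr k
    push_cast at hkr
    refine (measure_mono (symmDiff_inter_ball_subset ?_ hrk)).trans
      ((measure_union_le _ _).trans (add_le_add_left (hnS k) _))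
    linarith

lemma LocVolTendsto.isMinimizer (hX : ∀ n, IsDroplet (X n)) {M : ℝ} (hM : ∀ n, vol (X n) ≤ M)
    (hexc : Tendsto (fun n => excess (X n)) atTop (𝓝 0)) (hS : MeasurableSet S)
    (hl : LocVolTendsto X S) (hpos : 0 < volume S) : IsMinimizer S := by
  have hfin : IsFiniteVolume S := ⟨hS, hl.volume_lt_top ENNReal.ofReal_ne_top fun n =>
    (ENNReal.le_ofReal_iff_toReal_le (hX n).volume_lt_top.ne (vol_nonneg.trans (hM n))).2 (hM n)⟩
  obtain ⟨Y, e, hY, hYe, he, hlim⟩ := hl.exists_tendsto_inter_ball hX hM hexc hfin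
  obtain ⟨hSd, hSe⟩ := IsDroplet.of_tendsto hY hfin hlim hYe he
  exact hSd.isMinimizer hpos hSe

end Limits

section MultiCut

variable {K : ℕ}

/-- The sum of `f j k` over all pairs `j < k`. -/
def pairSum (f : Fin K → Fin K → ℝ) : ℝ := ∑ j, ∑ k, if j < k then f j k else 0

lemma pairSum_succ (f : Fin (K + 1) → Fin (K + 1) → ℝ) :
    pairSum f = ∑ k : Fin K, f 0 k.succ + pairSum fun j k => f j.succ k.succ := by
  simp [pairSum, Fin.sum_univ_succ]

lemma pairSum_mono {f g : Fin K → Fin K → ℝ} (h : ∀ j k, j < k → f j k ≤ g j k) :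
    pairSum f ≤ pairSum g := by
  refine Finset.sum_le_sum fun j _ => Finset.sum_le_sum fun k _ => ?_
  split_ifs with hjk
  exacts [h j k hjk, le_rfl]

lemma pairSum_nonneg {f : Fin K → Fin K → ℝ} (h : ∀ j k, j < k → 0 ≤ f j k) : 0 ≤ pairSum f := by
  refine Finset.sum_nonneg fun j _ => Finset.sum_nonneg fun k _ => ?_
  split_ifs with hjk
  exacts [h j k hjk, le_rfl]

lemma le_pairSum {f : Fin K → Fin K → ℝ} (h : ∀ j k, j < k → 0 ≤ f j k) {j k : Fin K}
    (hjk : j < k) : f j k ≤ pairSum f := by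
  have hnonneg j' k' : 0 ≤ if j' < k' then f j' k' else 0 := by
    split_ifs with hjk'
    exacts [h j' k' hjk', le_rfl]
  calc f j k = if j < k then f j k else 0 := (if_pos hjk).symm
    _ ≤ ∑ k', if j < k' then f j k' else 0 :=
      Finset.single_le_sum (fun k' _ => hnonneg j k') (Finset.mem_univ k)
    _ ≤ pairSum f := Finset.single_le_sum
      (f := fun j' => ∑ k', if j' < k' then f j' k' else 0)
      (fun j' _ => Finset.sum_nonneg fun k' _ => hnonneg j' k') (Finset.mem_univ j)

lemma pairSum_sub (f g : Fin K → Fin K → ℝ) :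
    pairSum (fun j k => f j k - g j k) = pairSum f - pairSum g := by
  simp only [pairSum, ← Finset.sum_sub_distrib, ite_sub_ite, sub_self]

lemma pairSum_const_mul (c : ℝ) (f : Fin K → Fin K → ℝ) :
    pairSum (fun j k => c * f j k) = c * pairSum f := by
  simp only [pairSum, Finset.mul_sum, mul_ite, mul_zero]

lemma tendsto_pairSum {f : ℕ → Fin K → Fin K → ℝ} {g : Fin K → Fin K → ℝ}
    (h : ∀ j k, j < k → Tendsto (fun n => f n j k) atTop (𝓝 (g j k))) :
    Tendsto (fun n => pairSum (f n)) atTop (𝓝 (pairSum g)) := by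
  refine tendsto_finsetSum _ fun j _ => tendsto_finsetSum _ fun k _ => ?_
  split_ifs with hjk
  exacts [h j k hjk, tendsto_const_nhds]

lemma sum_coulomb_le {ι : Type*} [Fintype ι] {G : ι → Set E3} {A B : Set E3}
    (hG : ∀ j, MeasurableSet (G j)) (hd : Pairwise (Function.onFun Disjoint G))
    (hGB : ∀ j, G j ⊆ B) (hB : volume B < ⊤) (hA : volume A < ⊤) :
    ∑ j, coulomb (G j) A ≤ coulomb B A := by
  have hfin j : lcoulomb (G j) A ≠ ⊤ :=
    (lcoulomb_lt_top ((measure_mono (hGB j)).trans_lt hB) hA).ne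
  have hsum : ∑ j, lcoulomb (G j) A = lcoulomb (⋃ j, G j) A := by
    unfold lcoulomb
    rw [lintegral_iUnion hG hd, tsum_fintype]
  simp only [coulomb]
  rw [← ENNReal.toReal_sum fun j _ => hfin j, hsum]
  exact coulomb_mono hB hA (iUnion_subset hGB) Subset.rfl

lemma IsDroplet.excess_multi_cut {Ω : Set E3} {H : Fin K → Set E3} {q : Fin K → ℝ}
    (hΩ : IsDroplet Ω) (hH : ∀ j, MeasurableSet (H j))
    (hd : Pairwise (Function.onFun Disjoint H)) (hcut : ∀ j, HasCutCost Ω (H j) (q j)) :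
    IsDroplet (Ω \ ⋃ j, H j) ∧
      ∑ j, excess (Ω ∩ H j) + excess (Ω \ ⋃ j, H j)
        + pairSum (fun j k => coulomb (Ω ∩ H j) (Ω ∩ H k)) ≤ excess Ω + ∑ j, q j := by
  induction K generalizing Ω with
  | zero => simpa [pairSum] using hΩ
  | succ K ih =>
    obtain ⟨hin, hout, hexc⟩ := hΩ.excess_cut (hH 0) (hcut 0)
    have hinter (j : Fin K) : (Ω \ H 0) ∩ H j.succ = Ω ∩ H j.succ := by
      rw [sdiff_inter_right_comm, ((hd j.succ_ne_zero).mono_left inter_subset_right).sdiff_eq_left]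
    have hrest : (Ω \ H 0) \ ⋃ j : Fin K, H j.succ = Ω \ ⋃ j, H j := by
      rw [Set.sdiff_sdiff]
      ext x
      simp [Fin.exists_fin_succ]
    obtain ⟨hdrop, hle⟩ := ih hout (fun j => hH j.succ)
      (hd.comp_of_injective (Fin.succ_injective K))
      (fun j Ω' hΩ' => hcut j.succ Ω' (hΩ'.trans sdiff_subset))
    simp only [hinter, hrest] at hdrop hle
    have hcross : ∑ j : Fin K, coulomb (Ω ∩ H j.succ) (Ω ∩ H 0) ≤ coulomb (Ω \ H 0) (Ω ∩ H 0) :=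
      sum_coulomb_le (fun j => hΩ.measurableSet.inter (hH j.succ))
        (fun j k hjk => (hd ((Fin.succ_injective K).ne hjk)).mono inter_subset_right
          inter_subset_right)
        (fun j => hinter j ▸ inter_subset_left) hout.volume_lt_top hin.volume_lt_top
    simp only [coulomb_comm _ (Ω ∩ H 0)] at hcross
    refine ⟨hdrop, ?_⟩
    rw [pairSum_succ, Fin.sum_univ_succ, Fin.sum_univ_succ]
    linarith

end MultiCut

section PartialDecomp

variable {X : ℕ → Set E3} {m : ℝ} {K : ℕ}

lemma LocVolTendsto.comp {S : Set E3} (hl : LocVolTendsto X S) {φ : ℕ → ℕ} (hφ : StrictMono φ) :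
    LocVolTendsto (X ∘ φ) S := fun ρ => (hl ρ).comp hφ.tendsto_atTop

lemma LocVolTendsto.tendsto_vol_inter_ball {S : Set E3} (hX : ∀ n, MeasurableSet (X n))
    (hS : MeasurableSet S) (hl : LocVolTendsto X S) (ρ : ℝ) :
    Tendsto (fun n => vol (X n ∩ ball 0 ρ)) atTop (𝓝 (vol (S ∩ ball 0 ρ))) := by
  have hball (A : Set E3) : volume (A ∩ ball 0 ρ) ≠ ⊤ := measure_inter_ne_top_of_right_ne_top
    measure_ball_lt_top.ne
  rw [tendsto_iff_dist_tendsto_zero]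
  refine squeeze_zero (fun _ => dist_nonneg) (fun n => ?_)
    ((ENNReal.tendsto_toReal ENNReal.zero_ne_top).comp (hl ρ))
  rw [Function.comp_apply, Set.inter_symmDiff_distrib_right]
  exact abs_measureReal_sub_le_measureReal_symmDiff'
    ((hX n).inter measurableSet_ball).nullMeasurableSet
    (hS.inter measurableSet_ball).nullMeasurableSet (hball _) (hball _)

lemma vol_recenter_inter_ball (a : E3) (Ω : Set E3) (ρ : ℝ) :
    vol (recenter a Ω ∩ ball 0 ρ) = vol (Ω ∩ ball a ρ) := by
  rw [← vol_recenter a (Ω ∩ ball a ρ)]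
  congr 1
  ext x
  simp [recenter]

lemma sum_vol_inter_add_vol_diff {ι : Type*} [Fintype ι] {Ω : Set E3} {H : ι → Set E3}
    (hΩ : IsFiniteVolume Ω) (hH : ∀ j, MeasurableSet (H j))
    (hd : Pairwise (Function.onFun Disjoint H)) :
    ∑ j, vol (Ω ∩ H j) + vol (Ω \ ⋃ j, H j) = vol Ω := by
  rw [← vol_inter_add_vol_diff hΩ.volume_lt_top (.iUnion hH), inter_iUnion]
  congr 1
  exact (measureReal_iUnion_fintype
    (fun j k hjk => (hd hjk).mono inter_subset_right inter_subset_right)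
    (fun j => hΩ.measurableSet.inter (hH j)) fun j => (hΩ.inter (hH j)).volume_lt_top.ne).symm

lemma pairwise_disjoint_ball {b : Fin K → E3} {D : ℝ} {r : Fin K → ℝ}
    (hb : ∀ j k, j ≠ k → 2 * D ≤ ‖b j - b k‖) (hr : ∀ j, r j ≤ D) :
    Pairwise (Function.onFun Disjoint fun j => ball (b j) (r j)) := fun j k hjk =>
  ball_disjoint_ball (by rw [dist_eq_norm]; linarith [hb j k hjk, hr j, hr k])

/-- A minimizing sequence of total mass `m`, in the additive form in which the defect
`II - muStar * vol` (rather than the energy per unit volume) controls the sequence. -/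
structure IsMinimizingSeq (X : ℕ → Set E3) (m : ℝ) : Prop where
  isDroplet : ∀ n, IsDroplet (X n)
  tendsto_vol : Tendsto (fun n => vol (X n)) atTop (𝓝 m)
  tendsto_excess : Tendsto (fun n => excess (X n)) atTop (𝓝 0)

namespace IsMinimizingSeq

lemma comp (hX : IsMinimizingSeq X m) {φ : ℕ → ℕ} (hφ : StrictMono φ) :
    IsMinimizingSeq (X ∘ φ) m :=
  ⟨fun n => hX.isDroplet (φ n), hX.tendsto_vol.comp hφ.tendsto_atTop,
    hX.tendsto_excess.comp hφ.tendsto_atTop⟩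

lemma exists_vol_le (hX : IsMinimizingSeq X m) : ∃ M, ∀ n, vol (X n) ≤ M := by
  obtain ⟨M, hM⟩ := hX.tendsto_vol.bddAbove_range
  exact ⟨M, forall_mem_range.1 hM⟩

lemma exists_per_le (hX : IsMinimizingSeq X m) : ∃ P, ∀ n, per (X n) ≤ P := by
  obtain ⟨P, hP⟩ := (hX.tendsto_excess.add (hX.tendsto_vol.const_mul muStar)).bddAbove_range
  refine ⟨P, fun n => (per_le_II (hX.isDroplet n).volume_lt_top).trans ?_⟩
  simpa [excess] using forall_mem_range.1 hP n

lemma exists_isMinimizer (hX : IsMinimizingSeq X m) {x : ℕ → E3} {r c : ℝ} (hc : 0 < c)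
    (hx : ∀ n, c ≤ vol (X n ∩ ball (x n) r)) :
    ∃ (T : Set E3) (χ : ℕ → ℕ), StrictMono χ ∧ IsMinimizer T ∧
      LocVolTendsto (fun n => recenter (x (χ n)) (X (χ n))) T := by
  obtain ⟨M, hM⟩ := hX.exists_vol_le
  obtain ⟨P, hP⟩ := hX.exists_per_le
  obtain ⟨T, χ, hχ, hT, hlim⟩ := exists_subseq_locVolTendsto
    (fun n => (hX.isDroplet n).recenter (x n))
    (fun n => (per_recenter (hX.isDroplet n).hasFinPer _).trans_le (hP n))
    (fun n => (vol_recenter _ _).trans_le (hM n))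
  have hTball : c ≤ vol (T ∩ ball 0 r) :=
    ge_of_tendsto' (hlim.tendsto_vol_inter_ball
      (fun n => measurableSet_recenter (hX.isDroplet _).measurableSet _) hT r) fun n =>
        (hx (χ n)).trans_eq (vol_recenter_inter_ball _ _ _).symm
  have hpos : 0 < volume T :=
    (ENNReal.toReal_pos_iff.1 (hc.trans_le hTball)).1.trans_le (measure_mono inter_subset_left)
  refine ⟨T, χ, hχ, hlim.isMinimizer (fun n => (hX.isDroplet _).recenter _)
    (fun n => (vol_recenter _ _).trans_le (hM _)) ?_ hT hpos, hlim⟩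
  simp only [(hX.isDroplet _).excess_recenter]
  exact hX.tendsto_excess.comp hχ.tendsto_atTop

end IsMinimizingSeq

/-- The sets `X n` contain asymptotically the minimizers `S j`, placed around the centers `a n j`
that move infinitely far apart. -/
structure IsPartialDecomp (X : ℕ → Set E3) (S : Fin K → Set E3) (a : ℕ → Fin K → E3) : Prop where
  tendsto_norm_sub : ∀ j k, j ≠ k → Tendsto (fun n => ‖a n j - a n k‖) atTop atTop
  isMinimizer : ∀ j, IsMinimizer (S j)
  locVolTendsto : ∀ j, LocVolTendsto (fun n => recenter (a n j) (X n)) (S j)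

variable {S : Fin K → Set E3} {a : ℕ → Fin K → E3}

lemma eventually_le_norm_sub
    (ha : ∀ j k, j ≠ k → Tendsto (fun n => ‖a n j - a n k‖) atTop atTop) (ρ : ℝ) :
    ∀ᶠ n in atTop, ∀ j k, j ≠ k → ρ ≤ ‖a n j - a n k‖ := by
  simp only [eventually_all]
  exact fun j k hjk => (ha j k hjk).eventually_ge_atTop ρ

lemma exists_forall_volume_diff_ball_eq_zero (hS : ∀ j, IsMinimizer (S j)) :
    ∃ R > 0, ∀ j, volume (S j \ ball 0 R) = 0 := by
  choose R hR hRS using fun j => (hS j).exists_volume_diff_ball_eq_zero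
  have hsum : 0 ≤ ∑ j, R j := Finset.sum_nonneg fun j _ => (hR j).le
  refine ⟨1 + ∑ j, R j, by positivity, fun j =>
    measure_mono_null (sdiff_subset_sdiff_right (ball_subset_ball ?_)) (hRS j)⟩
  linarith [Finset.single_le_sum (f := R) (fun j _ => (hR j).le) (Finset.mem_univ j)]

lemma vol_inter_eq_of_volume_diff_eq_zero {A B : Set E3} (h : volume (A \ B) = 0) :
    vol (A ∩ B) = vol A :=
  congrArg ENNReal.toReal (measure_inter_conull' h)

namespace IsPartialDecomp

lemma comp (h : IsPartialDecomp X S a) {φ : ℕ → ℕ} (hφ : StrictMono φ) :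
    IsPartialDecomp (X ∘ φ) S (a ∘ φ) :=
  ⟨fun j k hjk => (h.tendsto_norm_sub j k hjk).comp hφ.tendsto_atTop, h.isMinimizer,
    fun j => (h.locVolTendsto j).comp hφ⟩

lemma tendsto_vol_inter_ball (h : IsPartialDecomp X S a) (hX : ∀ n, MeasurableSet (X n)) (ρ : ℝ)
    (j : Fin K) :
    Tendsto (fun n => vol (X n ∩ ball (a n j) ρ)) atTop (𝓝 (vol (S j ∩ ball 0 ρ))) :=
  ((h.locVolTendsto j).tendsto_vol_inter_ball (fun n => measurableSet_recenter (hX n) _)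
    (h.isMinimizer j).isDroplet.measurableSet ρ).congr fun _ => vol_recenter_inter_ball _ _ _

lemma tendsto_vol_diff (h : IsPartialDecomp X S a) (hX : IsMinimizingSeq X m) (ρ : ℝ) :
    Tendsto (fun n => vol (X n \ ⋃ j, ball (a n j) ρ)) atTop
      (𝓝 (m - ∑ j, vol (S j ∩ ball 0 ρ))) := by
  refine (hX.tendsto_vol.sub (tendsto_finsetSum _ fun j _ =>
    h.tendsto_vol_inter_ball (fun n => (hX.isDroplet n).measurableSet) ρ j)).congr' ?_
  filter_upwards [eventually_le_norm_sub h.tendsto_norm_sub (2 * ρ)] with n hn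
  rw [← sum_vol_inter_add_vol_diff (hX.isDroplet n).1 (fun _ => measurableSet_ball)
    (pairwise_disjoint_ball hn fun _ => le_rfl), add_sub_cancel_left]

lemma sum_vol_le (h : IsPartialDecomp X S a) (hX : IsMinimizingSeq X m) : ∑ j, vol (S j) ≤ m := by
  obtain ⟨R, -, hR⟩ := exists_forall_volume_diff_ball_eq_zero h.isMinimizer
  have hlim := ge_of_tendsto' (h.tendsto_vol_diff hX R) fun n => vol_nonneg
  simpa only [vol_inter_eq_of_volume_diff_eq_zero (hR _), sub_nonneg] using hlim

lemma exists_eventually_far (h : IsPartialDecomp X S a) (hX : IsMinimizingSeq X m)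
    (hlt : ∑ j, vol (S j) < m) :
    ∃ r > 0, ∀ ρ, ∀ᶠ n in atTop, ∃ x, (∀ j, ρ ≤ ‖x - a n j‖) ∧
      ballVol r / 2 ≤ vol (X n ∩ ball x r) := by
  obtain ⟨P, hP⟩ := hX.exists_per_le
  have hP₀ : 0 ≤ P := per_nonneg.trans (hP 0)
  set δ := m - ∑ j, vol (S j)
  have hδ : 0 < δ := sub_pos.2 hlt
  set r := δ / (2 * (P + 1)) with hr_def
  have hr : 0 < r := by positivity
  have hrP : 2 * r * P < δ := by
    have : δ = 2 * r * (P + 1) := by rw [hr_def]; field_simp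
    linarith
  refine ⟨r, hr, fun ρ => ?_⟩
  have hlim : 2 * r * P < m - ∑ j, vol (S j ∩ ball 0 ρ) :=
    hrP.trans_le (sub_le_sub_left (Finset.sum_le_sum fun j _ =>
      vol_mono inter_subset_left (h.isMinimizer j).isDroplet.volume_lt_top) m)
  filter_upwards [(h.tendsto_vol_diff hX ρ).eventually_const_lt hlim] with n hn
  by_contra! hsmall
  have hle := (hX.isDroplet n).vol_diff_le_of_volume_ball_inter_le (r := r)
    (MeasurableSet.iUnion fun j => measurableSet_ball (x := a n j) (ε := ρ)) hr fun x hx => by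
      have hfar j : ρ ≤ ‖x - a n j‖ := by
        by_contra! hj
        exact hx.2 (mem_iUnion.2 ⟨j, mem_ball_iff_norm.2 hj⟩)
      rw [inter_comm]
      exact volume_le_half_ball_of_vol_le
        ((hX.isDroplet n).1.inter measurableSet_ball).volume_lt_top (hsmall x hfar).le
  have hPn : 2 * r * per (X n) ≤ 2 * r * P := by
    gcongr
    exact hP n
  linarith

lemma cons (h : IsPartialDecomp X S a) {T : Set E3} {x : ℕ → E3} (hT : IsMinimizer T)
    (hx : ∀ j, Tendsto (fun n => ‖x n - a n j‖) atTop atTop)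
    (hl : LocVolTendsto (fun n => recenter (x n) (X n)) T) :
    IsPartialDecomp X (Fin.cons (α := fun _ => Set E3) T S)
      fun n => Fin.cons (α := fun _ => E3) (x n) (a n) := by
  refine ⟨fun j k hjk => ?_, Fin.cases hT h.isMinimizer, Fin.cases hl h.locVolTendsto⟩
  cases j using Fin.cases with
  | zero =>
    cases k using Fin.cases with
    | zero => exact absurd rfl hjk
    | succ k => exact hx k
  | succ j =>
    cases k using Fin.cases with
    | zero => exact (hx j).congr fun _ => norm_sub_rev _ _
    | succ k => exact h.tendsto_norm_sub j k fun hjk' => hjk (congrArg Fin.succ hjk')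

lemma exists_cons (h : IsPartialDecomp X S a) (hX : IsMinimizingSeq X m)
    (hlt : ∑ j, vol (S j) < m) :
    ∃ (S' : Fin (K + 1) → Set E3) (a' : ℕ → Fin (K + 1) → E3) (φ : ℕ → ℕ),
      StrictMono φ ∧ IsPartialDecomp (X ∘ φ) S' a' := by
  obtain ⟨r, hr, hfar⟩ := h.exists_eventually_far hX hlt
  obtain ⟨ψ, hψ, hψx⟩ := extraction_forall_of_eventually fun k : ℕ => hfar k
  choose x hxa hxX using hψx
  obtain ⟨T, χ, hχ, hT, hl⟩ :=
    (hX.comp hψ).exists_isMinimizer (half_pos (ballVol_pos hr)) hxX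
  exact ⟨_, _, _, hψ.comp hχ, (h.comp (hψ.comp hχ)).cons hT (fun j => tendsto_atTop_mono
    (fun n => hxa (χ n) j) (tendsto_natCast_atTop_atTop.comp hχ.tendsto_atTop)) hl⟩

end IsPartialDecomp

lemma IsMinimizingSeq.exists_isPartialDecomp (hX : IsMinimizingSeq X m) :
    ∃ (K : ℕ) (S : Fin K → Set E3) (a : ℕ → Fin K → E3) (φ : ℕ → ℕ), StrictMono φ ∧
      IsPartialDecomp (X ∘ φ) S a ∧ m = ∑ j, vol (S j) := by
  by_contra! hne
  have hall (K : ℕ) : ∃ (S : Fin K → Set E3) (a : ℕ → Fin K → E3) (φ : ℕ → ℕ),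
      StrictMono φ ∧ IsPartialDecomp (X ∘ φ) S a := by
    induction K with
    | zero => exact ⟨Fin.elim0, fun _ => Fin.elim0, id, strictMono_id, (Fin.elim0 ·), (Fin.elim0 ·),
        (Fin.elim0 ·)⟩
    | succ K ih =>
      obtain ⟨S, a, φ, hφ, h⟩ := ih
      obtain ⟨S', a', ψ, hψ, h'⟩ := h.exists_cons (hX.comp hφ)
        ((h.sum_vol_le (hX.comp hφ)).lt_of_ne (hne K S a φ hφ h).symm)
      exact ⟨S', a', φ ∘ ψ, hφ.comp hψ, h'⟩
  have hc := half_pos (ballVol_pos criticalRadius_pos)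
  obtain ⟨K, hK⟩ := exists_nat_gt (m / (ballVol criticalRadius / 2))
  obtain ⟨S, a, φ, hφ, h⟩ := hall K
  have hmass : K * (ballVol criticalRadius / 2) ≤ ∑ j, vol (S j) := by
    simpa using Finset.sum_le_sum fun j (_ : j ∈ Finset.univ) => (h.isMinimizer j).ballVol_le_vol
  exact absurd (hmass.trans (h.sum_vol_le (hX.comp hφ))) (not_le.2 ((div_lt_iff₀ hc).1 hK))

end PartialDecomp

section FixedRadius

variable {X : ℕ → Set E3} {m : ℝ} {K : ℕ} {S : Fin K → Set E3} {a : ℕ → Fin K → E3} {R : ℝ}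

namespace IsPartialDecomp

lemma tendsto_vol_shell (h : IsPartialDecomp X S a) (hX : ∀ n, MeasurableSet (X n))
    (hR : ∀ j, volume (S j \ ball 0 R) = 0) {R' : ℝ} (hRR' : R ≤ R') (j : Fin K) :
    Tendsto (fun n => vol (X n ∩ (ball (a n j) R' \ ball (a n j) R))) atTop (𝓝 0) := by
  have hlim := (h.tendsto_vol_inter_ball hX R' j).sub (h.tendsto_vol_inter_ball hX R j)
  rw [vol_inter_eq_of_volume_diff_eq_zero (hR j), vol_inter_eq_of_volume_diff_eq_zero
    (measure_mono_null (sdiff_subset_sdiff_right (ball_subset_ball hRR')) (hR j)), sub_self] at hlim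
  refine hlim.congr fun n => ?_
  rw [← vol_inter_add_vol_diff ((measure_mono inter_subset_right).trans_lt measure_ball_lt_top)
      (measurableSet_ball (x := a n j) (ε := R)), inter_assoc,
    inter_eq_self_of_subset_right (ball_subset_ball hRR'), add_sub_cancel_left, inter_sdiff_assoc]

-- Along a subsequence the shells of width 2 outside `R` have volume `≤ 4⁻ⁿ`; weighting them by `2ⁿ`
-- makes their total finite, so that one radius serves all `n` and `j` at cost `O(2⁻ⁿ)`.
lemma exists_subseq_hasCutCost_ball (h : IsPartialDecomp X S a)
    (hX : ∀ n, IsFiniteVolume (X n)) :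
    ∃ (ψ : ℕ → ℕ) (R : ℝ) (q : ℕ → ℝ), StrictMono ψ ∧ 0 < R ∧
      (∀ j, volume (S j \ ball 0 R) = 0) ∧ Tendsto q atTop (𝓝 0) ∧
      ∀ n j, HasCutCost (X (ψ n)) (ball (a (ψ n) j) R) (q n) := by
  obtain ⟨R₀, hR₀, hnull⟩ := exists_forall_volume_diff_ball_eq_zero h.isMinimizer
  obtain ⟨ψ, hψ, hshell⟩ := extraction_forall_of_eventually (P := fun k n => ∀ j,
      vol (X n ∩ (ball (a n j) (R₀ + 2) \ ball (a n j) R₀)) ≤ (1 / 4) ^ k) fun k =>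
    eventually_all.2 fun j => (h.tendsto_vol_shell (fun n => (hX n).measurableSet) hnull
      (by linarith) j).eventually_le_const (by positivity)
  have hone : HasSum (fun _ : Fin K => (1 : ℝ)) (∑ _j : Fin K, 1) := hasSum_fintype _
  have hsum := hasSum_geometric_two.mul hone <| summable_geometric_two.mul_of_nonneg hone.summable
    (fun _ => by positivity) fun _ => zero_le_one
  have hweight (p : ℕ × Fin K) : (2 : ℝ) ^ p.1 * vol (X (ψ p.1) ∩
      (ball (a (ψ p.1) p.2) (R₀ + 2) \ ball (a (ψ p.1) p.2) R₀)) ≤ (1 / 2) ^ p.1 * 1 := by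
    refine (mul_le_mul_of_nonneg_left (hshell p.1 p.2) (by positivity)).trans_eq ?_
    rw [← mul_pow, mul_one]
    norm_num
  obtain ⟨R, ⟨hR, -⟩, hcut⟩ := exists_forall_hasCutCost_ball (fun p : ℕ × Fin K => hX (ψ p.1))
    (fun p => a (ψ p.1) p.2) hR₀.le (by linarith) (fun p => by positivity) hweight hsum
  refine ⟨ψ, R, fun n => 2 * transitionSlope * (2 * ∑ _j : Fin K, 1) / (R₀ + 2 - (R₀ + 1)) / 2 ^ n,
    hψ, hR₀.trans_le hR, fun j => measure_mono_null
    (sdiff_subset_sdiff_right (ball_subset_ball hR)) (hnull j), ?_, fun n j => hcut (n, j)⟩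
  exact tendsto_const_nhds.div_atTop (tendsto_pow_atTop_atTop_of_one_lt one_lt_two)

lemma tendsto_volume_symmDiff (h : IsPartialDecomp X S a)
    (hR : ∀ j, volume (S j \ ball 0 R) = 0) (j : Fin K) :
    Tendsto (fun n => volume (symmDiff (recenter (a n j) (X n) ∩ ball 0 R) (S j))) atTop (𝓝 0) := by
  refine tendsto_of_tendsto_of_tendsto_of_le_of_le tendsto_const_nhds (h.locVolTendsto j R)
    (fun n => zero_le) fun n => ?_
  refine (measure_mono (symmDiff_inter_ball_subset le_rfl le_rfl)).trans
    ((measure_union_le _ _).trans ?_)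
  rw [hR j, add_zero]

lemma tendsto_vol_diff_zero (h : IsPartialDecomp X S a) (hX : IsMinimizingSeq X m)
    (hm : m = ∑ j, vol (S j)) (hR : ∀ j, volume (S j \ ball 0 R) = 0) :
    Tendsto (fun n => vol (X n \ ⋃ j, ball (a n j) R)) atTop (𝓝 0) := by
  have hlim := h.tendsto_vol_diff hX R
  have hinter j : vol (S j ∩ ball 0 R) = vol (S j) := vol_inter_eq_of_volume_diff_eq_zero (hR j)
  simp only [hinter, ← hm, sub_self] at hlim
  exact hlim

lemma tendsto_per_diff_zero (h : IsPartialDecomp X S a) (hX : IsMinimizingSeq X m)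
    (hm : m = ∑ j, vol (S j)) (hR : ∀ j, volume (S j \ ball 0 R) = 0) {q : ℕ → ℝ}
    (hq : Tendsto q atTop (𝓝 0)) (hcut : ∀ n j, HasCutCost (X n) (ball (a n j) R) (q n)) :
    Tendsto (fun n => per (X n \ ⋃ j, ball (a n j) R)) atTop (𝓝 0) := by
  have hlim : Tendsto (fun n => excess (X n) + ∑ _j : Fin K, q n
      + muStar * vol (X n \ ⋃ j, ball (a n j) R)) atTop (𝓝 0) := by
    have hsum : Tendsto (fun n => ∑ _j : Fin K, q n) atTop (𝓝 0) := by
      simpa using hq.const_mul (K : ℝ)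
    simpa only [add_zero, mul_zero] using (hX.tendsto_excess.add hsum).add
      ((h.tendsto_vol_diff_zero hX hm hR).const_mul muStar)
  refine squeeze_zero' (.of_forall fun n => per_nonneg) ?_ hlim
  filter_upwards [eventually_le_norm_sub h.tendsto_norm_sub (2 * R)] with n hn
  obtain ⟨hrest, hle⟩ := (hX.isDroplet n).excess_multi_cut (fun _ => measurableSet_ball)
    (pairwise_disjoint_ball hn fun _ => le_rfl) (hcut n)
  have hin : 0 ≤ ∑ j, excess (X n ∩ ball (a n j) R) := Finset.sum_nonneg fun j _ =>
    (hcut n j _ Subset.rfl (hX.isDroplet n)).1.excess_nonneg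
  have hpair : 0 ≤ pairSum fun j k => coulomb (X n ∩ ball (a n j) R) (X n ∩ ball (a n k) R) :=
    pairSum_nonneg fun j k _ => coulomb_nonneg
  refine (per_le_II hrest.volume_lt_top).trans ?_
  rw [← sub_le_iff_le_add, ← excess]
  linarith

end IsPartialDecomp

end FixedRadius

section Repulsion

variable {Ω : Set E3} {K : ℕ} {R : ℝ}

lemma vol_inter_ball_diff_ball_le {b : Fin K → E3} {D : ℝ} (hΩ : IsFiniteVolume Ω) (hRD : R ≤ D)
    (hsep : ∀ j k, j ≠ k → 2 * D ≤ ‖b j - b k‖) (j : Fin K) :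
    vol (Ω ∩ (ball (b j) D \ ball (b j) R)) ≤ vol (Ω \ ⋃ k, ball (b k) R) := by
  refine vol_mono (fun x hx => ⟨hx.1, ?_⟩)
    (hΩ.diff (.iUnion fun k => measurableSet_ball)).volume_lt_top
  rintro hmem
  obtain ⟨k, hk⟩ := mem_iUnion.1 hmem
  obtain rfl | hjk := eq_or_ne j k
  · exact hx.2.2 hk
  · exact disjoint_left.1 (pairwise_disjoint_ball hsep (fun _ => le_rfl) hjk) hx.2.1
      (ball_subset_ball hRD hk)

lemma vol_mul_vol_div_le_coulomb_ball (hΩ : IsFiniteVolume Ω) (hR : 0 ≤ R) {b c : E3} {r s : ℝ}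
    (hr : R ≤ r) (hs : R ≤ s) :
    vol (Ω ∩ ball b R) * vol (Ω ∩ ball c R) / (‖b - c‖ + 2 * R)
      ≤ coulomb (Ω ∩ ball b r) (Ω ∩ ball c s) := by
  have hfin (x : E3) (t : ℝ) := (hΩ.inter (measurableSet_ball (x := x) (ε := t))).volume_lt_top
  refine (vol_mul_vol_div_le_coulomb (hfin b R) (hfin c R) (by positivity)
    fun x hx y hy => ?_).trans (coulomb_mono (hfin b r) (hfin c s)
      (inter_subset_inter_right _ (ball_subset_ball hr))
      (inter_subset_inter_right _ (ball_subset_ball hs)))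
  have hxb := mem_ball_iff_norm.1 hx.2
  have hyc := mem_ball_iff_norm'.1 hy.2
  calc ‖x - y‖ = ‖(x - b) + (b - c) + (c - y)‖ := by congr 1; abel
    _ ≤ ‖x - b‖ + ‖b - c‖ + ‖c - y‖ := norm_add₃_le
    _ ≤ ‖b - c‖ + 2 * R := by linarith

namespace IsDroplet

lemma pairSum_le_excess_add (hΩ : IsDroplet Ω) {b : Fin K → E3} {D : ℝ} (hR : 0 ≤ R)
    (hRD : 2 * (R + 1) ≤ D) (hsep : ∀ j k, j ≠ k → 2 * D ≤ ‖b j - b k‖) :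
    pairSum (fun j k => vol (Ω ∩ ball (b j) R) * vol (Ω ∩ ball (b k) R) / (‖b j - b k‖ + 2 * R))
      ≤ excess Ω + K * (4 * transitionSlope * vol (Ω \ ⋃ j, ball (b j) R) / D) := by
  choose r hr hcut using fun j =>
    exists_hasCutCost_ball hΩ.1 (b j) hR (by linarith : R + 1 < D)
  obtain ⟨hrest, hle⟩ := hΩ.excess_multi_cut (fun _ => measurableSet_ball)
    (pairwise_disjoint_ball hsep fun j => (hr j).2) hcut
  have hcost (j : Fin K) :
      2 * transitionSlope * vol (Ω ∩ (ball (b j) D \ ball (b j) R)) / (D - (R + 1))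
        ≤ 4 * transitionSlope * vol (Ω \ ⋃ j, ball (b j) R) / D := by
    have := transitionSlope_nonneg
    calc _ ≤ 2 * transitionSlope * vol (Ω \ ⋃ j, ball (b j) R) / (D / 2) := by
          gcongr
          · exact mul_nonneg (by positivity) vol_nonneg
          · linarith
          · exact vol_inter_ball_diff_ball_le hΩ.1 (by linarith) hsep j
          · linarith
      _ = _ := by ring
  have hcosts := Finset.sum_le_sum fun j (_ : j ∈ Finset.univ) => hcost j
  rw [Finset.sum_const, Finset.card_univ, Fintype.card_fin, nsmul_eq_mul] at hcosts
  have hin : 0 ≤ ∑ j, excess (Ω ∩ ball (b j) (r j)) := Finset.sum_nonneg fun j _ =>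
    (hcut j _ Subset.rfl hΩ).1.excess_nonneg
  have hpair := pairSum_mono fun j k (_ : j < k) =>
    vol_mul_vol_div_le_coulomb_ball hΩ.1 hR (b := b j) (c := b k) (hr j).1 (hr k).1
  linarith [hrest.excess_nonneg]

-- The balls are separated at the scale `1 / (2 p)`, where `p` is the sum of the inverse distances,
-- so that the cost of the cuts is itself a multiple of `p` and can be absorbed in the numerators.
lemma pairSum_div_le_excess (hΩ : IsDroplet Ω) {b : Fin K → E3} (hR : 0 ≤ R) {p : ℝ}
    (hp : p = pairSum fun j k => 1 / ‖b j - b k‖) (hp₀ : 0 < p) (hRp : 4 * (R + 1) * p ≤ 1)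
    (hb : ∀ j k, j ≠ k → 0 < ‖b j - b k‖) :
    pairSum (fun j k => (vol (Ω ∩ ball (b j) R) * vol (Ω ∩ ball (b k) R) * (1 - 2 * R * p)
      - 8 * K * transitionSlope * vol (Ω \ ⋃ j, ball (b j) R)) / ‖b j - b k‖) ≤ excess Ω := by
  have hpair {j k : Fin K} (hjk : j < k) : 1 / ‖b j - b k‖ ≤ p := by
    rw [hp]
    exact le_pairSum (f := fun j k => 1 / ‖b j - b k‖) (fun _ _ _ => by positivity) hjk
  have hsep (j k : Fin K) (hjk : j ≠ k) : 2 * (1 / (2 * p)) ≤ ‖b j - b k‖ := by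
    have hle : 1 / ‖b j - b k‖ ≤ p := by
      rcases hjk.lt_or_gt with h | h
      exacts [hpair h, norm_sub_rev (b j) (b k) ▸ hpair h]
    calc 2 * (1 / (2 * p)) = 1 / p := by ring
      _ ≤ ‖b j - b k‖ := (one_div_le (hb j k hjk) hp₀).1 hle
  have hbound := hΩ.pairSum_le_excess_add hR (D := 1 / (2 * p))
    (by rw [le_div_iff₀ (by positivity)]; linarith) hsep
  set s := vol (Ω \ ⋃ j, ball (b j) R)
  have hcost : K * (4 * transitionSlope * s / (1 / (2 * p)))
      = pairSum fun j k => 8 * K * transitionSlope * s * (1 / ‖b j - b k‖) := by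
    rw [pairSum_const_mul, ← hp, div_div_eq_mul_div, div_one]
    ring
  rw [hcost, ← sub_le_iff_le_add, ← pairSum_sub] at hbound
  refine (pairSum_mono fun j k hjk => ?_).trans hbound
  have hd := hb j k hjk.ne
  have hpd : 1 ≤ p * ‖b j - b k‖ := (div_le_iff₀ hd).1 (hpair hjk)
  have hfactor : (1 - 2 * R * p) / ‖b j - b k‖ ≤ 1 / (‖b j - b k‖ + 2 * R) := by
    rw [div_le_div_iff₀ hd (by positivity)]
    nlinarith [mul_nonneg hR (sub_nonneg.2 hpd), mul_nonneg (mul_nonneg hR hR) hp₀.le]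
  rw [sub_div, mul_one_div, mul_div_assoc, ← mul_one_div (_ * _) (_ + _)]
  gcongr
  exact mul_nonneg vol_nonneg vol_nonneg

end IsDroplet

namespace IsPartialDecomp

variable {X : ℕ → Set E3} {m : ℝ} {S : Fin K → Set E3} {a : ℕ → Fin K → E3}

lemma tendsto_pairSum_inv (h : IsPartialDecomp X S a) :
    Tendsto (fun n => pairSum fun j k => 1 / ‖a n j - a n k‖) atTop (𝓝 0) := by
  have hlim := tendsto_pairSum fun j k (hjk : j < k) =>
    (tendsto_const_nhds (x := (1 : ℝ))).div_atTop (h.tendsto_norm_sub j k hjk.ne)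
  simpa [pairSum] using hlim

lemma exists_pairSum_le_excess (h : IsPartialDecomp X S a) (hX : IsMinimizingSeq X m)
    (hm : m = ∑ j, vol (S j)) (hR : 0 ≤ R) (hnull : ∀ j, volume (S j \ ball 0 R) = 0)
    (hK : 2 ≤ K) :
    ∃ ε : ℕ → ℝ, Tendsto ε atTop (𝓝 0) ∧ ∀ᶠ n in atTop,
      pairSum (fun j k => (vol (S j) * vol (S k) + ε n) / ‖a n j - a n k‖) ≤ excess (X n) := by
  set p : ℕ → ℝ := fun n => pairSum fun j k => 1 / ‖a n j - a n k‖
  have hp₀ : Tendsto p atTop (𝓝 0) := h.tendsto_pairSum_inv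
  let V (n : ℕ) (j : Fin K) : ℝ := vol (X n ∩ ball (a n j) R)
  have hV (j : Fin K) : Tendsto (fun n => V n j) atTop (𝓝 (vol (S j))) := by
    rw [← vol_inter_eq_of_volume_diff_eq_zero (hnull j)]
    exact h.tendsto_vol_inter_ball (fun n => (hX.isDroplet n).measurableSet) R j
  let e (n : ℕ) (j k : Fin K) : ℝ := V n j * V n k * (1 - 2 * R * p n)
    - 8 * K * transitionSlope * vol (X n \ ⋃ j, ball (a n j) R) - vol (S j) * vol (S k)
  have he : Tendsto e atTop (𝓝 0) := by
    refine tendsto_pi_nhds.2 fun j => tendsto_pi_nhds.2 fun k => ?_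
    have hlim := ((((hV j).mul (hV k)).mul ((hp₀.const_mul (2 * R)).const_sub 1)).sub
      ((h.tendsto_vol_diff_zero hX hm hnull).const_mul (8 * K * transitionSlope))).sub_const
        (vol (S j) * vol (S k))
    simpa only [Pi.zero_apply, mul_zero, sub_zero, mul_one, sub_self] using hlim
  refine ⟨fun n => -‖e n‖, by simpa only [norm_zero, neg_zero] using he.norm.neg, ?_⟩
  filter_upwards [eventually_le_norm_sub h.tendsto_norm_sub 1,
    (hp₀.const_mul (4 * (R + 1))).eventually_le_const (by simp : 4 * (R + 1) * 0 < (1 : ℝ))]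
    with n hsep hpn
  have hb (j k : Fin K) (hjk : j ≠ k) : 0 < ‖a n j - a n k‖ := one_pos.trans_le (hsep j k hjk)
  have hpos : 0 < p n := (one_div_pos.2 (hb ⟨0, by lia⟩ ⟨1, by lia⟩ (by simp))).trans_le <|
    le_pairSum (f := fun j k => 1 / ‖a n j - a n k‖) (fun _ _ _ => by positivity) (by simp)
  refine (pairSum_mono fun j k _ => ?_).trans
    ((hX.isDroplet n).pairSum_div_le_excess hR rfl hpos hpn hb)
  have hnorm : |e n j k| ≤ ‖e n‖ := (norm_le_pi_norm (e n j) k).trans (norm_le_pi_norm (e n) j)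
  gcongr
  linarith [neg_abs_le (e n j k)]

end IsPartialDecomp

end Repulsion

section RescaledCenters

variable {X : ℕ → Set E3} {m : ℝ} {K : ℕ} {S : Fin K → Set E3} {a : ℕ → Fin K → E3} {R : ℝ}
  {φ : ℕ → ℕ}

lemma IsPartialDecomp.isDecomp (h : IsPartialDecomp (X ∘ φ) S a) (hX : IsMinimizingSeq X m)
    (hφ : StrictMono φ) (hm : m = ∑ j, vol (S j)) (hR : 0 < R)
    (hnull : ∀ j, volume (S j \ ball 0 R) = 0) {q : ℕ → ℝ} (hq : Tendsto q atTop (𝓝 0))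
    (hcut : ∀ n j, HasCutCost (X (φ n)) (ball (a n j) R) (q n)) {ε : ℕ → ℝ}
    (hε : Tendsto ε atTop (𝓝 0))
    (hrep : ∀ n, 2 ≤ K →
      pairSum (fun j k => (vol (S j) * vol (S k) + ε n) / ‖a n j - a n k‖) ≤ excess (X (φ n))) :
    IsDecomp X m K S a R φ := by
  refine ⟨hφ, hR, h.tendsto_norm_sub, h.isMinimizer, fun j => (h.isMinimizer j).vol_mem_Icc,
    h.tendsto_volume_symmDiff hnull, ?_, h.tendsto_per_diff_zero (hX.comp hφ) hm hnull hq hcut, hm,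
    fun hK => ⟨ε, hε, fun n => ?_⟩⟩
  · refine (ENNReal.tendsto_toReal_iff (fun n => ?_) ENNReal.zero_ne_top).1
      (h.tendsto_vol_diff_zero (hX.comp hφ) hm hnull)
    exact measure_ne_top_of_subset sdiff_subset (hX.isDroplet _).volume_lt_top.ne
  · rw [← le_sub_iff_add_le']
    exact hrep n hK

theorem IsMinimizingSeq.exists_isDecomp (hX : IsMinimizingSeq X m) :
    ∃ (K : ℕ) (S : Fin K → Set E3) (a : ℕ → Fin K → E3) (R : ℝ) (φ : ℕ → ℕ),
      IsDecomp X m K S a R φ := by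
  obtain ⟨K, S, a, φ, hφ, h, hm⟩ := hX.exists_isPartialDecomp
  obtain ⟨ψ, R, q, hψ, hR, hnull, hq, hcut⟩ :=
    h.exists_subseq_hasCutCost_ball fun n => (hX.isDroplet (φ n)).toIsFiniteVolume
  have hrep : ∃ ε : ℕ → ℝ, Tendsto ε atTop (𝓝 0) ∧ ∀ᶠ n in atTop, 2 ≤ K →
      pairSum (fun j k => (vol (S j) * vol (S k) + ε n) / ‖a (ψ n) j - a (ψ n) k‖)
        ≤ excess (X (φ (ψ n))) := by
    by_cases hK : 2 ≤ K
    · obtain ⟨ε, hε, hle⟩ := (h.comp hψ).exists_pairSum_le_excess ((hX.comp hφ).comp hψ) hm hR.le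
        hnull hK
      exact ⟨ε, hε, hle.mono fun n hn _ => hn⟩
    · exact ⟨0, tendsto_const_nhds, .of_forall fun n hK' => absurd hK' hK⟩
  obtain ⟨ε, hε, hrep⟩ := hrep
  obtain ⟨N, hN⟩ := eventually_atTop.1 hrep
  have hshift : StrictMono (· + N) := strictMono_id.add_const N
  exact ⟨K, S, _, R, _, (h.comp (hψ.comp hshift)).isDecomp (φ := φ ∘ ψ ∘ (· + N)) hX
    (hφ.comp (hψ.comp hshift)) hm hR hnull (hq.comp hshift.tendsto_atTop) (fun n => hcut (n + N))
    (hε.comp hshift.tendsto_atTop) fun n => hN (n + N) le_add_self⟩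

lemma mem_closure_of_tendsto_of_mem_cthickening {ι E : Type*} {l : Filter ι} [l.NeBot]
    [PseudoEMetricSpace E] {A : Set E} {δ : ι → ℝ} (hδ : Tendsto δ l (𝓝 0)) {x : ι → E} {y : E}
    (hxy : Tendsto x l (𝓝 y)) (hx : ∀ᶠ n in l, x n ∈ cthickening (δ n) A) : y ∈ closure A := by
  have hle := le_of_tendsto_of_tendsto
    ((continuous_infEDist (s := A)).continuousAt.tendsto.comp hxy) (ENNReal.tendsto_ofReal hδ) hx
  rw [mem_closure_iff_infEDist_zero]
  simpa using hle

lemma tendsto_norm_sub_div {ι E : Type*} {l : Filter ι} [SeminormedAddCommGroup E]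
    [NormedSpace ℝ E] {b c : ι → E} {y z : E} {t : ι → ℝ} (ht : ∀ᶠ n in l, 0 < t n)
    (hb : Tendsto (fun n => (t n)⁻¹ • b n) l (𝓝 y))
    (hc : Tendsto (fun n => (t n)⁻¹ • c n) l (𝓝 z)) :
    Tendsto (fun n => ‖b n - c n‖ / t n) l (𝓝 ‖y - z‖) := by
  refine (hb.sub hc).norm.congr' ?_
  filter_upwards [ht] with n hn
  rw [← smul_sub, norm_smul, norm_inv, Real.norm_of_nonneg hn.le, inv_mul_eq_div]

namespace IsDecomp

variable {A : Set E3} {ℓ : ℕ → ℝ} {y : Fin K → E3}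

lemma comp (h : IsDecomp X m K S a R φ) {χ : ℕ → ℕ} (hχ : StrictMono χ) :
    IsDecomp X m K S (a ∘ χ) R (φ ∘ χ) := by
  obtain ⟨hφ, hR, hsep, hS, hmass, hdrop, hvol, hper, hm, hrep⟩ := h
  have hlim := hχ.tendsto_atTop
  refine ⟨hφ.comp hχ, hR, fun j k hjk => (hsep j k hjk).comp hlim, hS, hmass,
    fun j => (hdrop j).comp hlim, hvol.comp hlim, hper.comp hlim, hm, fun hK => ?_⟩
  obtain ⟨ε, hε, hle⟩ := hrep hK
  exact ⟨ε ∘ χ, hε.comp hlim, fun n => hle (χ n)⟩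

lemma strictMono (h : IsDecomp X m K S a R φ) : StrictMono φ := h.1

lemma isMinimizer (h : IsDecomp X m K S a R φ) (j : Fin K) : IsMinimizer (S j) := h.2.2.2.1 j

lemma exists_pairSum_le_excess (h : IsDecomp X m K S a R φ) (hK : 2 ≤ K) :
    ∃ ε : ℕ → ℝ, Tendsto ε atTop (𝓝 0) ∧ ∀ n,
      pairSum (fun j k => (vol (S j) * vol (S k) + ε n) / ‖a n j - a n k‖)
        ≤ excess (X (φ n)) := by
  obtain ⟨-, -, -, -, -, -, -, -, -, hrep⟩ := h
  obtain ⟨ε, hε, hle⟩ := hrep hK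
  exact ⟨ε, hε, fun n => le_sub_iff_add_le'.2 (hle n)⟩

lemma one_le (h : IsDecomp X m K S a R φ) (hm : 0 < m) : 1 ≤ K := by
  obtain ⟨-, -, -, -, -, -, -, -, rfl, -⟩ := h
  by_contra! hK
  obtain rfl : K = 0 := by lia
  simp at hm

lemma eventually_inter_ball_nonempty (h : IsDecomp X m K S a R φ) (j : Fin K) :
    ∀ᶠ n in atTop, (X (φ n) ∩ ball (a n j) R).Nonempty := by
  have hpos : 0 < volume (S j) := (ENNReal.toReal_pos_iff.1 (h.isMinimizer j).vol_pos).1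
  obtain ⟨-, -, -, -, -, hdrop, -⟩ := h
  filter_upwards [(hdrop j).eventually_lt_const hpos] with n hn
  by_contra! hempty
  have hrec : {x : E3 | x + a n j ∈ X (φ n)} ∩ ball 0 R = ∅ := by
    refine eq_empty_of_forall_notMem fun x hx => ?_
    exact (hempty ▸ notMem_empty (x + a n j) : x + a n j ∉ X (φ n) ∩ ball (a n j) R)
      ⟨hx.1, by simpa using hx.2⟩
  rw [hrec, ← bot_eq_empty, bot_symmDiff] at hn
  exact hn.false

lemma eventually_mem_cthickening (h : IsDecomp X m K S a R φ) (hsub : ∀ n, X n ⊆ ℓ n • A)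
    (hℓ : Tendsto ℓ atTop atTop) (j : Fin K) :
    ∀ᶠ n in atTop, (ℓ (φ n))⁻¹ • a n j ∈ cthickening (R / ℓ (φ n)) A := by
  filter_upwards [h.eventually_inter_ball_nonempty j,
    (hℓ.comp h.strictMono.tendsto_atTop).eventually_gt_atTop 0] with n ⟨x, hxX, hx⟩ hpos
  obtain ⟨w, hw, rfl⟩ := hsub _ hxX
  simp only [Function.comp_apply] at hpos
  refine mem_cthickening_of_dist_le _ w _ _ hw ?_
  rw [← inv_smul_smul₀ hpos.ne' w, dist_smul₀, norm_inv, Real.norm_of_nonneg hpos.le,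
    inv_mul_eq_div, dist_comm]
  gcongr
  exact (mem_ball.1 hx).le

lemma exists_subseq_tendsto_inv_smul (h : IsDecomp X m K S a R φ) (hA : IsBounded A)
    (hsub : ∀ n, X n ⊆ ℓ n • A) (hℓ : Tendsto ℓ atTop atTop) :
    ∃ (χ : ℕ → ℕ) (y : Fin K → E3), StrictMono χ ∧
      ∀ j, Tendsto (fun n => (ℓ (φ (χ n)))⁻¹ • a (χ n) j) atTop (𝓝 (y j)) := by
  have hmem : ∀ᶠ n in atTop, (fun j => (ℓ (φ n))⁻¹ • a n j) ∈
      Set.univ.pi fun _ : Fin K => cthickening 1 A := by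
    simp only [Set.mem_univ_pi, eventually_all]
    intro j
    filter_upwards [h.eventually_mem_cthickening hsub hℓ j,
      ((hℓ.comp h.strictMono.tendsto_atTop).const_div_atTop R).eventually_le_const one_pos]
      with n hn hle
    exact cthickening_mono hle A hn
  obtain ⟨y, -, χ, hχ, hy⟩ := tendsto_subseq_of_frequently_bounded
    (IsBounded.pi fun _ => hA.cthickening) hmem.frequently
  exact ⟨χ, y, hχ, tendsto_pi_nhds.1 hy⟩

lemma mem_closure (h : IsDecomp X m K S a R φ) (hsub : ∀ n, X n ⊆ ℓ n • A)
    (hℓ : Tendsto ℓ atTop atTop) {j : Fin K} {z : E3}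
    (hz : Tendsto (fun n => (ℓ (φ n))⁻¹ • a n j) atTop (𝓝 z)) : z ∈ closure A :=
  mem_closure_of_tendsto_of_mem_cthickening
    ((hℓ.comp h.strictMono.tendsto_atTop).const_div_atTop R) hz
    (h.eventually_mem_cthickening hsub hℓ j)

lemma vol_mul_vol_le (h : IsDecomp X m K S a R φ) {C : ℝ} (hC : ∀ n, excess (X n) ≤ C / ℓ n)
    (hℓ : Tendsto ℓ atTop atTop)
    (hy : ∀ j, Tendsto (fun n => (ℓ (φ n))⁻¹ • a n j) atTop (𝓝 (y j))) {j k : Fin K}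
    (hjk : j < k) : vol (S j) * vol (S k) ≤ C * ‖y j - y k‖ := by
  obtain ⟨ε, hε, hle⟩ := h.exists_pairSum_le_excess (by lia)
  have hpos : ∀ᶠ n in atTop, 0 < ℓ (φ n) :=
    (hℓ.comp h.strictMono.tendsto_atTop).eventually_gt_atTop 0
  have hnum (i l : Fin K) :
      Tendsto (fun n => vol (S i) * vol (S l) + ε n) atTop (𝓝 (vol (S i) * vol (S l))) := by
    simpa only [add_zero] using hε.const_add (vol (S i) * vol (S l))
  have hnonneg : ∀ᶠ n in atTop, ∀ i l, 0 ≤ vol (S i) * vol (S l) + ε n :=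
    eventually_all.2 fun i => eventually_all.2 fun l => (hnum i l).eventually_const_le
      (mul_pos (h.isMinimizer i).vol_pos (h.isMinimizer l).vol_pos)
  have hsep : ∀ᶠ n in atTop, 0 < ‖a n j - a n k‖ :=
    (h.2.2.1 j k hjk.ne).eventually_gt_atTop 0
  refine le_of_tendsto_of_tendsto (hnum j k)
    ((tendsto_norm_sub_div hpos (hy j) (hy k)).const_mul C) ?_
  filter_upwards [hnonneg, hsep] with n hn hd
  have hterm : (vol (S j) * vol (S k) + ε n) / ‖a n j - a n k‖ ≤ C / ℓ (φ n) :=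
    (le_pairSum (f := fun j k => (vol (S j) * vol (S k) + ε n) / ‖a n j - a n k‖)
      (fun i l _ => div_nonneg (hn i l) (norm_nonneg _)) hjk).trans ((hle n).trans (hC (φ n)))
  exact ((div_le_iff₀ hd).1 hterm).trans_eq (by ring)

lemma injective_of_excess_le (h : IsDecomp X m K S a R φ) {C : ℝ}
    (hC : ∀ n, excess (X n) ≤ C / ℓ n) (hℓ : Tendsto ℓ atTop atTop)
    (hy : ∀ j, Tendsto (fun n => (ℓ (φ n))⁻¹ • a n j) atTop (𝓝 (y j))) :
    Function.Injective y := by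
  refine .of_lt_imp_ne fun j k hjk heq => ?_
  have hle := h.vol_mul_vol_le hC hℓ hy hjk
  rw [heq, sub_self, norm_zero, mul_zero] at hle
  exact hle.not_gt (mul_pos (h.isMinimizer j).vol_pos (h.isMinimizer k).vol_pos)

lemma exists_rescaled_pairSum_le_excess (h : IsDecomp X m K S a R φ)
    (hX : ∀ n, 0 ≤ excess (X n)) (hℓ : Tendsto ℓ atTop atTop)
    (hy : ∀ j, Tendsto (fun n => (ℓ (φ n))⁻¹ • a n j) atTop (𝓝 (y j)))
    (hinj : Function.Injective y) (hK : 2 ≤ K) :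
    ∃ ε : ℕ → ℝ, Tendsto ε atTop (𝓝 0) ∧ ∀ n,
      1 / ℓ (φ n) * pairSum (fun j k => vol (S j) * vol (S k) / ‖y j - y k‖) + ε n / ℓ (φ n)
        ≤ excess (X (φ n)) := by
  obtain ⟨ε, hε, hle⟩ := h.exists_pairSum_le_excess hK
  have hpos : ∀ᶠ n in atTop, 0 < ℓ (φ n) :=
    (hℓ.comp h.strictMono.tendsto_atTop).eventually_gt_atTop 0
  set P := pairSum fun j k => vol (S j) * vol (S k) / ‖y j - y k‖
  let p (n : ℕ) := pairSum fun j k => (vol (S j) * vol (S k) + ε n) / ‖a n j - a n k‖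
  have hp : Tendsto (fun n => ℓ (φ n) * p n) atTop (𝓝 P) := by
    simp only [p, ← pairSum_const_mul]
    refine tendsto_pairSum fun j k hjk => ?_
    have hlim := (hε.const_add (vol (S j) * vol (S k))).div
      (tendsto_norm_sub_div hpos (hy j) (hy k)) (norm_sub_eq_zero_iff.not.2 (hinj.ne hjk.ne))
    rw [add_zero] at hlim
    exact hlim.congr fun n => by rw [Pi.div_apply, div_div_eq_mul_div, mul_comm, mul_div_assoc]
  refine ⟨fun n => ℓ (φ n) * p n - P, by simpa only [sub_self] using hp.sub_const P, fun n => ?_⟩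
  rcases eq_or_ne (ℓ (φ n)) 0 with hzero | hne
  · simpa [hzero] using hX (φ n)
  · calc 1 / ℓ (φ n) * P + (ℓ (φ n) * p n - P) / ℓ (φ n) = p n := by field_simp; ring
      _ ≤ excess (X (φ n)) := hle n

end IsDecomp

end RescaledCenters

theorem decomposition_rescaled_centers_general (A : Set E3) (hAb : IsBounded A)
    (Ω : ℕ → Set E3) (hmeas : ∀ n, MeasurableSet (Ω n)) (hper : ∀ n, HasFinPer (Ω n))
    (ℓ : ℕ → ℝ) (hℓ : Tendsto ℓ atTop atTop) (hsub : ∀ n, Ω n ⊆ ℓ n • A)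
    (m : ℝ) (hm : 0 < m) (hvol : Tendsto (fun n => vol (Ω n)) atTop (𝓝 m))
    (C : ℝ) (hI : ∀ n, II (Ω n) ≤ muStar * vol (Ω n) + C / ℓ n) :
    ∃ (K : ℕ) (Ωs : Fin K → Set E3) (a : ℕ → Fin K → E3) (R : ℝ) (φ : ℕ → ℕ)
      (y : Fin K → E3),
      1 ≤ K ∧ IsDecomp Ω m K Ωs a R φ ∧
      (∀ j, Tendsto (fun n => (ℓ (φ n))⁻¹ • a n j) atTop (𝓝 (y j))) ∧
      Function.Injective y ∧ (∀ j, y j ∈ closure A) ∧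
      (2 ≤ K → ∃ ε : ℕ → ℝ, Tendsto ε atTop (𝓝 0) ∧ ∀ n : ℕ,
        muStar * vol (Ω (φ n)) + (1 / ℓ (φ n)) *
            (∑ j : Fin K, ∑ k : Fin K,
              if j < k then vol (Ωs j) * vol (Ωs k) / ‖y j - y k‖ else 0)
          + ε n / ℓ (φ n) ≤ II (Ω (φ n))) := by
  have hΩ (n : ℕ) : IsDroplet (Ω n) :=
    ⟨⟨hmeas n, ((hAb.smul₀ (ℓ n)).subset (hsub n)).measure_lt_top⟩, hper n⟩
  have hC (n : ℕ) : excess (Ω n) ≤ C / ℓ n := sub_le_iff_le_add'.2 (hI n)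
  have hmin : IsMinimizingSeq Ω m :=
    ⟨hΩ, hvol, squeeze_zero (fun n => (hΩ n).excess_nonneg) hC (hℓ.const_div_atTop C)⟩
  obtain ⟨K, S, a, R, φ, hdec⟩ := hmin.exists_isDecomp
  obtain ⟨χ, y, hχ, hy⟩ := hdec.exists_subseq_tendsto_inv_smul hAb hsub hℓ
  have hdecχ := hdec.comp hχ
  have hinj := hdecχ.injective_of_excess_le hC hℓ hy
  refine ⟨K, S, a ∘ χ, R, φ ∘ χ, y, hdec.one_le hm, hdecχ, hy, hinj,
    fun j => hdecχ.mem_closure hsub hℓ (hy j), fun hK => ?_⟩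
  obtain ⟨ε, hε, hle⟩ := hdecχ.exists_rescaled_pairSum_le_excess (fun n => (hΩ n).excess_nonneg)
    hℓ hy hinj hK
  exact ⟨ε, hε, fun n => (add_assoc _ _ _).trans_le (le_sub_iff_add_le'.1 (hle n))⟩

/-- **Decomposition with rescaled centers** (Corollary): if moreover `Ωₙ ⊆ ℓₙ A` for a bounded
open set `A` and `I[Ωₙ] ≤ μ*|Ωₙ| + C/ℓₙ`, then the rescaled centers converge to `K` distinct
points of the closure of `A`, and for `K ≥ 2` the repulsion lower bound holds with the limiting
positions. -/
theorem decomposition_rescaled_centers (A : Set E3) (hAo : IsOpen A) (hAb : IsBounded A)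
    (Ω : ℕ → Set E3) (hmeas : ∀ n, MeasurableSet (Ω n)) (hper : ∀ n, HasFinPer (Ω n))
    (hfin : ∀ n, volume (Ω n) < ⊤)
    (ℓ : ℕ → ℝ) (hℓ : Tendsto ℓ atTop atTop) (hsub : ∀ n, Ω n ⊆ ℓ n • A)
    (m : ℝ) (hm : 0 < m) (hvol : Tendsto (fun n => vol (Ω n)) atTop (𝓝 m))
    (C : ℝ) (hI : ∀ n, II (Ω n) ≤ muStar * vol (Ω n) + C / ℓ n) :
    ∃ (K : ℕ) (Ωs : Fin K → Set E3) (a : ℕ → Fin K → E3) (R : ℝ) (φ : ℕ → ℕ)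
      (y : Fin K → E3),
      1 ≤ K ∧ IsDecomp Ω m K Ωs a R φ ∧
      (∀ j, Tendsto (fun n => (ℓ (φ n))⁻¹ • a n j) atTop (𝓝 (y j))) ∧
      Function.Injective y ∧ (∀ j, y j ∈ closure A) ∧
      (2 ≤ K → ∃ ε : ℕ → ℝ, Tendsto ε atTop (𝓝 0) ∧ ∀ n : ℕ,
        muStar * vol (Ω (φ n)) + (1 / ℓ (φ n)) *
            (∑ j : Fin K, ∑ k : Fin K,
              if j < k then vol (Ωs j) * vol (Ωs k) / ‖y j - y k‖ else 0)
          + ε n / ℓ (φ n) ≤ II (Ω (φ n))) :=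
  decomposition_rescaled_centers_general A hAb Ω hmeas hper ℓ hℓ hsub m hm hvol C hI

end
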